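/- arXiv:2602.08721 — 2 statements merged into one kernel-verified Lean document; each statement's English description precedes it below -/
import Mathlib

section
/- The series identity ∑_{n≥1} (−1/27)^n · ((1)_n)^2 / ((1/3)_n (2/3)_n) · (17 − 136n + 408n² − 640n³ + 560n⁴)/(n^5 (2n−1)^4) = 180 ζ(5) − (56/3) π² ζ(3) holds, where ζ is the Riemann zeta function. -/
/-- The rising factorial (Pochhammer symbol) `(a)ₙ = a(a+1)⋯(a+n-1)`. -/
noncomputable def risingFactorial (a : ℝ) (n : ℕ) : ℝ :=
  ∏ i ∈ Finset.range n, (a + i)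

/-!
Two hypergeometric families `F t y n`, called major and minor below, have companions `G`, rational
multiples of `F`, with the WZ equation `F t y n - F t (y + 1) n = ± (G t y (n + 1) - G t y n)`.
Hence `∑ₙ F t y n` changes by the rational function `± G t y 0` when `y` becomes `y + 1`. The sums
tend to a limit as `y → ∞`, so telescoping expresses the difference of two of them as a series of
rational functions of the parameters; the major sum vanishes at `y = t`.

The product `ζ(2) ζ(3)` comes from a deformation of the major family. Its derivative in the
deformation parameter satisfies a WZ equation with an inhomogeneous term, a rational function of
`t` and `y` times `F`; adding half the square of `∑ₙ F` makes the increment rational again.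

On the lines `t = α x`, `y = -β x` for the major family and `t = 2 x`, `y = γ x` for the minor one,
all hypergeometric products coincide at `x = 0`. Comparing Taylor coefficients there gives series
whose terms involve harmonic sums and whose values are rational combinations of `ζ(5)` and
`ζ(2) ζ(3)`. One linear combination of seven such evaluations cancels the harmonic sums and leaves
the required series.
-/

namespace SunSeries

open Filter Topology Asymptotics

section CubicJets

variable {𝕜 : Type*} [NontriviallyNormedField 𝕜] {f g : 𝕜 → 𝕜} {a b c d a' b' c' d' : 𝕜}

/-- `a + b x + c x² + d x³` is the third-order Taylor polynomial of `f` at `0`, in the sense that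
`f` agrees with it up to `O(x⁴)`. Nothing is required of `f 0`. -/
def HasCubicJet (f : 𝕜 → 𝕜) (a b c d : 𝕜) : Prop :=
  (fun x => f x - (a + b * x + c * x ^ 2 + d * x ^ 3)) =O[𝓝[≠] 0] fun x => x ^ 4

theorem isBigO_one_of_continuousAt (hg : ContinuousAt g 0) :
    g =O[𝓝[≠] 0] fun _ => (1 : 𝕜) :=
  (hg.tendsto.mono_left nhdsWithin_le_nhds).isBigO_one 𝕜

theorem isBigO_mul_pow_of_continuousAt (hg : ContinuousAt g 0) (k : ℕ) :
    (fun x => g x * x ^ k) =O[𝓝[≠] 0] fun x => x ^ k := by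
  simpa only [one_mul] using
    (isBigO_one_of_continuousAt hg).mul (isBigO_refl (fun x : 𝕜 => x ^ k) _)

namespace HasCubicJet

theorem of_eq (h : HasCubicJet f a b c d) (ha : a = a') (hb : b = b') (hc : c = c')
    (hd : d = d') : HasCubicJet f a' b' c' d' := by
  subst ha hb hc hd
  exact h

theorem congr' (h : HasCubicJet f a b c d) (hfg : f =ᶠ[𝓝[≠] 0] g) : HasCubicJet g a b c d :=
  IsBigO.congr' h (hfg.mono fun x hx => by simp only [hx]) EventuallyEq.rfl

theorem congr (h : HasCubicJet f a b c d) (hfg : ∀ x, f x = g x) : HasCubicJet g a b c d :=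
  h.congr' (Eventually.of_forall hfg)

theorem cubic (a b c d : 𝕜) :
    HasCubicJet (fun x => a + b * x + c * x ^ 2 + d * x ^ 3) a b c d := by
  simpa only [HasCubicJet, sub_self] using isBigO_zero _ _

theorem const (a : 𝕜) : HasCubicJet (fun _ => a) a 0 0 0 := by
  simpa using cubic a 0 0 0

theorem linear (a b : 𝕜) : HasCubicJet (fun x => a + b * x) a b 0 0 := by
  simpa using cubic a b 0 0

theorem isBigO_one (hf : HasCubicJet f a b c d) : f =O[𝓝[≠] 0] fun _ => (1 : 𝕜) := by
  have remainder : (fun x : 𝕜 => f x - (a + b * x + c * x ^ 2 + d * x ^ 3)) =O[𝓝[≠] 0]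
      fun _ => (1 : 𝕜) :=
    IsBigO.trans hf (isBigO_one_of_continuousAt (by fun_prop))
  have polynomial : (fun x : 𝕜 => a + b * x + c * x ^ 2 + d * x ^ 3) =O[𝓝[≠] 0]
      fun _ => (1 : 𝕜) := isBigO_one_of_continuousAt (by fun_prop)
  exact (remainder.add polynomial).congr_left fun x => sub_add_cancel _ _

theorem add (hf : HasCubicJet f a b c d) (hg : HasCubicJet g a' b' c' d') :
    HasCubicJet (fun x => f x + g x) (a + a') (b + b') (c + c') (d + d') :=
  (IsBigO.add hf hg).congr_left fun x => by ring

theorem mul (hf : HasCubicJet f a b c d) (hg : HasCubicJet g a' b' c' d') :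
    HasCubicJet (fun x => f x * g x) (a * a') (a * b' + b * a') (a * c' + b * b' + c * a')
      (a * d' + b * c' + c * b' + d * a') := by
  have left := IsBigO.mul hf hg.isBigO_one
  have right := IsBigO.mul (cubic a b c d).isBigO_one hg
  have overflow := isBigO_mul_pow_of_continuousAt (g := fun x : 𝕜 =>
    (b * d' + c * c' + d * b') + (c * d' + d * c') * x + d * d' * x ^ 2) (by fun_prop) 4
  simp only [mul_one, one_mul] at left right
  exact ((left.add right).add overflow).congr_left fun x => by ring

theorem const_mul (hf : HasCubicJet f a b c d) (k : 𝕜) :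
    HasCubicJet (fun x => k * f x) (k * a) (k * b) (k * c) (k * d) :=
  ((const k).mul hf).of_eq (by ring) (by ring) (by ring) (by ring)

theorem sub (hf : HasCubicJet f a b c d) (hg : HasCubicJet g a' b' c' d') :
    HasCubicJet (fun x => f x - g x) (a - a') (b - b') (c - c') (d - d') :=
  (IsBigO.sub hf hg).congr_left fun x => by ring

theorem sum {ι : Type*} {F : ι → 𝕜 → 𝕜} {a b c d : ι → 𝕜} (s : Finset ι)
    (h : ∀ i, HasCubicJet (F i) (a i) (b i) (c i) (d i)) :
    HasCubicJet (fun x => ∑ i ∈ s, F i x) (∑ i ∈ s, a i) (∑ i ∈ s, b i) (∑ i ∈ s, c i)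
      (∑ i ∈ s, d i) := by
  refine (IsBigO.sum fun i (_ : i ∈ s) => h i).congr_left fun x => ?_
  simp only [Finset.sum_apply, Finset.sum_sub_distrib, Finset.sum_add_distrib, Finset.sum_mul]

theorem one_div_linear {q : 𝕜} (hq : q ≠ 0) (s : 𝕜) :
    HasCubicJet (fun x => 1 / (q + s * x)) (1 / q) (-s / q ^ 2) (s ^ 2 / q ^ 3)
      (-s ^ 3 / q ^ 4) := by
  have hcont : ContinuousAt (fun x : 𝕜 => q + s * x) 0 := by fun_prop
  have hne : q + s * 0 ≠ 0 := by simpa using hq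
  refine IsBigO.congr' (isBigO_mul_pow_of_continuousAt (g := fun x => s ^ 4 / q ^ 4 / (q + s * x))
    (continuousAt_const.div hcont hne) 4) ?_ EventuallyEq.rfl
  filter_upwards [nhdsWithin_le_nhds (hcont.eventually_ne hne)] with x hx
  field_simp
  ring

theorem linear_div_linear (N D : 𝕜 → 𝕜) (p r : 𝕜) {q : 𝕜} (s : 𝕜) (hq : q ≠ 0)
    (hN : ∀ x, N x = p + r * x := by intro; ring) (hD : ∀ x, D x = q + s * x := by intro; ring) :
    HasCubicJet (fun x => N x / D x) (p / q) (r / q - p * s / q ^ 2)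
      (-s / q * (r / q - p * s / q ^ 2)) (s ^ 2 / q ^ 2 * (r / q - p * s / q ^ 2)) := by
  refine (((linear p r).mul (one_div_linear hq s)).congr fun x => ?_).of_eq ?_ ?_ ?_ ?_
  · rw [hN, hD, mul_one_div]
  all_goals
    field_simp
    try ring

end HasCubicJet

theorem eq_zero_of_add_mul_isBigO (hg : Continuous g) {k : ℕ}
    (h : (fun x => a + x * g x) =O[𝓝[≠] 0] fun x => x ^ (k + 1)) :
    a = 0 ∧ g =O[𝓝[≠] 0] fun x => x ^ k := by
  have tendsto_of_continuous {φ : 𝕜 → 𝕜} (hφ : Continuous φ) :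
      Tendsto φ (𝓝[≠] 0) (𝓝 (φ 0)) := (hφ.tendsto 0).mono_left nhdsWithin_le_nhds
  obtain rfl : a = 0 := by
    have tendsto_zero := h.trans_tendsto
      (by simpa using tendsto_of_continuous (continuous_pow (k + 1)))
    simpa using tendsto_nhds_unique
      (tendsto_of_continuous (by fun_prop : Continuous fun x => a + x * g x)) tendsto_zero
  refine ⟨rfl, (h.mul (isBigO_refl (fun x : 𝕜 => x⁻¹) _)).congr' ?_ ?_⟩
  all_goals
    filter_upwards [self_mem_nhdsWithin] with x (hx : x ≠ 0)
    field_simp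
    try ring

theorem HasCubicJet.unique (hf : HasCubicJet f a b c d) (hg : HasCubicJet f a' b' c' d') :
    a = a' ∧ b = b' ∧ c = c' ∧ d = d' := by
  have horner : (fun x => (a - a') + x * ((b - b') + x * ((c - c') + x * (d - d'))))
      =O[𝓝[≠] 0] fun x : 𝕜 => x ^ (3 + 1) :=
    (IsBigO.neg_left (hf.sub hg)).congr_left fun x => by ring
  obtain ⟨ha, horner⟩ := eq_zero_of_add_mul_isBigO (by fun_prop) horner
  obtain ⟨hb, horner⟩ := eq_zero_of_add_mul_isBigO (k := 2) (by fun_prop) horner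
  obtain ⟨hc, horner⟩ := eq_zero_of_add_mul_isBigO (k := 1) (by fun_prop) horner
  obtain ⟨hd, -⟩ := eq_zero_of_add_mul_isBigO (a := d - d') (g := 0) (k := 0)
    continuous_const (by simpa using horner)
  exact ⟨sub_eq_zero.1 ha, sub_eq_zero.1 hb, sub_eq_zero.1 hc, sub_eq_zero.1 hd⟩

end CubicJets

section LogCubicJets

variable {𝕜 : Type*} [NontriviallyNormedField 𝕜] {f g : 𝕜 → 𝕜} {k l₁ l₂ l₃ k' l₁' l₂' l₃' : 𝕜}

/-- `f` agrees with `k · exp (l₁ x + l₂ x² + l₃ x³)` up to `O(x⁴)`. Multiplication of functions is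
addition of the exponents, so long products are expanded in this form. -/
def HasLogCubicJet (f : 𝕜 → 𝕜) (k l₁ l₂ l₃ : 𝕜) : Prop :=
  HasCubicJet f k (k * l₁) (k * (l₂ + l₁ ^ 2 / 2)) (k * (l₃ + l₁ * l₂ + l₁ ^ 3 / 6))

namespace HasLogCubicJet

theorem of_eq (h : HasLogCubicJet f k l₁ l₂ l₃) (hk : k = k') (h₁ : l₁ = l₁') (h₂ : l₂ = l₂')
    (h₃ : l₃ = l₃') : HasLogCubicJet f k' l₁' l₂' l₃' := by
  subst hk h₁ h₂ h₃
  exact h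

theorem congr (h : HasLogCubicJet f k l₁ l₂ l₃) (hfg : ∀ x, f x = g x) :
    HasLogCubicJet g k l₁ l₂ l₃ :=
  HasCubicJet.congr h hfg

theorem const (k : 𝕜) : HasLogCubicJet (fun _ => k) k 0 0 0 :=
  (HasCubicJet.const k).of_eq rfl (by ring) (by ring) (by ring)

variable [CharZero 𝕜]

theorem mul (hf : HasLogCubicJet f k l₁ l₂ l₃) (hg : HasLogCubicJet g k' l₁' l₂' l₃') :
    HasLogCubicJet (fun x => f x * g x) (k * k') (l₁ + l₁') (l₂ + l₂') (l₃ + l₃') :=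
  (HasCubicJet.mul hf hg).of_eq rfl (by ring) (by field_simp; ring) (by field_simp; ring)

theorem linear {q : 𝕜} (hq : q ≠ 0) (s : 𝕜) :
    HasLogCubicJet (fun x => q + s * x) q (s / q) (-s ^ 2 / (2 * q ^ 2))
      (s ^ 3 / (3 * q ^ 3)) := by
  refine (HasCubicJet.linear q s).of_eq rfl ?_ ?_ ?_ <;> field_simp <;> ring

theorem one_div_linear {q : 𝕜} (hq : q ≠ 0) (s : 𝕜) :
    HasLogCubicJet (fun x => 1 / (q + s * x)) (1 / q) (-(s / q)) (s ^ 2 / (2 * q ^ 2))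
      (-(s ^ 3 / (3 * q ^ 3))) := by
  refine (HasCubicJet.one_div_linear hq s).of_eq rfl ?_ ?_ ?_ <;> field_simp <;> ring

theorem linear_div_linear (N D : 𝕜 → 𝕜) {p : 𝕜} (r : 𝕜) {q : 𝕜} (s : 𝕜) (hp : p ≠ 0) (hq : q ≠ 0)
    (hN : ∀ x, N x = p + r * x := by intro; ring) (hD : ∀ x, D x = q + s * x := by intro; ring) :
    HasLogCubicJet (fun x => N x / D x) (p / q) (r / p - s / q)
      (s ^ 2 / (2 * q ^ 2) - r ^ 2 / (2 * p ^ 2))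
      (r ^ 3 / (3 * p ^ 3) - s ^ 3 / (3 * q ^ 3)) :=
  (((linear hp r).mul (one_div_linear hq s)).congr fun x => by rw [hN, hD, mul_one_div]).of_eq
    (by ring) (by ring) (by ring) (by ring)

theorem prod {ι : Type*} {F : ι → 𝕜 → 𝕜} {k l₁ l₂ l₃ : ι → 𝕜} (s : Finset ι)
    (h : ∀ i, HasLogCubicJet (F i) (k i) (l₁ i) (l₂ i) (l₃ i)) :
    HasLogCubicJet (fun x => ∏ i ∈ s, F i x) (∏ i ∈ s, k i) (∑ i ∈ s, l₁ i) (∑ i ∈ s, l₂ i)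
      (∑ i ∈ s, l₃ i) := by
  classical
  induction s using Finset.induction_on with
  | empty => simpa using const (1 : 𝕜)
  | insert i s hi ih =>
    simp only [Finset.prod_insert hi, Finset.sum_insert hi]
    exact (h i).mul ih

end HasLogCubicJet

end LogCubicJets

section JetsOfSeries

variable {r : ℝ}

theorem dslope_bound {f : ℂ → ℂ} {M : ℝ} (hr : 0 < r)
    (hd : DifferentiableOn ℂ f (Metric.ball 0 r)) (hb : ∀ x ∈ Metric.ball (0 : ℂ) r, ‖f x‖ ≤ M) :
    DifferentiableOn ℂ (dslope f 0) (Metric.ball 0 r) ∧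
      ∀ x ∈ Metric.ball (0 : ℂ) r, ‖dslope f 0 x‖ ≤ 2 / r * M := by
  refine ⟨(Complex.differentiableOn_dslope (Metric.ball_mem_nhds 0 hr)).2 hd, fun x hx => ?_⟩
  have mapsTo : Set.MapsTo f (Metric.ball 0 r) (Metric.closedBall (f 0) (2 * M)) := fun y hy => by
    rw [mem_closedBall_iff_norm]
    linarith [norm_sub_le (f y) (f 0), hb y hy, hb 0 (Metric.mem_ball_self hr)]
  calc ‖dslope f 0 x‖ ≤ 2 * M / r := Complex.norm_dslope_le_div_of_mapsTo_ball hd mapsTo hx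
    _ = 2 / r * M := by ring

theorem eq_add_mul_dslope (f : ℂ → ℂ) (x : ℂ) : f x = f 0 + x * dslope f 0 x := by
  linear_combination -(by simpa using sub_smul_dslope f 0 x : x * dslope f 0 x = f x - f 0)

theorem exists_cubicJet_bound {f : ℂ → ℂ} {M : ℝ} (hr : 0 < r)
    (hd : DifferentiableOn ℂ f (Metric.ball 0 r)) (hb : ∀ x ∈ Metric.ball (0 : ℂ) r, ‖f x‖ ≤ M) :
    ∃ a b c d : ℂ, ‖a‖ ≤ M ∧ ‖b‖ ≤ 2 / r * M ∧ ‖c‖ ≤ 2 / r * (2 / r * M) ∧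
      ‖d‖ ≤ 2 / r * (2 / r * (2 / r * M)) ∧ ∀ x ∈ Metric.ball (0 : ℂ) r,
      ‖f x - (a + b * x + c * x ^ 2 + d * x ^ 3)‖ ≤
        2 / r * (2 / r * (2 / r * (2 / r * M))) * ‖x ^ 4‖ := by
  obtain ⟨hd₁, hb₁⟩ := dslope_bound hr hd hb
  obtain ⟨hd₂, hb₂⟩ := dslope_bound hr hd₁ hb₁
  obtain ⟨hd₃, hb₃⟩ := dslope_bound hr hd₂ hb₂
  obtain ⟨-, hb₄⟩ := dslope_bound hr hd₃ hb₃
  have h0 := Metric.mem_ball_self (x := (0 : ℂ)) hr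
  refine ⟨_, _, _, _, hb 0 h0, hb₁ 0 h0, hb₂ 0 h0, hb₃ 0 h0, fun x hx => ?_⟩
  have remainder : f x - (f 0 + dslope f 0 0 * x + dslope (dslope f 0) 0 0 * x ^ 2 +
      dslope (dslope (dslope f 0) 0) 0 0 * x ^ 3) =
      dslope (dslope (dslope (dslope f 0) 0) 0) 0 x * x ^ 4 := by
    rw [eq_add_mul_dslope f x, eq_add_mul_dslope (dslope f 0) x,
      eq_add_mul_dslope (dslope (dslope f 0) 0) x,
      eq_add_mul_dslope (dslope (dslope (dslope f 0) 0) 0) x]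
    ring
  rw [remainder, norm_mul]
  exact mul_le_mul_of_nonneg_right (hb₄ x hx) (norm_nonneg _)

theorem HasCubicJet.of_norm_sub_le {f : ℂ → ℂ} {K : ℝ} (hr : 0 < r) {a b c d : ℂ}
    (h : ∀ x ∈ Metric.ball (0 : ℂ) r,
      ‖f x - (a + b * x + c * x ^ 2 + d * x ^ 3)‖ ≤ K * ‖x ^ 4‖) :
    HasCubicJet f a b c d :=
  IsBigO.of_bound K (nhdsWithin_le_nhds (mem_of_superset (Metric.ball_mem_nhds 0 hr) h))

/-- Normal convergence, on some disc about `0`, of the series of the functions `F n`, which are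
required to be holomorphic there. -/
def NormallyConvergent (F : ℕ → ℂ → ℂ) : Prop :=
  ∃ u : ℕ → ℝ, Summable u ∧ ∀ᶠ x in 𝓝 (0 : ℂ), ∀ n, DifferentiableAt ℂ (F n) x ∧ ‖F n x‖ ≤ u n

namespace NormallyConvergent

variable {F G : ℕ → ℂ → ℂ} {a b c d : ℕ → ℂ} {A B C D : ℂ}

theorem sub (hF : NormallyConvergent F) (hG : NormallyConvergent G) :
    NormallyConvergent fun n x => F n x - G n x := by
  obtain ⟨u, hu, hF⟩ := hF
  obtain ⟨v, hv, hG⟩ := hG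
  refine ⟨_, hu.add hv, ?_⟩
  filter_upwards [hF, hG] with x hFx hGx n
  exact ⟨(hFx n).1.sub (hGx n).1, (norm_sub_le _ _).trans (add_le_add (hFx n).2 (hGx n).2)⟩

theorem exists_hasCubicJet_tsum (hF : NormallyConvergent F)
    (hj : ∀ n, HasCubicJet (F n) (a n) (b n) (c n) (d n)) :
    ∃ A B C D : ℂ, HasSum a A ∧ HasSum b B ∧ HasSum c C ∧ HasSum d D ∧
      HasCubicJet (fun x => ∑' n, F n x) A B C D := by
  obtain ⟨u, hu, hF⟩ := hF
  obtain ⟨r, hr, hF⟩ := Metric.eventually_nhds_iff_ball.1 hF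
  set L := 2 / r
  have cauchy : ∀ n, ‖a n‖ ≤ u n ∧ ‖b n‖ ≤ L * u n ∧ ‖c n‖ ≤ L * (L * u n) ∧
      ‖d n‖ ≤ L * (L * (L * u n)) ∧ ∀ x ∈ Metric.ball (0 : ℂ) r,
      ‖F n x - (a n + b n * x + c n * x ^ 2 + d n * x ^ 3)‖ ≤
        L * (L * (L * (L * u n))) * ‖x ^ 4‖ := by
    intro n
    obtain ⟨a', b', c', d', ha, hb, hc, hd, hJ⟩ := exists_cubicJet_bound hr
      (fun x hx => (hF x hx n).1.differentiableWithinAt) (fun x hx => (hF x hx n).2)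
    obtain ⟨rfl, rfl, rfl, rfl⟩ := (HasCubicJet.of_norm_sub_le hr hJ).unique (hj n)
    exact ⟨ha, hb, hc, hd, hJ⟩
  have hu₁ := hu.mul_left L
  have hu₂ := hu₁.mul_left L
  have hu₃ := hu₂.mul_left L
  have ha := (Summable.of_norm_bounded hu fun n => (cauchy n).1).hasSum
  have hb := (Summable.of_norm_bounded hu₁ fun n => (cauchy n).2.1).hasSum
  have hc := (Summable.of_norm_bounded hu₂ fun n => (cauchy n).2.2.1).hasSum
  have hd := (Summable.of_norm_bounded hu₃ fun n => (cauchy n).2.2.2.1).hasSum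
  refine ⟨_, _, _, _, ha, hb, hc, hd,
    .of_norm_sub_le (K := ∑' n, L * (L * (L * (L * u n)))) hr fun x hx => ?_⟩
  have hFx := (Summable.of_norm_bounded hu fun n => (hF x hx n).2).hasSum
  have remainder := hFx.sub (((ha.add (hb.mul_right x)).add (hc.mul_right (x ^ 2))).add
    (hd.mul_right (x ^ 3)))
  rw [← remainder.tsum_eq]
  exact tsum_of_norm_bounded ((hu₃.mul_left L).hasSum.mul_right _) fun n => (cauchy n).2.2.2.2 x hx

theorem hasCubicJet_tsum (hF : NormallyConvergent F)
    (hj : ∀ n, HasCubicJet (F n) (a n) (b n) (c n) (d n))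
    (hA : HasSum a A) (hB : HasSum b B) (hC : HasSum c C) (hD : HasSum d D) :
    HasCubicJet (fun x => ∑' n, F n x) A B C D := by
  obtain ⟨_, _, _, _, hA', hB', hC', hD', h⟩ := hF.exists_hasCubicJet_tsum hj
  exact h.of_eq (hA'.unique hA) (hB'.unique hB) (hC'.unique hC) (hD'.unique hD)

theorem hasSum_coeff (hF : NormallyConvergent F)
    (hj : ∀ n, HasCubicJet (F n) (a n) (b n) (c n) (d n))
    (h : HasCubicJet (fun x => ∑' n, F n x) A B C D) :
    HasSum a A ∧ HasSum b B ∧ HasSum c C ∧ HasSum d D := by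
  obtain ⟨_, _, _, _, hA, hB, hC, hD, h'⟩ := hF.exists_hasCubicJet_tsum hj
  obtain ⟨rfl, rfl, rfl, rfl⟩ := h'.unique h
  exact ⟨hA, hB, hC, hD⟩

end NormallyConvergent

end JetsOfSeries

section ParameterDomain

/-- The domain of the two parameters: `t` lies near `0` and `y` lies near a natural number. It is
stable under `y ↦ y + 1` and avoids the poles of both families of kernels. -/
structure Near (t y : ℂ) : Prop where
  norm_le : ‖t‖ ≤ 1 / 100
  exists_nat : ∃ j : ℕ, ‖y - j‖ ≤ 1 / 100

theorem Near.abs_re_le {t y : ℂ} (h : Near t y) : |t.re| ≤ 1 / 100 :=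
  (Complex.abs_re_le_norm t).trans h.norm_le

theorem Near.exists_nat_sub_le_re {t y : ℂ} (h : Near t y) :
    ∃ j : ℕ, ‖y - j‖ ≤ 1 / 100 ∧ j - 1 / 100 ≤ y.re := by
  obtain ⟨j, hj⟩ := h.exists_nat
  have hre := (abs_le.1 ((Complex.abs_re_le_norm _).trans hj)).1
  rw [Complex.sub_re, Complex.natCast_re] at hre
  exact ⟨j, hj, by linarith⟩

theorem Near.neg_le_re {t y : ℂ} (h : Near t y) : -(1 / 100) ≤ y.re := by
  obtain ⟨j, -, hj⟩ := h.exists_nat_sub_le_re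
  linarith [(j.cast_nonneg : (0 : ℝ) ≤ j)]

theorem Near.succ {t y : ℂ} (h : Near t y) : Near t (y + 1) := by
  obtain ⟨j, hj⟩ := h.exists_nat
  exact ⟨h.norm_le, j + 1, by push_cast; simpa using hj⟩

/-- The default argument proves the positivity whenever `z` is an affine form in `t`, `y` and `n`
whose real part is visibly positive on the domain. -/
theorem Near.ne_zero {t y : ℂ} (h : Near t y) (n : ℕ) (z : ℂ)
    (hz : -(1 / 100) ≤ t.re → t.re ≤ 1 / 100 → -(1 / 100) ≤ y.re → (0 : ℝ) ≤ n → 0 < z.re := by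
      intros; simp; linarith) : z ≠ 0 := by
  rintro rfl
  simpa using hz (abs_le.1 h.abs_re_le).1 (abs_le.1 h.abs_re_le).2 h.neg_le_re n.cast_nonneg

end ParameterDomain

namespace Major

section Definitions

/-- The ratio of consecutive factors of the hypergeometric product `product`. -/
noncomputable def ratio (t y : ℂ) (i : ℕ) : ℂ :=
  -((2 * i + 1) * (2 * i + 2) / (3 * (3 * i + 2) * (3 * i + 1))) *
    ((1 + 2 * t + i) / (2 + 2 * t + 2 * i)) * ((1 - 2 * t + 2 * i) / (1 + 2 * t + 2 * i)) *
    ((y - t - 2 * i - 1) / (1 + t + y + 2 * i)) * ((y - t - 2 * i - 2) / (2 + t + y + 2 * i)) *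
    ((y - t + i + 1) / (1 + 2 * y + 2 * i))

/-- The hypergeometric product from which the kernel of the major family is built. -/
noncomputable def product (t y : ℂ) (n : ℕ) : ℂ := ∏ i ∈ Finset.range n, ratio t y i

/-- The hypergeometric kernel of the major family. -/
noncomputable def kernel (t y : ℂ) (n : ℕ) : ℂ :=
  (y - t) / (1 + t + y + 2 * n) * (1 / ((1 + 2 * t + 2 * n) * (3 * n + 1))) * product t y n

/-- The first factor in the nonlinear part of `weight`. -/
noncomputable def weightFactor (t y : ℂ) (n : ℕ) : ℂ :=
  (1 + 2 * t + n) / (2 + 2 * t + 2 * n) * ((1 + 2 * n) / (3 * n + 2)) *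
    ((1 + t + 2 * n - y) / (2 + t + y + 2 * n))

/-- The second factor in the nonlinear part of `weight`. -/
noncomputable def weightCofactor (t y : ℂ) (n : ℕ) : ℂ :=
  4 + 2 * t + 4 * n +
    2 / 3 * (5 + 2 * t + 4 * n) * ((2 + t + 2 * n - y) / (1 + 2 * y + 2 * n))

/-- The rational weight multiplying `kernel`. -/
noncomputable def weight (t y : ℂ) (n : ℕ) : ℂ :=
  2 * (1 + t + 2 * n) + weightFactor t y n * weightCofactor t y n

/-- The first member of the major WZ pair. -/
noncomputable def summand (t y : ℂ) (n : ℕ) : ℂ := kernel t y n * weight t y n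

/-- The WZ certificate, normalised by the kernel at `y + 1`. -/
noncomputable def cert (t y : ℂ) (n : ℕ) : ℂ :=
  (3 * n + 1) * (1 + 2 * t + 4 * n) * (1 + 2 * t + 2 * n) * (2 + t + y + 2 * n) /
    ((1 - t + y + n) * (1 + 2 * y) * (1 + t + y))

/-- The second member of the major WZ pair. -/
noncomputable def flux (t y : ℂ) (n : ℕ) : ℂ := kernel t (y + 1) n * cert t y n

/-- The ratio `kernel t y n / kernel t (y + 1) n`. -/
noncomputable def shiftRatio (t y : ℂ) (n : ℕ) : ℂ :=
  (y - t - 2 * n) * (2 + t + y + 2 * n) * (1 + 2 * y + 2 * n) /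
    ((1 - t + y + n) * (1 + 2 * y) * (1 + t + y))

/-- The ratio `kernel t y (n + 1) / kernel t y n`; only its second factor depends on `y`. -/
noncomputable def succRatio (t y : ℂ) (n : ℕ) : ℂ :=
  -((2 * n + 1) * (2 * n + 2) * (1 + 2 * t + n) * (1 - 2 * t + 2 * n) /
    (3 * (3 * n + 2) * (3 * n + 4) * (2 + 2 * t + 2 * n) * (3 + 2 * t + 2 * n))) *
    ((y - t - 2 * n - 1) * (y - t - 2 * n - 2) * (y - t + n + 1) /
      ((1 + 2 * y + 2 * n) * (2 + t + y + 2 * n) * (3 + t + y + 2 * n)))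

/-- The ratio `flux t y (n + 1) / kernel t (y + 1) n`. -/
noncomputable def fluxRatio (t y : ℂ) (n : ℕ) : ℂ :=
  -(2 * (2 * n + 1) * (n + 1) * (1 + 2 * t + n) * (1 - 2 * t + 2 * n) * (y - t - 2 * n) *
    (y - t - 2 * n - 1) * (5 + 2 * t + 4 * n)) /
    (3 * (3 * n + 2) * (2 + 2 * t + 2 * n) * (3 + 2 * y + 2 * n) * (3 + t + y + 2 * n) *
      (1 + 2 * y) * (1 + t + y))

/-- The logarithmic derivative at `s = 0` of the kernel with `2i + 1`, `2i + 2`, `2 + 2t + 2i`,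
`1 + 2t + 2i`, `1 + 2y + 2i` deformed to `2i + 1 + s`, `2i + 2 - s`, `2 + 2t + 2i - s`,
`1 + 2t + 2i - s`, `1 + 2y + 2i - 2s`. All definitions ending in `Deriv` below are the derivatives
at `s = 0` along this deformation, written out so that nothing has to be differentiated. -/
noncomputable def logDeriv (t y : ℂ) (n : ℕ) : ℂ :=
  ∑ i ∈ Finset.range n, (1 / (2 * i + 1) - 1 / (2 * (i + 1)) +
    1 / (2 + 2 * t + 2 * i) + 1 / (1 + 2 * t + 2 * i) + 2 / (1 + 2 * y + 2 * i)) +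
  1 / (1 + 2 * t + 2 * n)

/-- The `s`-derivative of `weightFactor`. -/
noncomputable def weightFactorDeriv (t y : ℂ) (n : ℕ) : ℂ :=
  weightFactor t y n * (1 / (2 * n + 1) + 1 / (2 + 2 * t + 2 * n))

/-- The `s`-derivative of `weightCofactor`. -/
noncomputable def weightCofactorDeriv (t y : ℂ) (n : ℕ) : ℂ :=
  (5 + 2 * t + 4 * n) / (3 * (n + 1)) * ((2 + t + 2 * n - y) / (1 + 2 * y + 2 * n)) *
    (1 + 4 * (n + 1) / (1 + 2 * y + 2 * n))

/-- The `s`-derivative of `weight`. -/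
noncomputable def weightDeriv (t y : ℂ) (n : ℕ) : ℂ :=
  weightFactorDeriv t y n * weightCofactor t y n + weightFactor t y n * weightCofactorDeriv t y n

/-- The `s`-derivative of `summand`. -/
noncomputable def summandDeriv (t y : ℂ) (n : ℕ) : ℂ :=
  kernel t y n * (weight t y n * logDeriv t y n + weightDeriv t y n)

/-- The `s`-derivative of `cert`. -/
noncomputable def certDeriv (t y : ℂ) (n : ℕ) : ℂ :=
  cert t y n * (-(1 / (1 + 2 * t + 2 * n)) + 1 / (1 + t + y))

/-- The `s`-derivative of `flux`. -/
noncomputable def fluxDeriv (t y : ℂ) (n : ℕ) : ℂ :=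
  kernel t (y + 1) n * (cert t y n * logDeriv t (y + 1) n + certDeriv t y n)

/-- The inhomogeneity created by the `s`-derivative: minus the derivative at `s = 0` of the factor
that relates the deformed summands at `y` and `y + 1`. -/
noncomputable def gap (t y : ℂ) : ℂ := 2 / (1 + 2 * y) - 1 / (1 + t + y)

end Definitions

section WZEquations

variable {t y : ℂ}

theorem product_succ (t y : ℂ) (n : ℕ) :
    product t y (n + 1) = product t y n * ratio t y n :=
  Finset.prod_range_succ _ _

theorem kernel_succ (h : Near t y) (n : ℕ) :
    kernel t y (n + 1) = kernel t y n * succRatio t y n := by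
  have a₁_ne := h.ne_zero n (1 + t + y + 2 * n)
  have b₁_ne := h.ne_zero n (1 + 2 * t + 2 * n)
  have c₁_ne := h.ne_zero n (3 * n + 1)
  have a₂_ne := h.ne_zero n (2 + t + y + 2 * n)
  have a₃_ne := h.ne_zero n (3 + t + y + 2 * n)
  have b₂_ne := h.ne_zero n (2 + 2 * t + 2 * n)
  have b₃_ne := h.ne_zero n (3 + 2 * t + 2 * n)
  have d_ne := h.ne_zero n (1 + 2 * y + 2 * n)
  have c₂_ne := h.ne_zero n (3 * n + 2)
  have c₄_ne := h.ne_zero n (3 * n + 4)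
  simp only [kernel, product_succ, ratio, succRatio,
    show 1 + t + y + 2 * ((n + 1 : ℕ) : ℂ) = 3 + t + y + 2 * n by push_cast; ring,
    show 1 + 2 * t + 2 * ((n + 1 : ℕ) : ℂ) = 3 + 2 * t + 2 * n by push_cast; ring,
    show 3 * ((n + 1 : ℕ) : ℂ) + 1 = 3 * n + 4 by push_cast; ring]
  generalize 1 + t + y + 2 * (n : ℂ) = a₁, 2 + t + y + 2 * (n : ℂ) = a₂,
    3 + t + y + 2 * (n : ℂ) = a₃, 1 + 2 * t + 2 * (n : ℂ) = b₁, 2 + 2 * t + 2 * (n : ℂ) = b₂,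
    3 + 2 * t + 2 * (n : ℂ) = b₃, 1 + 2 * y + 2 * (n : ℂ) = d, 3 * (n : ℂ) + 1 = c₁,
    3 * (n : ℂ) + 2 = c₂, 3 * (n : ℂ) + 4 = c₄, y - t = e, 1 + 2 * t + (n : ℂ) = g,
    1 - 2 * t + 2 * (n : ℂ) = k, 2 * (n : ℂ) + 1 = l, 2 * (n : ℂ) + 2 = m at *
  field_simp

theorem kernel_zero_eq (h : Near t y) : kernel t y 0 = kernel t (y + 1) 0 * shiftRatio t y 0 := by
  have a₁_ne := h.ne_zero 0 (1 + t + y)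
  have a₂_ne := h.ne_zero 0 (2 + t + y)
  have b_ne := h.ne_zero 0 (1 + 2 * t)
  have q_ne := h.ne_zero 0 (1 - t + y)
  have d_ne := h.ne_zero 0 (1 + 2 * y)
  have a₂_eq : 1 + t + (y + 1) = 2 + t + y := by ring
  simp only [kernel, shiftRatio, product, Finset.range_zero, Finset.prod_empty, Nat.cast_zero,
    mul_zero, add_zero, sub_zero, mul_one, zero_add, a₂_eq]
  clear a₂_eq
  generalize 1 + t + y = a₁, 2 + t + y = a₂, 1 + 2 * t = b, q_eq : 1 - t + y = q,
    1 + 2 * y = d at *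
  field_simp
  rw [← q_eq]
  ring

theorem shiftRatio_mul_succRatio (h : Near t y) (n : ℕ) :
    shiftRatio t y n * succRatio t y n = succRatio t (y + 1) n * shiftRatio t y (n + 1) := by
  have a₂_ne := h.ne_zero n (2 + t + y + 2 * n)
  have a₄_ne := h.ne_zero n (4 + t + y + 2 * n)
  have d₁_ne := h.ne_zero n (1 + 2 * y + 2 * n)
  have d₃_ne := h.ne_zero n (3 + 2 * y + 2 * n)
  have q₁_ne := h.ne_zero n (1 - t + y + n)
  have q₂_ne := h.ne_zero n (2 - t + y + n)
  rw [mul_comm (shiftRatio t y n), succRatio, succRatio, mul_assoc (-_), mul_assoc (-_)]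
  congr 1
  simp only [shiftRatio]
  rw [show 1 + 2 * (y + 1) + 2 * (n : ℂ) = 3 + 2 * y + 2 * n by ring,
    show 2 + t + (y + 1) + 2 * (n : ℂ) = 3 + t + y + 2 * n by ring,
    show 3 + t + (y + 1) + 2 * (n : ℂ) = 4 + t + y + 2 * n by ring,
    show 1 - t + y + ((n + 1 : ℕ) : ℂ) = 2 - t + y + n by push_cast; ring,
    show 2 + t + y + 2 * ((n + 1 : ℕ) : ℂ) = 4 + t + y + 2 * n by push_cast; ring,
    show 1 + 2 * y + 2 * ((n + 1 : ℕ) : ℂ) = 3 + 2 * y + 2 * n by push_cast; ring,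
    show y - t - 2 * ((n + 1 : ℕ) : ℂ) = y - t - 2 * n - 2 by push_cast; ring,
    show y - t + n + 1 = 1 - t + y + (n : ℂ) by ring,
    show y + 1 - t + n + 1 = 2 - t + y + (n : ℂ) by ring,
    show y + 1 - t - 2 * n - 1 = y - t - 2 * (n : ℂ) by ring,
    show y + 1 - t - 2 * n - 2 = y - t - 2 * (n : ℂ) - 1 by ring]
  generalize 2 + t + y + 2 * (n : ℂ) = a₂, 3 + t + y + 2 * (n : ℂ) = a₃,
    4 + t + y + 2 * (n : ℂ) = a₄, 3 + 2 * y + 2 * (n : ℂ) = d₃,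
    1 - t + y + (n : ℂ) = q₁, 2 - t + y + (n : ℂ) = q₂, 1 + 2 * y = d, 1 + t + y = a,
    y - t - 2 * (n : ℂ) = e at *
  field_simp

theorem kernel_eq_mul_shiftRatio (h : Near t y) (n : ℕ) :
    kernel t y n = kernel t (y + 1) n * shiftRatio t y n := by
  induction n with
  | zero => exact kernel_zero_eq h
  | succ n ih =>
    rw [kernel_succ h, kernel_succ h.succ, ih]
    linear_combination kernel t (y + 1) n * shiftRatio_mul_succRatio h n

theorem logDeriv_eq_shift (t y : ℂ) (n : ℕ) :
    logDeriv t y n = logDeriv t (y + 1) n - 2 / (1 + 2 * y + 2 * n) + 2 / (1 + 2 * y) := by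
  induction n with
  | zero => simp [logDeriv]
  | succ n ih =>
    have d_eq : 1 + 2 * (y + 1) + 2 * (n : ℂ) = 1 + 2 * y + 2 * ((n + 1 : ℕ) : ℂ) := by
      push_cast; ring
    simp only [logDeriv, Finset.sum_range_succ] at ih ⊢
    rw [d_eq]
    linear_combination ih

theorem logDeriv_succ (t y : ℂ) (n : ℕ) :
    logDeriv t y (n + 1) = logDeriv t y n + 1 / (2 * n + 1) - 1 / (2 * (n + 1)) +
      1 / (2 + 2 * t + 2 * n) + 1 / (3 + 2 * t + 2 * n) + 2 / (1 + 2 * y + 2 * n) := by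
  have b_eq : 1 + 2 * t + 2 * ((n + 1 : ℕ) : ℂ) = 3 + 2 * t + 2 * n := by push_cast; ring
  simp only [logDeriv, Finset.sum_range_succ, b_eq]
  ring

theorem flux_succ (h : Near t y) (n : ℕ) :
    flux t y (n + 1) = kernel t (y + 1) n * fluxRatio t y n := by
  have a₄_ne := h.ne_zero n (4 + t + y + 2 * n)
  have b₃_ne := h.ne_zero n (3 + 2 * t + 2 * n)
  have c₄_ne := h.ne_zero n (3 * n + 4)
  have q₂_ne := h.ne_zero n (2 - t + y + n)
  have a₃_ne := h.ne_zero n (3 + t + y + 2 * n)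
  have b₂_ne := h.ne_zero n (2 + 2 * t + 2 * n)
  have d₃_ne := h.ne_zero n (3 + 2 * y + 2 * n)
  have d_ne := h.ne_zero n (1 + 2 * y)
  have a_ne := h.ne_zero n (1 + t + y)
  have c₂_ne := h.ne_zero n (3 * n + 2)
  rw [flux, kernel_succ h.succ, mul_assoc]
  congr 1
  rw [succRatio, cert, fluxRatio,
    show 1 + 2 * (y + 1) + 2 * (n : ℂ) = 3 + 2 * y + 2 * n by ring,
    show 2 + t + (y + 1) + 2 * (n : ℂ) = 3 + t + y + 2 * n by ring,
    show 3 + t + (y + 1) + 2 * (n : ℂ) = 4 + t + y + 2 * n by ring,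
    show y + 1 - t + n + 1 = 2 - t + y + (n : ℂ) by ring,
    show 1 - t + y + ((n + 1 : ℕ) : ℂ) = 2 - t + y + n by push_cast; ring,
    show 1 + 2 * t + 2 * ((n + 1 : ℕ) : ℂ) = 3 + 2 * t + 2 * n by push_cast; ring,
    show 1 + 2 * t + 4 * ((n + 1 : ℕ) : ℂ) = 5 + 2 * t + 4 * n by push_cast; ring,
    show 2 + t + y + 2 * ((n + 1 : ℕ) : ℂ) = 4 + t + y + 2 * n by push_cast; ring,
    show 3 * ((n + 1 : ℕ) : ℂ) + 1 = 3 * n + 4 by push_cast; ring,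
    show y + 1 - t - 2 * n - 1 = y - t - 2 * (n : ℂ) by ring,
    show y + 1 - t - 2 * n - 2 = y - t - 2 * (n : ℂ) - 1 by ring,
    show 2 * (n : ℂ) + 2 = 2 * (n + 1) by ring]
  generalize 4 + t + y + 2 * (n : ℂ) = a₄, 3 + 2 * t + 2 * (n : ℂ) = b₃, 3 * (n : ℂ) + 4 = c₄,
    2 - t + y + (n : ℂ) = q₂, 3 + 2 * y + 2 * (n : ℂ) = d₃, 3 + t + y + 2 * (n : ℂ) = a₃,
    2 + 2 * t + 2 * (n : ℂ) = b₂, 1 + 2 * y = d, 1 + t + y = a, 3 * (n : ℂ) + 2 = c₂,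
    5 + 2 * t + 4 * (n : ℂ) = r, y - t - 2 * (n : ℂ) = e,
    1 + 2 * t + (n : ℂ) = g, 1 - 2 * t + 2 * (n : ℂ) = k, 2 * (n : ℂ) + 1 = l,
    (n : ℂ) + 1 = m at *
  field_simp

theorem shiftRatio_mul_weight_sub (h : Near t y) (n : ℕ) :
    shiftRatio t y n * weight t y n - weight t (y + 1) n = fluxRatio t y n - cert t y n := by
  have a₂_ne := h.ne_zero n (2 + t + y + 2 * n)
  have a₃_ne := h.ne_zero n (3 + t + y + 2 * n)
  have b_ne := h.ne_zero n (2 + 2 * t + 2 * n)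
  have d₁_ne := h.ne_zero n (1 + 2 * y + 2 * n)
  have d₃_ne := h.ne_zero n (3 + 2 * y + 2 * n)
  have c_ne := h.ne_zero n (3 * n + 2)
  have q_ne := h.ne_zero n (1 - t + y + n)
  have d_ne := h.ne_zero n (1 + 2 * y)
  have a_ne := h.ne_zero n (1 + t + y)
  simp only [shiftRatio, fluxRatio, weight, weightFactor, weightCofactor, cert]
  rw [show 1 + 2 * (y + 1) + 2 * (n : ℂ) = 3 + 2 * y + 2 * n by ring,
    show 2 + t + (y + 1) + 2 * (n : ℂ) = 3 + t + y + 2 * n by ring]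
  generalize a₂_eq : 2 + t + y + 2 * (n : ℂ) = a₂, a₃_eq : 3 + t + y + 2 * (n : ℂ) = a₃,
    b_eq : 2 + 2 * t + 2 * (n : ℂ) = b, d₁_eq : 1 + 2 * y + 2 * (n : ℂ) = d₁,
    d₃_eq : 3 + 2 * y + 2 * (n : ℂ) = d₃, c_eq : 3 * (n : ℂ) + 2 = c,
    q_eq : 1 - t + y + (n : ℂ) = q, d_eq : 1 + 2 * y = d, a_eq : 1 + t + y = a at *
  field_simp
  subst a₂_eq a₃_eq b_eq d₁_eq d₃_eq c_eq q_eq d_eq a_eq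
  ring

theorem summand_sub_summand_succ (h : Near t y) (n : ℕ) :
    summand t y n - summand t (y + 1) n = flux t y (n + 1) - flux t y n := by
  rw [summand, summand, flux_succ h, flux, kernel_eq_mul_shiftRatio h]
  linear_combination kernel t (y + 1) n * shiftRatio_mul_weight_sub h n

theorem weightDeriv_shift_remainder_left (h : Near t y) (n : ℕ) :
    (2 * (1 + t + 2 * n) * (1 - shiftRatio t y n) - cert t y n) *
        (1 / (2 * n + 1) + 1 / (2 + 2 * t + 2 * n)) =
      (y - t - 2 * n) * (3 + 2 * t + 4 * n) ^ 2 * (1 + 2 * t + n) /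
        ((2 + 2 * t + 2 * n) * (1 - t + y + n) * (1 + 2 * y) * (1 + t + y)) := by
  have b_ne := h.ne_zero n (2 + 2 * t + 2 * n)
  have q_ne := h.ne_zero n (1 - t + y + n)
  have d_ne := h.ne_zero n (1 + 2 * y)
  have a_ne := h.ne_zero n (1 + t + y)
  have l_ne := h.ne_zero n (2 * n + 1)
  simp only [shiftRatio, cert]
  generalize b_eq : 2 + 2 * t + 2 * (n : ℂ) = b, q_eq : 1 - t + y + (n : ℂ) = q,
    d_eq : 1 + 2 * y = d, a_eq : 1 + t + y = a, l_eq : 2 * (n : ℂ) + 1 = l at *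
  field_simp
  subst b_eq q_eq d_eq a_eq l_eq
  ring

theorem weightCofactorDeriv_sub (h : Near t y) (n : ℕ) :
    weightCofactorDeriv t y n - 2 * weightCofactor t y n / (1 + 2 * y + 2 * n) =
      ((5 + 2 * t + 4 * n) * (2 + t + 2 * n - y) / (3 * (n + 1)) - 4 * (2 + t + 2 * n)) /
        (1 + 2 * y + 2 * n) := by
  have d_ne := h.ne_zero n (1 + 2 * y + 2 * n)
  have m_ne := h.ne_zero n (n + 1)
  simp only [weightCofactor, weightCofactorDeriv]
  generalize d_eq : 1 + 2 * y + 2 * (n : ℂ) = d, m_eq : (n : ℂ) + 1 = m at *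
  field_simp
  subst d_eq m_eq
  ring

theorem weightDeriv_shift_remainder (h : Near t y) (n : ℕ) :
    shiftRatio t y n * (weightFactor t y n *
        (weightCofactorDeriv t y n - 2 * weightCofactor t y n / (1 + 2 * y + 2 * n))) -
      weightFactor t (y + 1) n * weightCofactorDeriv t (y + 1) n +
      weight t (y + 1) n / (1 + t + y) +
      fluxRatio t y n * (1 / (2 * (n + 1)) - 2 / (3 + 2 * y + 2 * n)) -
      cert t y n / (1 + 2 * t + 2 * n) +
      (2 * (1 + t + 2 * n) * (1 - shiftRatio t y n) - cert t y n) *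
        (1 / (2 * n + 1) + 1 / (2 + 2 * t + 2 * n)) =
      4 * (1 + t + 2 * n) * shiftRatio t y n / (1 + 2 * y + 2 * n) := by
  rw [weightDeriv_shift_remainder_left h, weightCofactorDeriv_sub h]
  have a₂_ne := h.ne_zero n (2 + t + y + 2 * n)
  have a₃_ne := h.ne_zero n (3 + t + y + 2 * n)
  have b₂_ne := h.ne_zero n (2 + 2 * t + 2 * n)
  have d₁_ne := h.ne_zero n (1 + 2 * y + 2 * n)
  have d₃_ne := h.ne_zero n (3 + 2 * y + 2 * n)
  have c_ne := h.ne_zero n (3 * n + 2)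
  have q_ne := h.ne_zero n (1 - t + y + n)
  have d_ne := h.ne_zero n (1 + 2 * y)
  have a_ne := h.ne_zero n (1 + t + y)
  have m_ne := h.ne_zero n (n + 1)
  have b₁_ne := h.ne_zero n (1 + 2 * t + 2 * n)
  simp only [shiftRatio, fluxRatio, weight, weightFactor, weightCofactor, weightCofactorDeriv, cert]
  rw [show 1 + 2 * (y + 1) + 2 * (n : ℂ) = 3 + 2 * y + 2 * n by ring,
    show 2 + t + (y + 1) + 2 * (n : ℂ) = 3 + t + y + 2 * n by ring]
  generalize a₂_eq : 2 + t + y + 2 * (n : ℂ) = a₂, a₃_eq : 3 + t + y + 2 * (n : ℂ) = a₃,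
    b₂_eq : 2 + 2 * t + 2 * (n : ℂ) = b₂, d₁_eq : 1 + 2 * y + 2 * (n : ℂ) = d₁,
    d₃_eq : 3 + 2 * y + 2 * (n : ℂ) = d₃, c_eq : 3 * (n : ℂ) + 2 = c,
    q_eq : 1 - t + y + (n : ℂ) = q, d_eq : 1 + 2 * y = d, a_eq : 1 + t + y = a,
    m_eq : (n : ℂ) + 1 = m, b₁_eq : 1 + 2 * t + 2 * (n : ℂ) = b₁ at *
  field_simp
  subst a₂_eq a₃_eq b₂_eq d₁_eq d₃_eq c_eq q_eq d_eq a_eq m_eq b₁_eq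
  ring

theorem shiftRatio_mul_weightDeriv_sub (h : Near t y) (n : ℕ) :
    shiftRatio t y n *
        (weight t y n * (1 / (1 + t + y) - 2 / (1 + 2 * y + 2 * n)) + weightDeriv t y n) -
      weightDeriv t (y + 1) n =
    fluxRatio t y n * (1 / (2 * n + 1) - 1 / (2 * (n + 1)) + 1 / (2 + 2 * t + 2 * n) +
      2 / (3 + 2 * y + 2 * n) + 1 / (1 + t + y)) - certDeriv t y n := by
  have key := shiftRatio_mul_weight_sub h n
  have remainder := weightDeriv_shift_remainder h n
  simp only [weight, weightDeriv, weightFactorDeriv, certDeriv] at key remainder ⊢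
  linear_combination remainder +
    key * (1 / (2 * n + 1) + 1 / (2 + 2 * t + 2 * n) + 1 / (1 + t + y))

theorem summandDeriv_sub_summandDeriv_succ (h : Near t y) (n : ℕ) :
    summandDeriv t y n - summandDeriv t (y + 1) n =
      gap t y * summand t y n + (fluxDeriv t y (n + 1) - fluxDeriv t y n) := by
  have d_eq : 1 + 2 * (y + 1) + 2 * (n : ℂ) = 3 + 2 * y + 2 * n := by ring
  have b_eq : 1 + 2 * t + 2 * ((n + 1 : ℕ) : ℂ) = 3 + 2 * t + 2 * n := by push_cast; ring
  have flux_eq := flux_succ h n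
  have deriv_eq := shiftRatio_mul_weightDeriv_sub h n
  simp only [flux] at flux_eq
  simp only [summandDeriv, summand, fluxDeriv, gap, logDeriv_succ, logDeriv_eq_shift t y n,
    certDeriv, d_eq, b_eq, kernel_eq_mul_shiftRatio h] at deriv_eq ⊢
  linear_combination
    kernel t (y + 1) n * (deriv_eq + logDeriv t (y + 1) n * shiftRatio_mul_weight_sub h n) -
    flux_eq * (logDeriv t (y + 1) n + 1 / (2 * n + 1) - 1 / (2 * (n + 1)) +
      1 / (2 + 2 * t + 2 * n) + 2 / (3 + 2 * y + 2 * n) + 1 / (1 + t + y))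

end WZEquations

end Major

section UniformGrowth

/-- Polynomial growth in `n`, uniformly on the parameter domain. -/
def PolyBounded (f : ℂ → ℂ → ℕ → ℂ) : Prop :=
  ∃ C : ℝ, ∃ k : ℕ, 0 ≤ C ∧ ∀ t y n, Near t y → ‖f t y n‖ ≤ C * (n + 1) ^ k

/-- Decay like `2 ^ (-n)` up to a polynomial factor in `n`, uniformly on the parameter domain. -/
def GeomBounded (f : ℂ → ℂ → ℕ → ℂ) : Prop :=
  ∃ C : ℝ, ∃ k : ℕ, 0 ≤ C ∧ ∀ t y n, Near t y → ‖f t y n‖ ≤ C * (n + 1) ^ k * (1 / 2) ^ n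

variable {f g : ℂ → ℂ → ℕ → ℂ}

theorem PolyBounded.const (c : ℂ) : PolyBounded fun _ _ _ => c :=
  ⟨‖c‖, 0, norm_nonneg _, fun _ _ _ _ => by simp⟩

theorem PolyBounded.mul (hf : PolyBounded f) (hg : PolyBounded g) :
    PolyBounded fun t y n => f t y n * g t y n := by
  obtain ⟨C, k, hC, hf⟩ := hf
  obtain ⟨D, l, hD, hg⟩ := hg
  refine ⟨C * D, k + l, mul_nonneg hC hD, fun t y n h => ?_⟩
  calc ‖f t y n * g t y n‖ = ‖f t y n‖ * ‖g t y n‖ := norm_mul _ _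
    _ ≤ (C * (n + 1) ^ k) * (D * (n + 1) ^ l) :=
        mul_le_mul (hf t y n h) (hg t y n h) (norm_nonneg _) (by positivity)
    _ = C * D * (n + 1) ^ (k + l) := by ring

theorem PolyBounded.add (hf : PolyBounded f) (hg : PolyBounded g) :
    PolyBounded fun t y n => f t y n + g t y n := by
  obtain ⟨C, k, hC, hf⟩ := hf
  obtain ⟨D, l, hD, hg⟩ := hg
  refine ⟨C + D, k + l, add_nonneg hC hD, fun t y n h => ?_⟩
  have one_le : (1 : ℝ) ≤ n + 1 := by linarith [(n.cast_nonneg : (0 : ℝ) ≤ n)]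
  calc ‖f t y n + g t y n‖ ≤ C * (n + 1) ^ k + D * (n + 1) ^ l :=
        (norm_add_le _ _).trans (add_le_add (hf t y n h) (hg t y n h))
    _ ≤ C * (n + 1) ^ (k + l) + D * (n + 1) ^ (k + l) := by gcongr <;> omega
    _ = (C + D) * (n + 1) ^ (k + l) := by ring

theorem PolyBounded.neg (hf : PolyBounded f) : PolyBounded fun t y n => -f t y n := by
  obtain ⟨C, k, hC, hf⟩ := hf
  exact ⟨C, k, hC, fun t y n h => (norm_neg _).trans_le (hf t y n h)⟩

theorem PolyBounded.sub (hf : PolyBounded f) (hg : PolyBounded g) :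
    PolyBounded fun t y n => f t y n - g t y n := by
  simpa only [sub_eq_add_neg] using hf.add hg.neg

theorem PolyBounded.congr (hf : PolyBounded f) (h : ∀ t y n, Near t y → f t y n = g t y n) :
    PolyBounded g := by
  obtain ⟨C, k, hC, hf⟩ := hf
  exact ⟨C, k, hC, fun t y n hn => h t y n hn ▸ hf t y n hn⟩

theorem PolyBounded.affine (a b c : ℂ) : PolyBounded fun t _ n => a + b * t + c * n := by
  have param : PolyBounded fun t _ _ => t :=
    ⟨1, 0, zero_le_one, fun t y n h => by rw [pow_zero, mul_one]; linarith [h.norm_le]⟩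
  have index : PolyBounded fun _ _ n => (n : ℂ) := ⟨1, 1, zero_le_one, fun _ _ n _ => by simp⟩
  exact ((PolyBounded.const a).add ((PolyBounded.const b).mul param)).add
    ((PolyBounded.const c).mul index)

theorem PolyBounded.sum_range (hf : PolyBounded f) :
    PolyBounded fun t y n => ∑ i ∈ Finset.range n, f t y i := by
  obtain ⟨C, k, hC, hf⟩ := hf
  refine ⟨C, k + 1, hC, fun t y n h => ?_⟩
  have term_le : ∀ i ∈ Finset.range n, ‖f t y i‖ ≤ C * (n + 1) ^ k := fun i hi => by
    have : (i : ℝ) ≤ n := by exact_mod_cast (Finset.mem_range.1 hi).le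
    exact (hf t y i h).trans (by gcongr)
  calc ‖∑ i ∈ Finset.range n, f t y i‖ ≤ n * (C * (n + 1) ^ k) := by
        simpa using norm_sum_le_of_le _ term_le
    _ ≤ (n + 1) * (C * (n + 1) ^ k) := by gcongr; linarith
    _ = C * (n + 1) ^ (k + 1) := by ring

theorem PolyBounded.inv {δ : ℝ} (hδ : 0 < δ) (hg : ∀ t y n, Near t y → δ ≤ ‖g t y n‖) :
    PolyBounded fun t y n => (g t y n)⁻¹ := by
  refine ⟨δ⁻¹, 0, (inv_pos.2 hδ).le, fun t y n h => ?_⟩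
  rw [norm_inv, pow_zero, mul_one]
  exact inv_anti₀ hδ (hg t y n h)

/-- As in `Near.ne_zero`, the default argument disposes of visibly positive affine forms. -/
theorem PolyBounded.div (hf : PolyBounded f)
    (hg : ∀ (t y : ℂ) (n : ℕ), -(1 / 100) ≤ t.re → t.re ≤ 1 / 100 → -(1 / 100) ≤ y.re →
      (0 : ℝ) ≤ n → 1 / 100 ≤ (g t y n).re := by intros; simp; linarith) :
    PolyBounded fun t y n => f t y n / g t y n := by
  have hg_inv : PolyBounded fun t y n => (g t y n)⁻¹ := by
    refine PolyBounded.inv (δ := 1 / 100) (by norm_num) fun t y n h => ?_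
    obtain ⟨re_ge, re_le⟩ := abs_le.1 h.abs_re_le
    exact (hg t y n re_ge re_le h.neg_le_re n.cast_nonneg).trans (Complex.re_le_norm _)
  simpa only [div_eq_mul_inv] using hf.mul hg_inv

theorem PolyBounded.shift (hf : PolyBounded f) : PolyBounded fun t y n => f t (y + 1) n := by
  obtain ⟨C, k, hC, hf⟩ := hf
  exact ⟨C, k, hC, fun t y n h => hf t _ n h.succ⟩

theorem GeomBounded.shift (hf : GeomBounded f) : GeomBounded fun t y n => f t (y + 1) n := by
  obtain ⟨C, k, hC, hf⟩ := hf
  exact ⟨C, k, hC, fun t y n h => hf t _ n h.succ⟩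

theorem GeomBounded.mul (hf : GeomBounded f) (hg : PolyBounded g) :
    GeomBounded fun t y n => f t y n * g t y n := by
  obtain ⟨C, k, hC, hf⟩ := hf
  obtain ⟨D, l, hD, hg⟩ := hg
  refine ⟨C * D, k + l, mul_nonneg hC hD, fun t y n h => ?_⟩
  calc ‖f t y n * g t y n‖ = ‖f t y n‖ * ‖g t y n‖ := norm_mul _ _
    _ ≤ (C * (n + 1) ^ k * (1 / 2) ^ n) * (D * (n + 1) ^ l) :=
        mul_le_mul (hf t y n h) (hg t y n h) (norm_nonneg _) (by positivity)
    _ = C * D * (n + 1) ^ (k + l) * (1 / 2) ^ n := by ring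

theorem GeomBounded.exists_summable_bound (hf : GeomBounded f) :
    ∃ u : ℕ → ℝ, Summable u ∧ ∀ t y n, Near t y → ‖f t y n‖ ≤ u n := by
  obtain ⟨C, k, _, hf⟩ := hf
  refine ⟨_, ?_, hf⟩
  have summable_pow := (summable_nat_add_iff 1).2
    (summable_pow_mul_geometric_of_norm_lt_one k (r := (1 / 2 : ℝ)) (by norm_num))
  refine (summable_pow.mul_left (2 * C)).congr fun n => ?_
  push_cast
  ring

theorem GeomBounded.summable (hf : GeomBounded f) {t y : ℂ} (h : Near t y) :
    Summable fun n => f t y n := by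
  obtain ⟨u, hu, f_le⟩ := hf.exists_summable_bound
  exact Summable.of_norm_bounded hu fun n => f_le t y n h

theorem GeomBounded.tendsto_zero (hf : GeomBounded f) {t y : ℂ} (h : Near t y) :
    Tendsto (fun n => f t y n) atTop (𝓝 0) :=
  (hf.summable h).tendsto_atTop_zero

theorem norm_div_le_of_norm_sub_le {z d : ℂ} {a b e c : ℝ} (hz : ‖z - a‖ ≤ e) (hd : b ≤ d.re)
    (hb : 0 < b) (hc : |a| + e ≤ c * b) : ‖z / d‖ ≤ c := by
  have z_le : ‖z‖ ≤ |a| + e := by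
    simpa [add_comm] using (norm_le_norm_sub_add z (a : ℂ)).trans (add_le_add_left hz _)
  have c_nonneg : 0 ≤ c :=
    nonneg_of_mul_nonneg_left (((norm_nonneg z).trans z_le).trans hc) hb
  rw [norm_div, div_le_iff₀ (hb.trans_le (hd.trans (Complex.re_le_norm d)))]
  exact z_le.trans (hc.trans (by gcongr; exact hd.trans (Complex.re_le_norm d)))

end UniformGrowth

section LimitsAtInfinity

/-- Existence of a limit as the argument leaves every bounded set. -/
def HasLimAtInfinity (f : ℂ → ℂ) : Prop := ∃ L, Tendsto f (Bornology.cobounded ℂ) (𝓝 L)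

variable {f g : ℂ → ℂ}

theorem HasLimAtInfinity.const (c : ℂ) : HasLimAtInfinity fun _ => c := ⟨c, tendsto_const_nhds⟩

theorem HasLimAtInfinity.add :
    HasLimAtInfinity f → HasLimAtInfinity g → HasLimAtInfinity fun y => f y + g y :=
  fun ⟨_, hf⟩ ⟨_, hg⟩ => ⟨_, hf.add hg⟩

theorem HasLimAtInfinity.mul :
    HasLimAtInfinity f → HasLimAtInfinity g → HasLimAtInfinity fun y => f y * g y :=
  fun ⟨_, hf⟩ ⟨_, hg⟩ => ⟨_, hf.mul hg⟩

theorem HasLimAtInfinity.sum {ι : Type*} {f : ι → ℂ → ℂ} (h : ∀ i, HasLimAtInfinity (f i))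
    (s : Finset ι) : HasLimAtInfinity fun y => ∑ i ∈ s, f i y := by
  choose L hL using h
  exact ⟨_, tendsto_finsetSum _ fun i _ => hL i⟩

theorem HasLimAtInfinity.prod {ι : Type*} {f : ι → ℂ → ℂ} (h : ∀ i, HasLimAtInfinity (f i))
    (s : Finset ι) : HasLimAtInfinity fun y => ∏ i ∈ s, f i y := by
  choose L hL using h
  exact ⟨_, tendsto_finsetProd _ fun i _ => hL i⟩

theorem tendsto_add_mul_cobounded (b : ℂ) {u : ℂ} (hu : u ≠ 0) :
    Tendsto (fun y => b + u * y) (Bornology.cobounded ℂ) (Bornology.cobounded ℂ) := by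
  rw [← tendsto_norm_atTop_iff_cobounded]
  have lower : Tendsto (fun y : ℂ => ‖u‖ * ‖y‖ - ‖b‖) (Bornology.cobounded ℂ) atTop :=
    tendsto_atTop_add_const_right _ _
      (tendsto_norm_cobounded_atTop.const_mul_atTop (norm_pos_iff.2 hu))
  refine tendsto_atTop_mono (fun y => ?_) lower
  simpa [add_comm] using norm_sub_norm_le (u * y) (-b)

/-- The fraction is passed through an equation so that it need not be in normal form. -/
theorem HasLimAtInfinity.of_eq_mobius (a s b : ℂ) {u : ℂ} (hu : u ≠ 0)
    (h : ∀ y, f y = (a + s * y) / (b + u * y) := by intro y; congr 1 <;> ring) :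
    HasLimAtInfinity f := by
  have den_tendsto := tendsto_add_mul_cobounded b hu
  have inv_tendsto := (tendsto_inv₀_cobounded (α := ℂ)).comp den_tendsto
  refine ⟨s / u + (a - s * b / u) * 0,
    ((inv_tendsto.const_mul (a - s * b / u)).const_add (s / u)).congr' ?_⟩
  filter_upwards [den_tendsto.eventually_ne_cobounded 0] with y hy
  rw [h, Function.comp_apply]
  field_simp
  ring

theorem tendsto_add_natCast_cobounded (e : ℂ) :
    Tendsto (fun j : ℕ => e + j) atTop (Bornology.cobounded ℂ) := by
  have h := (tendsto_add_mul_cobounded e one_ne_zero).comp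
    tendsto_natCast_atTop_cobounded
  simpa only [Function.comp_def, one_mul] using h

theorem Near.add_natCast {t e : ℂ} (ht : ‖t‖ ≤ 1 / 100) (he : ‖e‖ ≤ 1 / 100) (j : ℕ) :
    Near t (e + j) :=
  ⟨ht, j, by simpa using he⟩

theorem GeomBounded.exists_tendsto_tsum {f : ℂ → ℂ → ℕ → ℂ} (hf : GeomBounded f)
    (hlim : ∀ t n, HasLimAtInfinity fun y => f t y n) {t : ℂ} (ht : ‖t‖ ≤ 1 / 100) :
    ∃ L, ∀ e : ℂ, ‖e‖ ≤ 1 / 100 → Tendsto (fun j : ℕ => ∑' n, f t (e + j) n) atTop (𝓝 L) := by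
  choose L hL using hlim t
  obtain ⟨u, hu, f_le⟩ := hf.exists_summable_bound
  exact ⟨∑' n, L n, fun e he => tendsto_tsum_of_dominated_convergence hu
    (fun n => (hL n).comp (tendsto_add_natCast_cobounded e))
    (Eventually.of_forall fun j n => f_le t _ n (Near.add_natCast ht he j))⟩

end LimitsAtInfinity

section Telescoping

theorem tsum_eq_of_telescoping {E : Type*} [AddCommGroup E] [TopologicalSpace E]
    [IsTopologicalAddGroup E] [T2Space E] {a g : ℕ → E} (ha : Summable a)
    (h : ∀ n, a n = g (n + 1) - g n) (hg : Tendsto g atTop (𝓝 0)) :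
    ∑' n, a n = -g 0 := by
  have partial_sums := ha.hasSum.tendsto_sum_nat
  simp only [h, Finset.sum_range_sub] at partial_sums
  rw [tsum_congr h, tendsto_nhds_unique partial_sums (hg.sub_const (g 0)), zero_sub]

theorem tendsto_sum_increment_sub {S q : ℂ → ℂ} {L e e' : ℂ}
    (h : ∀ j : ℕ, S (e + j + 1) = S (e + j) + q (e + j))
    (h' : ∀ j : ℕ, S (e' + j + 1) = S (e' + j) + q (e' + j))
    (hL : Tendsto (fun j : ℕ => S (e + j)) atTop (𝓝 L))
    (hL' : Tendsto (fun j : ℕ => S (e' + j)) atTop (𝓝 L)) :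
    Tendsto (fun N => ∑ j ∈ Finset.range N, (q (e + j) - q (e' + j))) atTop
      (𝓝 (S e' - S e)) := by
  have partial_sum (N : ℕ) : ∑ j ∈ Finset.range N, (q (e + j) - q (e' + j)) =
      S (e + N) - S (e' + N) + (S e' - S e) := by
    induction N with
    | zero => simp
    | succ N ih =>
      rw [Finset.sum_range_succ, ih, Nat.cast_add_one, ← add_assoc, ← add_assoc, h, h']
      ring
  simpa only [partial_sum, sub_self, zero_add] using (hL.sub hL').add_const (S e' - S e)

end Telescoping

namespace Major

section Bounds

variable {t y : ℂ}

theorem norm_ratio_coeff_le (i : ℕ) :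
    ‖-((2 * i + 1) * (2 * i + 2) / (3 * (3 * i + 2) * (3 * i + 1)) : ℂ)‖ ≤ 1 / 3 := by
  rw [norm_neg, show ((2 * i + 1) * (2 * i + 2) / (3 * (3 * i + 2) * (3 * i + 1)) : ℂ) =
    (((2 * i + 1) * (2 * i + 2) / (3 * (3 * i + 2) * (3 * i + 1)) : ℝ) : ℂ) by push_cast; rfl,
    Complex.norm_of_nonneg (by positivity), div_le_iff₀ (by positivity)]
  nlinarith [(i.cast_nonneg : (0 : ℝ) ≤ i)]

theorem norm_ratio_param_le (ht : ‖t‖ ≤ 1 / 100) (i : ℕ) :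
    ‖(1 + 2 * t + i) / (2 + 2 * t + 2 * i)‖ ≤ 6 / 10 ∧
      ‖(1 - 2 * t + 2 * i) / (1 + 2 * t + 2 * i)‖ ≤ 11 / 10 := by
  have : (0 : ℝ) ≤ i := i.cast_nonneg
  have re_ge := (abs_le.1 ((Complex.abs_re_le_norm t).trans ht)).1
  have norm_two_mul : ‖2 * t‖ ≤ 2 / 100 := by rw [norm_mul, Complex.norm_ofNat]; linarith
  constructor
  · refine norm_div_le_of_norm_sub_le (a := 1 + i) (b := 2 + 2 * i - 2 / 100) (e := 2 / 100)
      ?_ (by simp; linarith) (by linarith) (by rw [abs_of_nonneg] <;> linarith)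
    convert norm_two_mul using 2
    push_cast
    ring
  · refine norm_div_le_of_norm_sub_le (a := 1 + 2 * i) (b := 1 + 2 * i - 2 / 100) (e := 2 / 100)
      ?_ (by simp; linarith) (by linarith) (by rw [abs_of_nonneg] <;> linarith)
    rwa [show 1 - 2 * t + 2 * (i : ℂ) - ((1 + 2 * i : ℝ) : ℂ) = -(2 * t) by push_cast; ring,
      norm_neg]

theorem norm_sub_div_add_le (h : Near t y) {p : ℝ} (hp : 1 ≤ p) :
    ‖(y - t - p) / (y + t + p)‖ ≤ 11 / 10 := by
  obtain ⟨j, norm_sub_le', re_ge⟩ := h.exists_nat_sub_le_re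
  have t_re_ge := (abs_le.1 h.abs_re_le).1
  have : (0 : ℝ) ≤ j := j.cast_nonneg
  refine norm_div_le_of_norm_sub_le (a := j - p) (b := j + p - 2 / 100) (e := 2 / 100) ?_
    (by simp; linarith) (by linarith) (by cases abs_cases ((j : ℝ) - p) <;> linarith)
  calc ‖y - t - p - ((j - p : ℝ) : ℂ)‖ = ‖y - j - t‖ := by congr 1; push_cast; ring
    _ ≤ 2 / 100 := (norm_sub_le _ _).trans (by linarith [h.norm_le])

theorem norm_ratio_shift_le (h : Near t y) (i : ℕ) :
    ‖(y - t + i + 1) / (1 + 2 * y + 2 * i)‖ ≤ 11 / 10 := by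
  obtain ⟨j, norm_sub_le', re_ge⟩ := h.exists_nat_sub_le_re
  have : (0 : ℝ) ≤ i := i.cast_nonneg
  have : (0 : ℝ) ≤ j := j.cast_nonneg
  refine norm_div_le_of_norm_sub_le (a := j + i + 1) (b := 1 + 2 * j + 2 * i - 2 / 100)
    (e := 2 / 100) ?_ (by simp; linarith) (by linarith) (by rw [abs_of_nonneg] <;> linarith)
  calc ‖y - t + i + 1 - ((j + i + 1 : ℝ) : ℂ)‖ = ‖y - j - t‖ := by congr 1; push_cast; ring
    _ ≤ 2 / 100 := (norm_sub_le _ _).trans (by linarith [h.norm_le])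

theorem norm_ratio_le (h : Near t y) (i : ℕ) : ‖ratio t y i‖ ≤ 1 / 2 := by
  have : (0 : ℝ) ≤ i := i.cast_nonneg
  have odd_le : ‖(y - t - 2 * i - 1) / (1 + t + y + 2 * i)‖ ≤ 11 / 10 := by
    convert norm_sub_div_add_le h (p := 2 * i + 1) (by linarith) using 3 <;> push_cast <;> ring
  have even_le : ‖(y - t - 2 * i - 2) / (2 + t + y + 2 * i)‖ ≤ 11 / 10 := by
    convert norm_sub_div_add_le h (p := 2 * i + 2) (by linarith) using 3 <;> push_cast <;> ring
  obtain ⟨first_le, second_le⟩ := norm_ratio_param_le h.norm_le i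
  simp only [ratio, norm_mul]
  calc _ ≤ (1 / 3 : ℝ) * (6 / 10) * (11 / 10) * (11 / 10) * (11 / 10) * (11 / 10) := by
        gcongr
        exacts [norm_ratio_coeff_le i, norm_ratio_shift_le h i]
    _ ≤ 1 / 2 := by norm_num

theorem geomBounded_product : GeomBounded product := by
  refine ⟨1, 0, zero_le_one, fun t y n h => ?_⟩
  calc ‖product t y n‖ = ∏ i ∈ Finset.range n, ‖ratio t y i‖ := norm_prod _ _
    _ ≤ ∏ _i ∈ Finset.range n, (1 / 2 : ℝ) :=
        Finset.prod_le_prod (fun _ _ => norm_nonneg _) fun i _ => norm_ratio_le h i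
    _ = 1 * ((n : ℝ) + 1) ^ 0 * (1 / 2) ^ n := by simp

theorem polyBounded_prefactor : PolyBounded fun t y n =>
    (y - t) / (1 + t + y + 2 * n) * (1 / ((1 + 2 * t + 2 * n) * (3 * n + 1))) := by
  have quotient : PolyBounded fun t y n => (1 + 2 * t + 2 * n) / (1 + t + y + 2 * n) :=
    (PolyBounded.affine 1 2 2).div
  have inv_param : PolyBounded fun t y n => 1 / (1 + 2 * t + 2 * n) := (PolyBounded.const 1).div
  have inv_index : PolyBounded fun t y n => 1 / (3 * n + 1) := (PolyBounded.const 1).div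
  refine (((PolyBounded.const 1).sub quotient).mul (inv_param.mul inv_index)).congr
    fun t y n h => ?_
  rw [one_sub_div (h.ne_zero n (1 + t + y + 2 * n)), div_mul_div_comm 1, one_mul]
  congr 2
  ring

theorem geomBounded_kernel : GeomBounded kernel := by
  obtain ⟨C, k, hC, norm_le⟩ := geomBounded_product.mul polyBounded_prefactor
  exact ⟨C, k, hC, fun t y n h => by rw [kernel, mul_comm]; exact norm_le t y n h⟩

theorem polyBounded_weightFactor : PolyBounded weightFactor := by
  have first : PolyBounded fun t y n => (1 + 2 * t + 1 * n) / (2 + 2 * t + 2 * n) :=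
    (PolyBounded.affine 1 2 1).div
  have second : PolyBounded fun t y n => (1 + 0 * t + 2 * n) / (3 * n + 2) :=
    (PolyBounded.affine 1 0 2).div
  have third : PolyBounded fun t y n => (3 + 2 * t + 4 * n) / (2 + t + y + 2 * n) :=
    (PolyBounded.affine 3 2 4).div
  refine ((first.mul second).mul (third.sub (PolyBounded.const 1))).congr fun t y n h => ?_
  rw [div_sub_one (h.ne_zero n (2 + t + y + 2 * n)), weightFactor]
  congr 2 <;> ring

theorem polyBounded_weightCofactor_quotient :
    PolyBounded fun t y n => (2 + t + 2 * n - y) / (1 + 2 * y + 2 * n) := by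
  have quotient : PolyBounded fun t y n => (5 / 2 + 1 * t + 3 * n) / (1 + 2 * y + 2 * n) :=
    (PolyBounded.affine (5 / 2) 1 3).div
  refine (quotient.sub (PolyBounded.const (1 / 2))).congr fun t y n h => ?_
  rw [div_sub' (h.ne_zero n (1 + 2 * y + 2 * n))]
  congr 1
  ring

theorem polyBounded_weightCofactor : PolyBounded weightCofactor :=
  (PolyBounded.affine 4 2 4).add (((PolyBounded.const (2 / 3)).mul
    (PolyBounded.affine 5 2 4)).mul polyBounded_weightCofactor_quotient)

theorem polyBounded_weight : PolyBounded weight :=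
  ((PolyBounded.affine 2 2 4).add
    (polyBounded_weightFactor.mul polyBounded_weightCofactor)).congr fun t y n _ => by
      rw [weight]; ring

theorem polyBounded_weightFactorDeriv : PolyBounded weightFactorDeriv := by
  have first : PolyBounded fun t y n => 1 / (2 * n + 1) := (PolyBounded.const 1).div
  have second : PolyBounded fun t y n => 1 / (2 + 2 * t + 2 * n) := (PolyBounded.const 1).div
  exact polyBounded_weightFactor.mul (first.add second)

theorem polyBounded_weightCofactorDeriv : PolyBounded weightCofactorDeriv := by
  have first : PolyBounded fun t y n => (5 + 2 * t + 4 * n) / (3 * (n + 1)) :=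
    (PolyBounded.affine 5 2 4).div
  have second : PolyBounded fun t y n => (4 + 0 * t + 4 * n) / (1 + 2 * y + 2 * n) :=
    (PolyBounded.affine 4 0 4).div
  refine ((first.mul polyBounded_weightCofactor_quotient).mul
    ((PolyBounded.const 1).add second)).congr fun t y n _ => ?_
  rw [weightCofactorDeriv]
  congr 3
  ring

theorem polyBounded_weightDeriv : PolyBounded weightDeriv :=
  (polyBounded_weightFactorDeriv.mul polyBounded_weightCofactor).add
    (polyBounded_weightFactor.mul polyBounded_weightCofactorDeriv)

theorem polyBounded_logDeriv : PolyBounded logDeriv := by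
  have odd : PolyBounded fun t y n => 1 / (2 * n + 1) := (PolyBounded.const 1).div
  have even : PolyBounded fun t y n => 1 / (2 * (n + 1)) := (PolyBounded.const 1).div
  have even_t : PolyBounded fun t y n => 1 / (2 + 2 * t + 2 * n) := (PolyBounded.const 1).div
  have odd_t : PolyBounded fun t y n => 1 / (1 + 2 * t + 2 * n) := (PolyBounded.const 1).div
  have odd_y : PolyBounded fun t y n => 2 / (1 + 2 * y + 2 * n) := (PolyBounded.const 2).div
  exact ((((odd.sub even).add even_t).add odd_t).add odd_y).sum_range.add odd_t

theorem polyBounded_cert : PolyBounded cert := by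
  have first : PolyBounded fun t y n => 1 / (1 - t + y + n) := (PolyBounded.const 1).div
  have second : PolyBounded fun t y n => 1 / (1 + t + y) := (PolyBounded.const 1).div
  have third : PolyBounded fun t y n => (3 / 2 + 1 * t + 2 * n) / (1 + 2 * y) :=
    (PolyBounded.affine (3 / 2) 1 2).div
  refine ((((((PolyBounded.affine 1 0 3).mul (PolyBounded.affine 1 2 4)).mul
    (PolyBounded.affine 1 2 2)).mul first).mul second).mul
    ((PolyBounded.const (1 / 2)).add third)).congr fun t y n h => ?_
  have q_ne := h.ne_zero n (1 - t + y + n)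
  have a_ne := h.ne_zero n (1 + t + y)
  have d_ne := h.ne_zero n (1 + 2 * y)
  have third_eq : 1 / 2 + (3 / 2 + 1 * t + 2 * (n : ℂ)) / (1 + 2 * y) =
      (2 + t + y + 2 * n) / (1 + 2 * y) := by
    rw [eq_div_iff d_ne, add_mul, div_mul_cancel₀ _ d_ne]
    ring
  rw [third_eq, cert]
  field_simp
  ring

theorem polyBounded_certDeriv : PolyBounded certDeriv := by
  have first : PolyBounded fun t y n => 1 / (1 + 2 * t + 2 * n) := (PolyBounded.const 1).div
  have second : PolyBounded fun t y n => 1 / (1 + t + y) := (PolyBounded.const 1).div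
  exact polyBounded_cert.mul (first.neg.add second)

theorem geomBounded_summand : GeomBounded summand := geomBounded_kernel.mul polyBounded_weight

theorem geomBounded_summandDeriv : GeomBounded summandDeriv :=
  geomBounded_kernel.mul ((polyBounded_weight.mul polyBounded_logDeriv).add polyBounded_weightDeriv)

theorem geomBounded_flux : GeomBounded flux := geomBounded_kernel.shift.mul polyBounded_cert

theorem geomBounded_fluxDeriv : GeomBounded fluxDeriv :=
  geomBounded_kernel.shift.mul
    ((polyBounded_cert.mul polyBounded_logDeriv.shift).add polyBounded_certDeriv)

end Bounds

section Limits

variable (t : ℂ) (n : ℕ)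

theorem hasLimAtInfinity_weightFactor : HasLimAtInfinity fun y => weightFactor t y n :=
  (HasLimAtInfinity.const _).mul
    (.of_eq_mobius (1 + t + 2 * n) (-1) (2 + t + 2 * n) one_ne_zero)

theorem hasLimAtInfinity_weightCofactor_quotient :
    HasLimAtInfinity fun y => (2 + t + 2 * n - y) / (1 + 2 * y + 2 * n) :=
  .of_eq_mobius (2 + t + 2 * n) (-1) (1 + 2 * n) two_ne_zero

theorem hasLimAtInfinity_weightCofactor : HasLimAtInfinity fun y => weightCofactor t y n :=
  (HasLimAtInfinity.const _).add
    ((HasLimAtInfinity.const _).mul (hasLimAtInfinity_weightCofactor_quotient t n))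

theorem hasLimAtInfinity_weight : HasLimAtInfinity fun y => weight t y n :=
  (HasLimAtInfinity.const _).add
    ((hasLimAtInfinity_weightFactor t n).mul (hasLimAtInfinity_weightCofactor t n))

theorem hasLimAtInfinity_weightCofactorDeriv :
    HasLimAtInfinity fun y => weightCofactorDeriv t y n :=
  ((HasLimAtInfinity.const _).mul (hasLimAtInfinity_weightCofactor_quotient t n)).mul
    ((HasLimAtInfinity.const _).add
      (.of_eq_mobius (4 * (n + 1)) 0 (1 + 2 * n) two_ne_zero))

theorem hasLimAtInfinity_weightDeriv : HasLimAtInfinity fun y => weightDeriv t y n :=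
  (((hasLimAtInfinity_weightFactor t n).mul (.const _)).mul
    (hasLimAtInfinity_weightCofactor t n)).add
    ((hasLimAtInfinity_weightFactor t n).mul (hasLimAtInfinity_weightCofactorDeriv t n))

theorem hasLimAtInfinity_logDeriv : HasLimAtInfinity fun y => logDeriv t y n :=
  (HasLimAtInfinity.sum (fun i : ℕ => (HasLimAtInfinity.const _).add
    (.of_eq_mobius 2 0 (1 + 2 * i) two_ne_zero)) (Finset.range n)).add (.const _)

theorem hasLimAtInfinity_ratio : HasLimAtInfinity fun y => ratio t y n :=
  (((HasLimAtInfinity.const _).mul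
    (.of_eq_mobius (-t - 2 * n - 1) 1 (1 + t + 2 * n) one_ne_zero)).mul
    (.of_eq_mobius (-t - 2 * n - 2) 1 (2 + t + 2 * n) one_ne_zero)).mul
    (.of_eq_mobius (-t + n + 1) 1 (1 + 2 * n) two_ne_zero)

theorem hasLimAtInfinity_kernel : HasLimAtInfinity fun y => kernel t y n :=
  ((HasLimAtInfinity.of_eq_mobius (-t) 1 (1 + t + 2 * n) one_ne_zero).mul (.const _)).mul
    (HasLimAtInfinity.prod (hasLimAtInfinity_ratio t) _)

theorem hasLimAtInfinity_summand : HasLimAtInfinity fun y => summand t y n :=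
  (hasLimAtInfinity_kernel t n).mul (hasLimAtInfinity_weight t n)

theorem hasLimAtInfinity_summandDeriv : HasLimAtInfinity fun y => summandDeriv t y n :=
  (hasLimAtInfinity_kernel t n).mul
    (((hasLimAtInfinity_weight t n).mul (hasLimAtInfinity_logDeriv t n)).add
      (hasLimAtInfinity_weightDeriv t n))

end Limits

section Sums

/-- The sum of the major family over `n`. -/
noncomputable def sum (t y : ℂ) : ℂ := ∑' n, summand t y n

/-- The `s`-derivative of `sum`. -/
noncomputable def sumDeriv (t y : ℂ) : ℂ := ∑' n, summandDeriv t y n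

variable {t y e : ℂ}

theorem flux_zero (h : Near t y) : flux t y 0 = gap t y := by
  have q_ne := h.ne_zero 0 (1 - t + y)
  have a₁_ne := h.ne_zero 0 (1 + t + y)
  have a₂_ne := h.ne_zero 0 (2 + t + y)
  have := h.ne_zero 0 (1 + 2 * t)
  have d_ne := h.ne_zero 0 (1 + 2 * y)
  simp only [flux, kernel, cert, gap, product, Finset.range_zero, Finset.prod_empty,
    Nat.cast_zero, mul_zero, add_zero, zero_add, mul_one]
  rw [show 1 + t + (y + 1) = 2 + t + y by ring, show y + 1 - t = 1 - t + y by ring,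
    div_sub_div _ _ d_ne a₁_ne]
  generalize d_eq : 1 + 2 * y = d at *
  field_simp
  rw [← d_eq]
  ring

theorem fluxDeriv_zero (h : Near t y) : fluxDeriv t y 0 = gap t y / (1 + t + y) := by
  rw [← flux_zero h]
  simp only [fluxDeriv, flux, certDeriv, logDeriv, Finset.range_zero, Finset.sum_empty,
    Nat.cast_zero, mul_zero, add_zero, zero_add]
  ring

theorem sum_succ (h : Near t y) : sum t (y + 1) = sum t y + gap t y := by
  have summable := geomBounded_summand.summable h
  have summable_succ := geomBounded_summand.summable h.succ
  have telescoped := tsum_eq_of_telescoping (summable.sub summable_succ)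
    (summand_sub_summand_succ h) (geomBounded_flux.tendsto_zero h)
  rw [summable.tsum_sub summable_succ, flux_zero h] at telescoped
  rw [sum, sum]
  linear_combination -telescoped

theorem sumDeriv_succ (h : Near t y) :
    sumDeriv t (y + 1) = sumDeriv t y - gap t y * sum t y + gap t y / (1 + t + y) := by
  have summable := geomBounded_summandDeriv.summable h
  have summable_succ := geomBounded_summandDeriv.summable h.succ
  have summable_gap := (geomBounded_summand.summable h).mul_left (gap t y)
  have telescoped := tsum_eq_of_telescoping ((summable.sub summable_succ).sub summable_gap)
    (fun n => sub_eq_of_eq_add' (summandDeriv_sub_summandDeriv_succ h n))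
    (geomBounded_fluxDeriv.tendsto_zero h)
  rw [(summable.sub summable_succ).tsum_sub summable_gap, summable.tsum_sub summable_succ,
    fluxDeriv_zero h, tsum_mul_left] at telescoped
  rw [sumDeriv, sumDeriv, sum]
  linear_combination -telescoped

theorem sum_self (t : ℂ) : sum t t = 0 := by simp [sum, summand, kernel]

theorem sumDeriv_self (t : ℂ) : sumDeriv t t = 0 := by simp [sumDeriv, summandDeriv, kernel]

theorem tendsto_sum_gap_sub (ht : ‖t‖ ≤ 1 / 100) (he : ‖e‖ ≤ 1 / 100) :
    Tendsto (fun N => ∑ j ∈ Finset.range N, (gap t (e + j) - gap t (t + j))) atTop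
      (𝓝 (-sum t e)) := by
  obtain ⟨L, hL⟩ := geomBounded_summand.exists_tendsto_tsum hasLimAtInfinity_summand ht
  simpa only [sum_self, zero_sub] using
    tendsto_sum_increment_sub (S := sum t) (q := gap t)
      (fun j => sum_succ (Near.add_natCast ht he j))
      (fun j => sum_succ (Near.add_natCast ht ht j)) (hL e he) (hL t ht)

/-- The increment in `y` of `sumDeriv + sum ^ 2 / 2`: completing the square removes the
product `gap * sum` from the recurrence for `sumDeriv`. -/
noncomputable def gapSq (t y : ℂ) : ℂ := (4 / (1 + 2 * y) ^ 2 - 1 / (1 + t + y) ^ 2) / 2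

theorem sumDeriv_add_sq_succ (h : Near t y) :
    sumDeriv t (y + 1) + sum t (y + 1) ^ 2 / 2 =
      sumDeriv t y + sum t y ^ 2 / 2 + gapSq t y := by
  have a_ne := h.ne_zero 0 (1 + t + y)
  have d_ne := h.ne_zero 0 (1 + 2 * y)
  have gap_eq : gap t y / (1 + t + y) + gap t y ^ 2 / 2 = gapSq t y := by
    rw [gap, gapSq]
    field_simp
    ring
  rw [sum_succ h, sumDeriv_succ h, ← gap_eq]
  ring

theorem tendsto_sum_gapSq_sub (ht : ‖t‖ ≤ 1 / 100) (he : ‖e‖ ≤ 1 / 100) :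
    Tendsto (fun N => ∑ j ∈ Finset.range N, (gapSq t (e + j) - gapSq t (t + j))) atTop
      (𝓝 (-(sumDeriv t e + sum t e ^ 2 / 2))) := by
  obtain ⟨L, hL⟩ := geomBounded_summand.exists_tendsto_tsum hasLimAtInfinity_summand ht
  obtain ⟨L', hL'⟩ :=
    geomBounded_summandDeriv.exists_tendsto_tsum hasLimAtInfinity_summandDeriv ht
  have limit (x : ℂ) (hx : ‖x‖ ≤ 1 / 100) :=
    (hL' x hx).add (((hL x hx).pow 2).div_const 2)
  simpa [sum_self, sumDeriv_self] using
    tendsto_sum_increment_sub (S := fun y => sumDeriv t y + sum t y ^ 2 / 2) (q := gapSq t)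
      (fun j => sumDeriv_add_sq_succ (Near.add_natCast ht he j))
      (fun j => sumDeriv_add_sq_succ (Near.add_natCast ht ht j)) (limit e he) (limit t ht)

end Sums

end Major

namespace Minor

section Definitions

/-- The ratio of consecutive factors of the hypergeometric product in `kernel`. -/
noncomputable def ratio (t y : ℂ) (i : ℕ) : ℂ :=
  -((i + 1) * (i + 1 + 2 * t) / (3 * (3 * i + 2) * (3 * i + 1))) *
    ((1 - t + i) / (1 + 2 * t + 2 * i)) *
    ((1 + 2 * y + i) / (1 + y + i)) * ((1 - 2 * y + 2 * i) / (1 + t + y + i))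

/-- The hypergeometric product from which the kernel of the minor family is built. -/
noncomputable def product (t y : ℂ) (n : ℕ) : ℂ := ∏ i ∈ Finset.range n, ratio t y i

/-- The hypergeometric kernel of the minor family. -/
noncomputable def kernel (t y : ℂ) (n : ℕ) : ℂ :=
  (1 + 2 * y + n) / (1 + t + y + n) * (1 / (2 * (3 * n + 1))) * product t y n

/-- The rational weight multiplying `kernel`. -/
noncomputable def weight (t y : ℂ) (n : ℕ) : ℂ :=
  (3 * (3 * n + 2) * (4 * n + 3) - (4 + y + 5 * n) * (7 + 2 * t + 10 * n)) / (1 + y + n) *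
    (1 / (3 * (3 * n + 2) * (1 + 2 * t + 2 * n)))

/-- The WZ certificate. -/
noncomputable def cert (y : ℂ) (n : ℕ) : ℂ :=
  (3 * n + 1) / (2 * (1 + y + n) * (1 + 2 * y - 2 * n))

/-- The first member of the minor WZ pair. -/
noncomputable def summand (t y : ℂ) (n : ℕ) : ℂ := kernel t y n * weight t y n

/-- The second member of the minor WZ pair. -/
noncomputable def flux (t y : ℂ) (n : ℕ) : ℂ := kernel t y n * cert y n

/-- The ratio `kernel t (y + 1) n / kernel t y n`. -/
noncomputable def shiftRatio (t y : ℂ) (n : ℕ) : ℂ :=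
  (2 + 2 * y + n) * (3 + 2 * y + n) * (1 + t + y) /
    ((2 + t + y + n) * (2 * (1 + y + n)) * (1 + 2 * y - 2 * n))

/-- The ratio `kernel t y (n + 1) / kernel t y n`. -/
noncomputable def succRatio (t y : ℂ) (n : ℕ) : ℂ :=
  -((n + 1) * (n + 1 + 2 * t) * (1 - t + n) * (2 + 2 * y + n) * (1 - 2 * y + 2 * n)) /
    (3 * (3 * n + 2) * (3 * n + 4) * (1 + 2 * t + 2 * n) * (1 + y + n) * (2 + t + y + n))

/-- The ratio `flux t y (n + 1) / kernel t y n`. -/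
noncomputable def fluxRatio (t y : ℂ) (n : ℕ) : ℂ :=
  (n + 1) * (n + 1 + 2 * t) * (1 - t + n) * (2 + 2 * y + n) /
    (6 * (3 * n + 2) * (1 + 2 * t + 2 * n) * (1 + y + n) * (2 + t + y + n) * (2 + y + n))

end Definitions

section WZPair

variable {t y : ℂ}

theorem le_norm_odd (h : Near t y) (n : ℕ) : 9 / 10 ≤ ‖1 + 2 * y - 2 * n‖ := by
  obtain ⟨j, hj⟩ := h.exists_nat
  have one_le : (1 : ℝ) ≤ |1 + 2 * (j : ℝ) - 2 * n| := by
    exact_mod_cast Int.one_le_abs (show 1 + 2 * (j : ℤ) - 2 * n ≠ 0 by omega)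
  have split : ((1 + 2 * j - 2 * n : ℝ) : ℂ) = 1 + 2 * y - 2 * n - 2 * (y - j) := by
    push_cast
    ring
  have triangle := norm_sub_le (1 + 2 * y - 2 * (n : ℂ)) (2 * (y - j))
  rw [← split, Complex.norm_real, Real.norm_eq_abs, norm_mul, Complex.norm_ofNat] at triangle
  linarith

theorem odd_ne_zero (h : Near t y) (n : ℕ) : 1 + 2 * y - 2 * n ≠ 0 :=
  norm_pos_iff.1 (lt_of_lt_of_le (by norm_num) (le_norm_odd h n))

theorem odd_sub_two_ne_zero (h : Near t y) (n : ℕ) : 2 * y - 1 - 2 * n ≠ 0 := by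
  convert odd_ne_zero h (n + 1) using 1
  push_cast
  ring

theorem kernel_succ (h : Near t y) (n : ℕ) :
    kernel t y (n + 1) = kernel t y n * succRatio t y n := by
  have a_ne := h.ne_zero n (1 + t + y + n)
  have c₁_ne := h.ne_zero n (3 * n + 1)
  have c₂_ne := h.ne_zero n (3 * n + 2)
  simp only [kernel, product, Finset.prod_range_succ]
  generalize ∏ i ∈ Finset.range n, ratio t y i = P
  simp only [succRatio, ratio]
  push_cast
  rw [show 1 + t + y + (n + 1 : ℂ) = 2 + t + y + n by ring,
    show 1 + 2 * y + (n + 1 : ℂ) = 2 + 2 * y + n by ring,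
    show 3 * (n + 1 : ℂ) + 1 = 3 * n + 4 by ring]
  generalize (1 + t + y + n : ℂ) = a, (3 * n + 1 : ℂ) = c₁, (3 * n + 2 : ℂ) = c₂,
    (1 + 2 * y + n : ℂ) = d, (2 + t + y + n : ℂ) = a₂, (2 + 2 * y + n : ℂ) = d₂,
    (3 * n + 4 : ℂ) = c₄, (1 + 2 * t + 2 * n : ℂ) = b, (1 + y + n : ℂ) = y₁,
    (1 - 2 * y + 2 * n : ℂ) = o, (n + 1 + 2 * t : ℂ) = f, (1 - t + n : ℂ) = g at *
  field_simp

theorem shiftRatio_succ_mul (h : Near t y) (n : ℕ) :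
    succRatio t y n * shiftRatio t y (n + 1) = shiftRatio t y n * succRatio t (y + 1) n := by
  have a₂_ne := h.ne_zero n (2 + t + y + n)
  have a₃_ne := h.ne_zero n (3 + t + y + n)
  have b_ne := h.ne_zero n (1 + 2 * t + 2 * n)
  have y₁_ne := h.ne_zero n (1 + y + n)
  have y₂_ne := h.ne_zero n (2 + y + n)
  have c₂_ne := h.ne_zero n (3 * n + 2)
  have c₄_ne := h.ne_zero n (3 * n + 4)
  have o₁_ne := odd_ne_zero h n
  have o₂_ne := odd_sub_two_ne_zero h n
  simp only [succRatio, shiftRatio]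
  push_cast
  rw [show 1 + (y + 1) + (n : ℂ) = 2 + y + n by ring,
    show 2 + t + (y + 1) + (n : ℂ) = 3 + t + y + n by ring,
    show 2 + t + y + (n + 1 : ℂ) = 3 + t + y + n by ring,
    show 1 + y + (n + 1 : ℂ) = 2 + y + n by ring,
    show 1 + 2 * y - 2 * (n + 1 : ℂ) = 2 * y - 1 - 2 * n by ring,
    show 2 + 2 * y + (n + 1 : ℂ) = 3 + 2 * y + n by ring,
    show 3 + 2 * y + (n + 1 : ℂ) = 4 + 2 * y + n by ring,
    show 2 + 2 * (y + 1) + (n : ℂ) = 4 + 2 * y + n by ring,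
    show 1 - 2 * (y + 1) + 2 * (n : ℂ) = -(1 + 2 * y - 2 * n) by ring,
    show 1 - 2 * y + 2 * (n : ℂ) = -(2 * y - 1 - 2 * n) by ring]
  generalize (2 + t + y + n : ℂ) = a₂, (3 + t + y + n : ℂ) = a₃, (1 + 2 * t + 2 * n : ℂ) = b,
    (1 + y + n : ℂ) = y₁, (2 + y + n : ℂ) = y₂, (3 * n + 2 : ℂ) = c₂, (3 * n + 4 : ℂ) = c₄,
    (1 + 2 * y - 2 * n : ℂ) = o₁, (2 * y - 1 - 2 * n : ℂ) = o₂,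
    (1 + t + y : ℂ) = a₁, (3 + 2 * y + n : ℂ) = d₃, (2 + 2 * y + n : ℂ) = d₂,
    (4 + 2 * y + n : ℂ) = d₄, (n + 1 + 2 * t : ℂ) = f, (1 - t + n : ℂ) = g at *
  field_simp

theorem kernel_shift (h : Near t y) (n : ℕ) :
    kernel t (y + 1) n = kernel t y n * shiftRatio t y n := by
  induction n with
  | zero =>
    have a₁_ne := h.ne_zero 0 (1 + t + y)
    have a₂_ne := h.ne_zero 0 (2 + t + y)
    have y_ne := h.ne_zero 0 (1 + y)
    have d_ne := h.ne_zero 0 (1 + 2 * y)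
    simp only [kernel, product, shiftRatio, Finset.range_zero, Finset.prod_empty,
      Nat.cast_zero, mul_zero, add_zero, sub_zero, mul_one, zero_add]
    rw [show 1 + t + (y + 1) = 2 + t + y by ring, show 2 + 2 * y = 2 * (1 + y) by ring,
      show 1 + 2 * (y + 1) = 3 + 2 * y by ring]
    generalize 1 + t + y = a₁, 2 + t + y = a₂, 1 + y = y₁, 1 + 2 * y = d at *
    field_simp
  | succ n ih =>
    rw [kernel_succ h, kernel_succ h.succ, ih, mul_assoc, mul_assoc, shiftRatio_succ_mul h]

theorem flux_succ (h : Near t y) (n : ℕ) :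
    flux t y (n + 1) = kernel t y n * fluxRatio t y n := by
  have c₄_ne := h.ne_zero n (3 * n + 4)
  have o₂_ne := odd_sub_two_ne_zero h n
  rw [flux, kernel_succ h, mul_assoc]
  congr 1
  simp only [succRatio, cert, fluxRatio]
  push_cast
  rw [show 1 + y + (n + 1 : ℂ) = 2 + y + n by ring,
    show 1 + 2 * y - 2 * (n + 1 : ℂ) = 2 * y - 1 - 2 * n by ring,
    show 1 - 2 * y + 2 * (n : ℂ) = -(2 * y - 1 - 2 * n) by ring,
    show 3 * (n + 1 : ℂ) + 1 = 3 * n + 4 by ring]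
  generalize (2 * y - 1 - 2 * n : ℂ) = o₂, (3 * n + 4 : ℂ) = c₄ at *
  field_simp
  ring

theorem shiftRatio_mul_weight_sub (h : Near t y) (n : ℕ) :
    shiftRatio t y n * weight t (y + 1) n - weight t y n = fluxRatio t y n - cert y n := by
  have a₂_ne := h.ne_zero n (2 + t + y + n)
  have b_ne := h.ne_zero n (1 + 2 * t + 2 * n)
  have y₁_ne := h.ne_zero n (1 + y + n)
  have y₂_ne := h.ne_zero n (2 + y + n)
  have c₂_ne := h.ne_zero n (3 * n + 2)
  have o₁_ne := odd_ne_zero h n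
  simp only [shiftRatio, weight, fluxRatio, cert]
  rw [show 1 + (y + 1) + (n : ℂ) = 2 + y + n by ring]
  generalize a₂_eq : (2 + t + y + n : ℂ) = a₂, b_eq : (1 + 2 * t + 2 * n : ℂ) = b,
    y₁_eq : (1 + y + n : ℂ) = y₁, y₂_eq : (2 + y + n : ℂ) = y₂, c₂_eq : (3 * n + 2 : ℂ) = c₂,
    o₁_eq : (1 + 2 * y - 2 * n : ℂ) = o₁ at *
  field_simp
  subst a₂_eq b_eq y₁_eq y₂_eq c₂_eq o₁_eq
  ring

theorem summand_succ_sub_summand (h : Near t y) (n : ℕ) :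
    summand t (y + 1) n - summand t y n = flux t y (n + 1) - flux t y n := by
  rw [flux_succ h, summand, summand, flux, kernel_shift h]
  linear_combination kernel t y n * shiftRatio_mul_weight_sub h n

end WZPair

section Bounds

variable {t y : ℂ}

theorem norm_ratio_coeff_le (ht : ‖t‖ ≤ 1 / 100) (i : ℕ) :
    ‖-((i + 1) * (i + 1 + 2 * t) / (3 * (3 * i + 2) * (3 * i + 1)) : ℂ)‖ ≤
      1 / 20 * ((3 * i + 4) / (3 * i + 1)) := by
  have : (0 : ℝ) ≤ i := i.cast_nonneg
  have norm_succ : ‖(i : ℂ) + 1‖ = i + 1 := by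
    rw [← Nat.cast_add_one, Complex.norm_natCast, Nat.cast_add_one]
  have norm_den : ‖(3 * (3 * i + 2) * (3 * i + 1) : ℂ)‖ = 3 * (3 * i + 2) * (3 * i + 1) := by
    exact_mod_cast Complex.norm_natCast (3 * (3 * i + 2) * (3 * i + 1))
  have norm_add_two_mul : ‖(i : ℂ) + 1 + 2 * t‖ ≤ (i + 1) * (51 / 50) := by
    calc ‖(i : ℂ) + 1 + 2 * t‖ ≤ ‖(i : ℂ) + 1‖ + ‖2 * t‖ := norm_add_le _ _
      _ ≤ (i + 1) * (51 / 50) := by rw [norm_succ, norm_mul, Complex.norm_ofNat]; linarith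
  rw [norm_neg, norm_div, norm_mul, norm_succ, norm_den, div_le_iff₀ (by positivity)]
  calc ((i : ℝ) + 1) * ‖(i : ℂ) + 1 + 2 * t‖ ≤ (i + 1) * ((i + 1) * (51 / 50)) := by gcongr
    _ ≤ 1 / 20 * (3 * i + 4) * (3 * (3 * i + 2)) := by nlinarith
    _ = 1 / 20 * ((3 * i + 4) / (3 * i + 1)) * (3 * (3 * i + 2) * (3 * i + 1)) := by field_simp

theorem norm_ratio_param_le (ht : ‖t‖ ≤ 1 / 100) (i : ℕ) :
    ‖(1 - t + i) / (1 + 2 * t + 2 * i)‖ ≤ 11 / 10 := by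
  have : (0 : ℝ) ≤ i := i.cast_nonneg
  have re_ge := (abs_le.1 ((Complex.abs_re_le_norm t).trans ht)).1
  refine norm_div_le_of_norm_sub_le (a := 1 + i) (b := 1 + 2 * i - 2 / 100) (e := 1 / 100)
    ?_ (by simp; linarith) (by linarith) (by rw [abs_of_nonneg] <;> linarith)
  rwa [show 1 - t + (i : ℂ) - ((1 + i : ℝ) : ℂ) = -t by push_cast; ring, norm_neg]

theorem norm_ratio_shift_le (h : Near t y) (i : ℕ) :
    ‖(1 + 2 * y + i) / (1 + y + i)‖ ≤ 21 / 10 ∧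
      ‖(1 - 2 * y + 2 * i) / (1 + t + y + i)‖ ≤ 21 / 10 := by
  obtain ⟨j, norm_sub_le, re_ge⟩ := h.exists_nat_sub_le_re
  have t_re_ge := (abs_le.1 h.abs_re_le).1
  have : (0 : ℝ) ≤ i := i.cast_nonneg
  have : (0 : ℝ) ≤ j := j.cast_nonneg
  have norm_two_mul : ‖2 * (y - j)‖ ≤ 2 / 100 := by rw [norm_mul, Complex.norm_ofNat]; linarith
  constructor
  · refine norm_div_le_of_norm_sub_le (a := 1 + 2 * j + i) (b := 1 + j + i - 1 / 100)
      (e := 2 / 100) ?_ (by simp; linarith) (by linarith) (by rw [abs_of_nonneg] <;> linarith)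
    rwa [show 1 + 2 * y + i - ((1 + 2 * j + i : ℝ) : ℂ) = 2 * (y - j) by push_cast; ring]
  · refine norm_div_le_of_norm_sub_le (a := 1 - 2 * j + 2 * i) (b := 1 + j + i - 2 / 100)
      (e := 2 / 100) ?_ (by simp; linarith) (by linarith)
      (by cases abs_cases (1 - 2 * (j : ℝ) + 2 * i) <;> linarith)
    rwa [show 1 - 2 * y + 2 * i - ((1 - 2 * j + 2 * i : ℝ) : ℂ) = -(2 * (y - j)) by
      push_cast; ring, norm_neg]

theorem norm_ratio_le (h : Near t y) (i : ℕ) :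
    ‖ratio t y i‖ ≤ 1 / 2 * ((3 * i + 4) / (3 * i + 1)) := by
  obtain ⟨first_le, second_le⟩ := norm_ratio_shift_le h i
  simp only [ratio, norm_mul]
  calc _ ≤ (1 / 20 * ((3 * i + 4) / (3 * i + 1)) : ℝ) * (11 / 10) * (21 / 10) * (21 / 10) := by
        gcongr
        exacts [norm_ratio_coeff_le h.norm_le i, norm_ratio_param_le h.norm_le i]
    _ = (1 / 20 * (11 / 10) * (21 / 10) * (21 / 10)) * ((3 * i + 4) / (3 * i + 1)) := by ring
    _ ≤ 1 / 2 * ((3 * i + 4) / (3 * i + 1)) := by gcongr; norm_num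

theorem geomBounded_product : GeomBounded product := by
  have prod_eq (n : ℕ) : ∏ i ∈ Finset.range n, (1 / 2 * ((3 * (i : ℝ) + 4) / (3 * i + 1))) =
      (3 * n + 1) * (1 / 2) ^ n := by
    induction n with
    | zero => simp
    | succ n ih =>
      rw [Finset.prod_range_succ, ih]
      push_cast
      field_simp
      ring
  refine ⟨3, 1, by norm_num, fun t y n h => ?_⟩
  calc ‖product t y n‖ = ∏ i ∈ Finset.range n, ‖ratio t y i‖ := norm_prod _ _
    _ ≤ ∏ i ∈ Finset.range n, (1 / 2 * ((3 * (i : ℝ) + 4) / (3 * i + 1))) :=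
        Finset.prod_le_prod (fun _ _ => norm_nonneg _) fun i _ => norm_ratio_le h i
    _ = (3 * n + 1) * (1 / 2) ^ n := prod_eq n
    _ ≤ 3 * ((n : ℝ) + 1) ^ 1 * (1 / 2) ^ n := by gcongr; linarith

theorem polyBounded_prefactor : PolyBounded fun t y n =>
    (1 + 2 * y + n) / (1 + t + y + n) * (1 / (2 * (3 * n + 1))) := by
  have quotient : PolyBounded fun t y n => (1 + 2 * t + 1 * n) / (1 + t + y + n) :=
    (PolyBounded.affine 1 2 1).div
  have inv_index : PolyBounded fun t y n => 1 / (2 * (3 * n + 1)) := (PolyBounded.const 1).div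
  refine (((PolyBounded.const 2).sub quotient).mul inv_index).congr fun t y n h => ?_
  rw [sub_div' (h.ne_zero n (1 + t + y + n))]
  congr 2
  ring

theorem geomBounded_kernel : GeomBounded kernel := by
  obtain ⟨C, k, hC, norm_le⟩ := geomBounded_product.mul polyBounded_prefactor
  exact ⟨C, k, hC, fun t y n h => by rw [kernel, mul_comm]; exact norm_le t y n h⟩

theorem polyBounded_weight : PolyBounded weight := by
  have quotient : PolyBounded fun t y n =>
      (3 + 0 * t + 4 * n) * (-1 + -2 * t + -1 * n) / (1 + y + n) :=
    ((PolyBounded.affine 3 0 4).mul (PolyBounded.affine (-1) (-2) (-1))).div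
  have inv_index : PolyBounded fun t y n => 1 / (3 * (3 * n + 2)) := (PolyBounded.const 1).div
  have inv_param : PolyBounded fun t y n => 1 / (1 + 2 * t + 2 * n) := (PolyBounded.const 1).div
  refine ((quotient.sub (PolyBounded.affine 7 2 10)).mul (inv_index.mul inv_param)).congr
    fun t y n h => ?_
  rw [div_sub' (h.ne_zero n (1 + y + n)), div_mul_div_comm 1, one_mul, weight]
  congr 2
  ring

theorem polyBounded_cert : PolyBounded fun _ y n => cert y n := by
  have first : PolyBounded fun t y n => (1 + 0 * t + 3 * n) / (2 * (1 + y + n)) :=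
    (PolyBounded.affine 1 0 3).div
  refine (first.mul (PolyBounded.inv (by norm_num) fun t y n h => le_norm_odd h n)).congr
    fun t y n _ => ?_
  rw [cert, ← div_eq_mul_inv, div_div]
  congr 1
  ring

theorem geomBounded_summand : GeomBounded summand := geomBounded_kernel.mul polyBounded_weight

theorem geomBounded_flux : GeomBounded flux := geomBounded_kernel.mul polyBounded_cert

theorem hasLimAtInfinity_ratio (t : ℂ) (n : ℕ) : HasLimAtInfinity fun y => ratio t y n :=
  ((HasLimAtInfinity.const _).mul (.of_eq_mobius (1 + n) 2 (1 + n) one_ne_zero)).mul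
    (.of_eq_mobius (1 + 2 * n) (-2) (1 + t + n) one_ne_zero)

theorem hasLimAtInfinity_summand (t : ℂ) (n : ℕ) : HasLimAtInfinity fun y => summand t y n :=
  (((HasLimAtInfinity.of_eq_mobius (1 + n) 2 (1 + t + n) one_ne_zero).mul (.const _)).mul
    (HasLimAtInfinity.prod (hasLimAtInfinity_ratio t) _)).mul
  ((HasLimAtInfinity.of_eq_mobius
    (3 * (3 * n + 2) * (4 * n + 3) - (4 + 5 * n) * (7 + 2 * t + 10 * n))
    (-(7 + 2 * t + 10 * n)) (1 + n) one_ne_zero).mul (.const _))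

end Bounds

section Sums

/-- The sum of the minor family over `n`. -/
noncomputable def sum (t y : ℂ) : ℂ := ∑' n, summand t y n

/-- The decrement `sum t y - sum t (y + 1)`. -/
noncomputable def gap (t y : ℂ) : ℂ := 1 / (4 * ((1 + y) * (1 + t + y)))

variable {t y e e' : ℂ}

theorem flux_zero (h : Near t y) : flux t y 0 = gap t y := by
  have y_ne := h.ne_zero 0 (1 + y)
  have a_ne := h.ne_zero 0 (1 + t + y)
  have d_ne := h.ne_zero 0 (1 + 2 * y)
  simp only [flux, kernel, product, cert, gap, Finset.range_zero, Finset.prod_empty,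
    Nat.cast_zero, mul_zero, add_zero, zero_add, mul_one, sub_zero]
  generalize 1 + 2 * y = d at *
  field_simp
  norm_num

theorem sum_succ (h : Near t y) : sum t (y + 1) = sum t y + -gap t y := by
  have summable := geomBounded_summand.summable h
  have summable_succ := geomBounded_summand.summable h.succ
  have telescoped := tsum_eq_of_telescoping (summable_succ.sub summable)
    (summand_succ_sub_summand h) (geomBounded_flux.tendsto_zero h)
  rw [summable_succ.tsum_sub summable, flux_zero h] at telescoped
  rw [sum, sum]
  linear_combination telescoped

theorem tendsto_sum_gap_sub (ht : ‖t‖ ≤ 1 / 100) (he : ‖e‖ ≤ 1 / 100) (he' : ‖e'‖ ≤ 1 / 100) :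
    Tendsto (fun N => ∑ j ∈ Finset.range N, (gap t (e' + j) - gap t (e + j))) atTop
      (𝓝 (sum t e' - sum t e)) := by
  obtain ⟨L, hL⟩ := geomBounded_summand.exists_tendsto_tsum hasLimAtInfinity_summand ht
  simpa only [neg_sub_neg] using
    tendsto_sum_increment_sub (S := sum t) (q := fun y => -gap t y)
      (fun j => sum_succ (Near.add_natCast ht he j))
      (fun j => sum_succ (Near.add_natCast ht he' j)) (hL e he) (hL e' he')

end Sums

end Minor

section CommonLimit

/-- The common value at `t = y = 0` of the hypergeometric products of the two families. -/
noncomputable def baseProduct (n : ℕ) : ℂ :=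
  ∏ i ∈ Finset.range n, -((i + 1) ^ 2 / (3 * (3 * i + 2) * (3 * i + 1)) : ℂ)

/-- The harmonic sum `∑ 1 / (i + 1) ^ k` over `i < n`. -/
noncomputable def harmonicSum (k n : ℕ) : ℂ := ∑ i ∈ Finset.range n, 1 / (i + 1 : ℂ) ^ k

/-- The odd harmonic sum `∑ 1 / (2 * i + 1) ^ k` over `i < n`. -/
noncomputable def oddHarmonicSum (k n : ℕ) : ℂ := ∑ i ∈ Finset.range n, 1 / (2 * i + 1 : ℂ) ^ k

theorem add_one_ne_zero (n : ℕ) : (n + 1 : ℂ) ≠ 0 := by exact_mod_cast n.succ_ne_zero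

theorem two_mul_add_one_ne_zero (n : ℕ) : (2 * n + 1 : ℂ) ≠ 0 := by
  exact_mod_cast (2 * n).succ_ne_zero

theorem three_mul_add_one_ne_zero (n : ℕ) : (3 * n + 1 : ℂ) ≠ 0 := by
  exact_mod_cast (3 * n).succ_ne_zero

theorem three_mul_add_two_ne_zero (n : ℕ) : (3 * n + 2 : ℂ) ≠ 0 := by
  exact_mod_cast (3 * n + 1).succ_ne_zero

theorem HasLogCubicJet.prod_range_harmonic {F : ℕ → ℂ → ℂ} {l a₂ b₂ a₃ b₃ : ℂ} (n : ℕ)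
    (h : ∀ i, HasLogCubicJet (F i) (-((i + 1) ^ 2 / (3 * (3 * i + 2) * (3 * i + 1)) : ℂ))
      (l * (1 / (2 * i + 1) ^ 1)) (a₂ * (1 / (i + 1) ^ 2) + b₂ * (1 / (2 * i + 1) ^ 2))
      (a₃ * (1 / (i + 1) ^ 3) + b₃ * (1 / (2 * i + 1) ^ 3))) :
    HasLogCubicJet (fun x => ∏ i ∈ Finset.range n, F i x) (baseProduct n)
      (l * oddHarmonicSum 1 n) (a₂ * harmonicSum 2 n + b₂ * oddHarmonicSum 2 n)
      (a₃ * harmonicSum 3 n + b₃ * oddHarmonicSum 3 n) := by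
  refine (HasLogCubicJet.prod _ h).of_eq rfl ?_ ?_ ?_ <;>
    simp only [harmonicSum, oddHarmonicSum, Finset.mul_sum, Finset.sum_add_distrib]

end CommonLimit

namespace Major

section Jets

theorem hasLogCubicJet_ratio (α β : ℂ) (i : ℕ) :
    HasLogCubicJet (fun x => ratio (α * x) (-(β * x)) i)
      (-((i + 1) ^ 2 / (3 * (3 * i + 2) * (3 * i + 1))))
      (4 * (β - α) * (1 / (2 * i + 1) ^ 1))
      (-(4 * α ^ 2 + 3 * α * β + β ^ 2) / 2 * (1 / (i + 1) ^ 2) +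
        (4 * β ^ 2 - 4 * α * β) / 2 * (1 / (2 * i + 1) ^ 2))
      ((7 * α ^ 3 - 7 / 8 * (α + β) ^ 3 - (α - β) ^ 3 / 8) / 3 * (1 / (i + 1) ^ 3) +
        ((α + β) ^ 3 - (α - β) ^ 3 - 16 * α ^ 3 + 8 * β ^ 3) / 3 * (1 / (2 * i + 1) ^ 3)) := by
  have hu := add_one_ne_zero i
  have hv := two_mul_add_one_ne_zero i
  have := three_mul_add_one_ne_zero i
  have := three_mul_add_two_ne_zero i
  have hu2 : (2 * (i + 1) : ℂ) ≠ 0 := mul_ne_zero two_ne_zero hu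
  refine ((((((HasLogCubicJet.const (-((2 * i + 1) * (2 * i + 2) /
      (3 * (3 * i + 2) * (3 * i + 1)) : ℂ))).mul
    (.linear_div_linear (fun x => 1 + 2 * (α * x) + i) (fun x => 2 + 2 * (α * x) + 2 * i)
      (2 * α) (2 * α) hu hu2)).mul
    (.linear_div_linear (fun x => 1 - 2 * (α * x) + 2 * i) (fun x => 1 + 2 * (α * x) + 2 * i)
      (-2 * α) (2 * α) hv hv)).mul
    (.linear_div_linear (fun x => -(β * x) - α * x - 2 * i - 1)
      (fun x => 1 + α * x + -(β * x) + 2 * i) (-(α + β)) (α - β) (neg_ne_zero.2 hv) hv)).mul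
    (.linear_div_linear (fun x => -(β * x) - α * x - 2 * i - 2)
      (fun x => 2 + α * x + -(β * x) + 2 * i) (-(α + β)) (α - β) (neg_ne_zero.2 hu2) hu2)).mul
    (.linear_div_linear (fun x => -(β * x) - α * x + i + 1) (fun x => 1 + 2 * -(β * x) + 2 * i)
      (-(α + β)) (-2 * β) hu hv)).of_eq ?_ ?_ ?_ ?_
  all_goals
    field_simp
    try ring

theorem hasLogCubicJet_product (α β : ℂ) (n : ℕ) :
    HasLogCubicJet (fun x => product (α * x) (-(β * x)) n) (baseProduct n)
      (4 * (β - α) * oddHarmonicSum 1 n)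
      (-(4 * α ^ 2 + 3 * α * β + β ^ 2) / 2 * harmonicSum 2 n +
        (4 * β ^ 2 - 4 * α * β) / 2 * oddHarmonicSum 2 n)
      ((7 * α ^ 3 - 7 / 8 * (α + β) ^ 3 - (α - β) ^ 3 / 8) / 3 * harmonicSum 3 n +
        ((α + β) ^ 3 - (α - β) ^ 3 - 16 * α ^ 3 + 8 * β ^ 3) / 3 * oddHarmonicSum 3 n) :=
  .prod_range_harmonic n (hasLogCubicJet_ratio α β)

theorem hasCubicJet_logDeriv_term (α β : ℂ) (i : ℕ) :
    HasCubicJet (fun x => 1 / (2 * i + 1) - 1 / (2 * (i + 1)) +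
      1 / (2 + 2 * (α * x) + 2 * i) + 1 / (1 + 2 * (α * x) + 2 * i) +
      2 / (1 + 2 * -(β * x) + 2 * i)) (4 * (1 / (2 * i + 1) ^ 1))
      (-α / 2 * (1 / (i + 1) ^ 2) + (4 * β - 2 * α) * (1 / (2 * i + 1) ^ 2))
      (α ^ 2 / 2 * (1 / (i + 1) ^ 3) + (4 * α ^ 2 + 8 * β ^ 2) * (1 / (2 * i + 1) ^ 3))
      (-α ^ 3 / 2 * (1 / (i + 1) ^ 4) + (16 * β ^ 3 - 8 * α ^ 3) * (1 / (2 * i + 1) ^ 4)) := by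
  have hu := add_one_ne_zero i
  have hv := two_mul_add_one_ne_zero i
  have hu2 : (2 * (i + 1) : ℂ) ≠ 0 := mul_ne_zero two_ne_zero hu
  refine ((((HasCubicJet.const (1 / (2 * i + 1) - 1 / (2 * (i + 1)) : ℂ)).add
    (.linear_div_linear (fun _ => 1) (fun x => 2 + 2 * (α * x) + 2 * i) 1 0 (2 * α) hu2)).add
    (.linear_div_linear (fun _ => 1) (fun x => 1 + 2 * (α * x) + 2 * i) 1 0 (2 * α) hv)).add
    (.linear_div_linear (fun _ => 2) (fun x => 1 + 2 * -(β * x) + 2 * i) 2 0 (-2 * β) hv)).of_eq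
    ?_ ?_ ?_ ?_
  all_goals
    field_simp
    try ring

theorem exists_hasCubicJet_logDeriv (α β : ℂ) (n : ℕ) : ∃ d,
    HasCubicJet (fun x => logDeriv (α * x) (-(β * x)) n)
      (4 * oddHarmonicSum 1 n + 1 / (2 * n + 1))
      (-α / 2 * harmonicSum 2 n + (4 * β - 2 * α) * oddHarmonicSum 2 n -
        2 * α / (2 * n + 1) ^ 2)
      (α ^ 2 / 2 * harmonicSum 3 n + (4 * α ^ 2 + 8 * β ^ 2) * oddHarmonicSum 3 n +
        4 * α ^ 2 / (2 * n + 1) ^ 3) d := by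
  have hv := two_mul_add_one_ne_zero n
  refine ⟨_, ((HasCubicJet.sum (Finset.range n) (hasCubicJet_logDeriv_term α β)).add
    (.linear_div_linear (fun _ => 1) (fun x => 1 + 2 * (α * x) + 2 * n) 1 0 (2 * α) hv)).of_eq
    ?_ ?_ ?_ rfl⟩
  · simp only [oddHarmonicSum, Finset.mul_sum]
  all_goals
    simp only [harmonicSum, oddHarmonicSum, Finset.mul_sum, Finset.sum_add_distrib]
    field_simp
    try ring

/-- The rational factor of `kernel`, without the numerator `y - t`. -/
noncomputable def prefactor (t y : ℂ) (n : ℕ) : ℂ :=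
  1 / (1 + t + y + 2 * n) * (1 / ((1 + 2 * t + 2 * n) * (3 * n + 1)))

theorem hasCubicJet_prefactor (α β : ℂ) (n : ℕ) :
    HasCubicJet (fun x => prefactor (α * x) (-(β * x)) n) (1 / ((2 * n + 1) ^ 2 * (3 * n + 1)))
      (-(3 * α - β) / ((2 * n + 1) ^ 3 * (3 * n + 1)))
      ((7 * α ^ 2 - 4 * α * β + β ^ 2) / ((2 * n + 1) ^ 4 * (3 * n + 1)))
      (-(15 * α ^ 3 - 11 * α ^ 2 * β + 5 * α * β ^ 2 - β ^ 3) /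
        ((2 * n + 1) ^ 5 * (3 * n + 1))) := by
  have hv := two_mul_add_one_ne_zero n
  have hw := three_mul_add_one_ne_zero n
  refine ((HasCubicJet.linear_div_linear (fun _ => 1) (fun x => 1 + α * x + -(β * x) + 2 * n) 1 0
      (α - β) hv).mul
    (.linear_div_linear (fun _ => 1) (fun x => (1 + 2 * (α * x) + 2 * n) * (3 * n + 1)) 1 0
      (2 * α * (3 * n + 1)) (mul_ne_zero hv hw))).of_eq ?_ ?_ ?_ ?_
  all_goals
    generalize (2 * n + 1 : ℂ) = v, (3 * n + 1 : ℂ) = w at *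
    field_simp
    try ring

theorem hasCubicJet_weightFactor (α β : ℂ) (n : ℕ) :
    HasCubicJet (fun x => weightFactor (α * x) (-(β * x)) n)
      ((2 * n + 1) ^ 2 / (4 * (n + 1) * (3 * n + 2)))
      ((2 * n + 1) / (3 * n + 2) *
        ((α / 2 + β / 2) / (n + 1) - (α / 8 + β / 8) / (n + 1) ^ 2))
      ((2 * n + 1) / (3 * n + 2) *
        ((-1 / 2 * α ^ 2 + 1 / 4 * α * β + 1 / 4 * β ^ 2) / (n + 1) ^ 2 +
          (5 / 16 * α ^ 2 - 1 / 16 * β ^ 2) / (n + 1) ^ 3))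
      ((2 * n + 1) / (3 * n + 2) *
        ((1 / 2 * α ^ 3 - 5 / 8 * α ^ 2 * β + 1 / 8 * β ^ 3) / (n + 1) ^ 3 +
          (-13 / 32 * α ^ 3 + 5 / 32 * α ^ 2 * β + 1 / 32 * α * β ^ 2 - 1 / 32 * β ^ 3) /
            (n + 1) ^ 4)) := by
  have hu := add_one_ne_zero n
  have hz := three_mul_add_two_ne_zero n
  have hu2 : (2 * (n + 1) : ℂ) ≠ 0 := mul_ne_zero two_ne_zero hu
  refine (((HasCubicJet.linear_div_linear (fun x => 1 + 2 * (α * x) + n)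
      (fun x => 2 + 2 * (α * x) + 2 * n) (n + 1) (2 * α) (2 * α) hu2).mul
    (.const ((1 + 2 * n) / (3 * n + 2) : ℂ))).mul
    (.linear_div_linear (fun x => 1 + α * x + 2 * n - -(β * x))
      (fun x => 2 + α * x + -(β * x) + 2 * n) (2 * n + 1) (α + β) (α - β) hu2)).of_eq ?_ ?_ ?_ ?_
  all_goals
    generalize (n : ℂ) = m at *
    generalize u_eq : m + 1 = u, z_eq : 3 * m + 2 = z at *
    field_simp
    subst u_eq z_eq
    try ring

theorem hasCubicJet_weight_quotient (α β : ℂ) (n : ℕ) :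
    HasCubicJet (fun x => (2 + α * x + 2 * n - -(β * x)) / (1 + 2 * -(β * x) + 2 * n))
      (2 * (n + 1) / (2 * n + 1)) ((α + β + 4 * β * (n + 1) / (2 * n + 1)) / (2 * n + 1))
      (2 * β * (α + β + 4 * β * (n + 1) / (2 * n + 1)) / (2 * n + 1) ^ 2)
      (4 * β ^ 2 * (α + β + 4 * β * (n + 1) / (2 * n + 1)) / (2 * n + 1) ^ 3) := by
  have hv := two_mul_add_one_ne_zero n
  refine (HasCubicJet.linear_div_linear (fun x => 2 + α * x + 2 * n - -(β * x))
    (fun x => 1 + 2 * -(β * x) + 2 * n) (2 * (n + 1)) (α + β) (-2 * β) hv).of_eq rfl ?_ ?_ ?_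
  all_goals
    generalize (n : ℂ) = m at *
    generalize v_eq : 2 * m + 1 = v at *
    field_simp
    subst v_eq
    try ring

theorem hasCubicJet_weightCofactor (α β : ℂ) (n : ℕ) :
    HasCubicJet (fun x => weightCofactor (α * x) (-(β * x)) n)
      (26 / 3 + 20 / 3 * n + 2 / (2 * n + 1))
      (14 / 3 * α + 4 * β + (10 / 3 * α + 26 / 3 * β) / (2 * n + 1) + 4 * β / (2 * n + 1) ^ 2)
      ((4 / 3 * α ^ 2 + 20 / 3 * α * β + 8 * β ^ 2) / (2 * n + 1) +
        (20 / 3 * α * β + 52 / 3 * β ^ 2) / (2 * n + 1) ^ 2 + 8 * β ^ 2 / (2 * n + 1) ^ 3)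
      ((8 / 3 * α ^ 2 * β + 40 / 3 * α * β ^ 2 + 16 * β ^ 3) / (2 * n + 1) ^ 2 +
        (40 / 3 * α * β ^ 2 + 104 / 3 * β ^ 3) / (2 * n + 1) ^ 3 +
        16 * β ^ 3 / (2 * n + 1) ^ 4) := by
  have hv := two_mul_add_one_ne_zero n
  refine ((((HasCubicJet.linear (4 + 4 * n : ℂ) (2 * α)).add
    ((HasCubicJet.linear (2 / 3 * (5 + 4 * n) : ℂ) (4 / 3 * α)).mul
      (hasCubicJet_weight_quotient α β n)))).congr fun x => ?_).of_eq ?_ ?_ ?_ ?_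
  · simp only [weightCofactor]
    ring
  all_goals
    generalize (n : ℂ) = m at *
    generalize v_eq : 2 * m + 1 = v at *
    field_simp
    subst v_eq
    try ring

theorem hasCubicJet_prefactor_mul_weight (α β : ℂ) (n : ℕ) :
    HasCubicJet (fun x => prefactor (α * x) (-(β * x)) n * weight (α * x) (-(β * x)) n)
      ((14 / 3 + 2 / (2 * n + 1)) / ((3 * n + 1) * (3 * n + 2)))
      (((2 / 3 * α + 1 / 6 * β) / (n + 1) + (-20 / 3 * α + 29 / 3 * β) / (2 * n + 1) +
        (-4 * α + 5 * β) / (2 * n + 1) ^ 2) / ((3 * n + 1) * (3 * n + 2)))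
      (((8 / 3 * α ^ 2 - 2 * α * β - 2 / 3 * β ^ 2) / (n + 1) +
        (-2 / 3 * α ^ 2 + 1 / 12 * α * β + 1 / 12 * β ^ 2) / (n + 1) ^ 2 +
        (-16 / 3 * α ^ 2 + 4 * α * β + 4 / 3 * β ^ 2) / (2 * n + 1) +
        (40 / 3 * α ^ 2 - 15 * α * β + 59 / 3 * β ^ 2) / (2 * n + 1) ^ 2 +
        (8 * α ^ 2 - 13 * α * β + 11 * β ^ 2) / (2 * n + 1) ^ 3) / ((3 * n + 1) * (3 * n + 2)))
      (((-14 / 3 * α ^ 2 * β + 11 / 3 * α * β ^ 2 + β ^ 3) / (n + 1) +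
        (-8 / 3 * α ^ 3 + 3 * α ^ 2 * β - 1 / 3 * β ^ 3) / (n + 1) ^ 2 +
        (2 / 3 * α ^ 3 - 5 / 24 * α ^ 2 * β + 1 / 24 * β ^ 3) / (n + 1) ^ 3 +
        (28 / 3 * α ^ 2 * β - 22 / 3 * α * β ^ 2 - 2 * β ^ 3) / (2 * n + 1) +
        (32 / 3 * α ^ 3 - 64 / 3 * α ^ 2 * β + 22 / 3 * α * β ^ 2 + 10 / 3 * β ^ 3) /
          (2 * n + 1) ^ 2 +
        (-80 / 3 * α ^ 3 + 31 * α ^ 2 * β - 32 * α * β ^ 2 + 119 / 3 * β ^ 3) /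
          (2 * n + 1) ^ 3 +
        (-16 * α ^ 3 + 29 * α ^ 2 * β - 32 * α * β ^ 2 + 23 * β ^ 3) / (2 * n + 1) ^ 4) /
        ((3 * n + 1) * (3 * n + 2))) := by
  have hu := add_one_ne_zero n
  have hv := two_mul_add_one_ne_zero n
  have hw := three_mul_add_one_ne_zero n
  have hz := three_mul_add_two_ne_zero n
  refine (((hasCubicJet_prefactor α β n).mul ((HasCubicJet.linear (2 * (2 * n + 1) : ℂ) (2 * α)).add
    ((hasCubicJet_weightFactor α β n).mul (hasCubicJet_weightCofactor α β n)))).congr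
    fun x => ?_).of_eq ?_ ?_ ?_ ?_
  · simp only [weight]
    ring
  all_goals
    generalize (n : ℂ) = m at *
    generalize u_eq : m + 1 = u, v_eq : 2 * m + 1 = v, w_eq : 3 * m + 1 = w,
      z_eq : 3 * m + 2 = z at *
    field_simp
    subst u_eq v_eq w_eq z_eq
    try ring

theorem exists_hasCubicJet_prefactor_mul_weightDeriv (α β : ℂ) (n : ℕ) : ∃ d,
    HasCubicJet (fun x => prefactor (α * x) (-(β * x)) n * weightDeriv (α * x) (-(β * x)) n)
      ((1 / 6 / (n + 1) + 5 / (2 * n + 1) + 3 / (2 * n + 1) ^ 2) / ((3 * n + 1) * (3 * n + 2)))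
      (((-4 / 3 * α - 7 / 6 * β) / (n + 1) + (-1 / 6 * α - 1 / 12 * β) / (n + 1) ^ 2 +
        (8 / 3 * α + 7 / 3 * β) / (2 * n + 1) + (-2 * α + 80 / 3 * β) / (2 * n + 1) ^ 2 +
        (-6 * α + 16 * β) / (2 * n + 1) ^ 3) / ((3 * n + 1) * (3 * n + 2)))
      (((-4 * α ^ 2 + 35 / 6 * α * β + 9 / 2 * β ^ 2) / (n + 1) +
        (4 / 3 * α ^ 2 + 1 / 12 * α * β + 1 / 12 * β ^ 2) / (n + 1) ^ 2 +
        (-1 / 6 * α ^ 2 - 1 / 8 * α * β - 1 / 24 * β ^ 2) / (n + 1) ^ 3 +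
        (8 * α ^ 2 - 35 / 3 * α * β - 9 * β ^ 2) / (2 * n + 1) +
        (-40 / 3 * α ^ 2 + 34 / 3 * α * β + 26 / 3 * β ^ 2) / (2 * n + 1) ^ 2 +
        (4 * α ^ 2 - 62 / 3 * α * β + 90 * β ^ 2) / (2 * n + 1) ^ 3 +
        (12 * α ^ 2 - 38 * α * β + 54 * β ^ 2) / (2 * n + 1) ^ 4) /
        ((3 * n + 1) * (3 * n + 2))) d := by
  have hu := add_one_ne_zero n
  have hv := two_mul_add_one_ne_zero n
  have hw := three_mul_add_one_ne_zero n
  have hz := three_mul_add_two_ne_zero n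
  have hu2 : (2 * (n + 1) : ℂ) ≠ 0 := mul_ne_zero two_ne_zero hu
  have factorDeriv := (hasCubicJet_weightFactor α β n).mul
    ((HasCubicJet.const (1 / (2 * n + 1) : ℂ)).add
      (.linear_div_linear (fun _ => 1) (fun x => 2 + 2 * (α * x) + 2 * n) 1 0 (2 * α) hu2))
  have cofactorDeriv := ((HasCubicJet.linear_div_linear (fun x => 5 + 2 * (α * x) + 4 * n)
    (fun _ => 3 * (n + 1)) (5 + 4 * n) (2 * α) 0 (mul_ne_zero three_ne_zero hu)).mul
      (hasCubicJet_weight_quotient α β n)).mul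
    ((HasCubicJet.const (1 : ℂ)).add (.linear_div_linear (fun _ => 4 * (n + 1) : ℂ → ℂ)
      (fun x => 1 + 2 * -(β * x) + 2 * n) (4 * (n + 1)) 0 (-2 * β) hv))
  refine ⟨_, ((hasCubicJet_prefactor α β n).mul
    ((factorDeriv.mul (hasCubicJet_weightCofactor α β n)).add
      ((hasCubicJet_weightFactor α β n).mul cofactorDeriv))).of_eq ?_ ?_ ?_ rfl⟩
  all_goals
    clear factorDeriv cofactorDeriv
    generalize (n : ℂ) = m at *
    generalize u_eq : m + 1 = u, v_eq : 2 * m + 1 = v, w_eq : 3 * m + 1 = w,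
      z_eq : 3 * m + 2 = z at *
    field_simp
    subst u_eq v_eq w_eq z_eq
    try ring

end Jets

end Major

namespace Minor

section Jets

theorem hasLogCubicJet_ratio (α γ : ℂ) (i : ℕ) :
    HasLogCubicJet (fun x => ratio (α * x) (γ * x) i)
      (-((i + 1) ^ 2 / (3 * (3 * i + 2) * (3 * i + 1))))
      (-2 * (α + γ) * (1 / (2 * i + 1) ^ 1))
      (-(5 * α ^ 2 + 3 * γ ^ 2 - (α + γ) ^ 2) / 2 * (1 / (i + 1) ^ 2) +
        (4 * α ^ 2 - 4 * γ ^ 2) / 2 * (1 / (2 * i + 1) ^ 2))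
      ((7 * α ^ 3 + 7 * γ ^ 3 - (α + γ) ^ 3) / 3 * (1 / (i + 1) ^ 3) +
        (-8 * γ ^ 3 - 8 * α ^ 3) / 3 * (1 / (2 * i + 1) ^ 3)) := by
  have hu := add_one_ne_zero i
  have hv := two_mul_add_one_ne_zero i
  have hw := three_mul_add_one_ne_zero i
  have hz := three_mul_add_two_ne_zero i
  refine (((((HasLogCubicJet.const (-((i + 1) / (3 * (3 * i + 2) * (3 * i + 1)) : ℂ))).mul
    (.linear hu (2 * α))).mul
    (.linear_div_linear (fun x => 1 - α * x + i) (fun x => 1 + 2 * (α * x) + 2 * i)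
      (-α) (2 * α) hu hv)).mul
    (.linear_div_linear (fun x => 1 + 2 * (γ * x) + i) (fun x => 1 + γ * x + i)
      (2 * γ) γ hu hu)).mul
    (.linear_div_linear (fun x => 1 - 2 * (γ * x) + 2 * i) (fun x => 1 + α * x + γ * x + i)
      (-2 * γ) (α + γ) hv hu) |>.congr fun x => ?_).of_eq ?_ ?_ ?_ ?_
  · simp only [ratio]
    ring
  all_goals
    generalize (i + 1 : ℂ) = u, (2 * i + 1 : ℂ) = v, (3 * i + 1 : ℂ) = w,
      (3 * i + 2 : ℂ) = z at *
    field_simp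
    try ring

theorem hasLogCubicJet_product (α γ : ℂ) (n : ℕ) :
    HasLogCubicJet (fun x => product (α * x) (γ * x) n) (baseProduct n)
      (-2 * (α + γ) * oddHarmonicSum 1 n)
      (-(5 * α ^ 2 + 3 * γ ^ 2 - (α + γ) ^ 2) / 2 * harmonicSum 2 n +
        (4 * α ^ 2 - 4 * γ ^ 2) / 2 * oddHarmonicSum 2 n)
      ((7 * α ^ 3 + 7 * γ ^ 3 - (α + γ) ^ 3) / 3 * harmonicSum 3 n +
        (-8 * γ ^ 3 - 8 * α ^ 3) / 3 * oddHarmonicSum 3 n) :=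
  .prod_range_harmonic n (hasLogCubicJet_ratio α γ)

/-- The rational factor of `kernel`. -/
noncomputable def prefactor (t y : ℂ) (n : ℕ) : ℂ :=
  (1 + 2 * y + n) / (1 + t + y + n) * (1 / (2 * (3 * n + 1)))

theorem hasCubicJet_prefactor_mul_weight (α γ : ℂ) (n : ℕ) :
    HasCubicJet (fun x => prefactor (α * x) (γ * x) n * weight (α * x) (γ * x) n)
      ((-7 / 6 - 1 / 2 / (2 * n + 1)) / ((3 * n + 1) * (3 * n + 2)))
      (((1 / 3 * α - 1 / 2 * γ) / (n + 1) + (7 / 3 * α - 2 / 3 * γ) / (2 * n + 1) +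
        α / (2 * n + 1) ^ 2) / ((3 * n + 1) * (3 * n + 2)))
      (((2 / 3 * α ^ 2 - 1 / 3 * α * γ - γ ^ 2) / (n + 1) +
        (-1 / 3 * α ^ 2 - 1 / 6 * α * γ + 2 / 3 * γ ^ 2) / (n + 1) ^ 2 +
        (-4 / 3 * α ^ 2 + 2 / 3 * α * γ + 2 * γ ^ 2) / (2 * n + 1) +
        (-14 / 3 * α ^ 2 + 4 / 3 * α * γ) / (2 * n + 1) ^ 2 -
        2 * α ^ 2 / (2 * n + 1) ^ 3) / ((3 * n + 1) * (3 * n + 2)))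
      (((-8 / 3 * α ^ 2 * γ + 8 / 3 * γ ^ 3) / (n + 1) +
        (-2 / 3 * α ^ 3 - α ^ 2 * γ + α * γ ^ 2 + 4 / 3 * γ ^ 3) / (n + 1) ^ 2 +
        (1 / 3 * α ^ 3 + 1 / 2 * α ^ 2 * γ - 1 / 6 * α * γ ^ 2 - 5 / 6 * γ ^ 3) / (n + 1) ^ 3 +
        (16 / 3 * α ^ 2 * γ - 16 / 3 * γ ^ 3) / (2 * n + 1) +
        (8 / 3 * α ^ 3 - 4 / 3 * α ^ 2 * γ - 4 * α * γ ^ 2) / (2 * n + 1) ^ 2 +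
        (28 / 3 * α ^ 3 - 8 / 3 * α ^ 2 * γ) / (2 * n + 1) ^ 3 +
        4 * α ^ 3 / (2 * n + 1) ^ 4) / ((3 * n + 1) * (3 * n + 2))) := by
  have hu := add_one_ne_zero n
  have hv := two_mul_add_one_ne_zero n
  have hw := three_mul_add_one_ne_zero n
  have hz := three_mul_add_two_ne_zero n
  have hvz : (3 * (3 * n + 2) * (2 * n + 1) : ℂ) ≠ 0 :=
    mul_ne_zero (mul_ne_zero three_ne_zero hz) hv
  refine ((((HasCubicJet.linear_div_linear (fun x => 1 + 2 * (γ * x) + n)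
      (fun x => 1 + α * x + γ * x + n) (n + 1) (2 * γ) (α + γ) hu).mul
    (.const (1 / (2 * (3 * n + 1)) : ℂ))).mul
    ((((HasCubicJet.const (3 * (3 * n + 2) * (4 * n + 3) : ℂ)).sub
      ((HasCubicJet.linear (5 * n + 4 : ℂ) γ).mul (.linear (10 * n + 7 : ℂ) (2 * α)))).mul
      (.linear_div_linear (fun _ => 1) (fun x => 1 + γ * x + n) 1 0 γ hu)).mul
      (.linear_div_linear (fun _ => 1) (fun x => 3 * (3 * n + 2) * (1 + 2 * (α * x) + 2 * n)) 1 0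
        (3 * (3 * n + 2) * (2 * α)) hvz))).congr fun x => ?_).of_eq ?_ ?_ ?_ ?_
  · simp only [prefactor, weight]
    ring
  all_goals
    clear hvz
    generalize (n : ℂ) = m at *
    generalize u_eq : m + 1 = u, v_eq : 2 * m + 1 = v, w_eq : 3 * m + 1 = w,
      z_eq : 3 * m + 2 = z at *
    field_simp
    subst u_eq v_eq w_eq z_eq
    try ring

end Jets

end Minor

section HolomorphicFamilies

theorem Near.of_norm_le {t y : ℂ} (ht : ‖t‖ ≤ 1 / 100) (hy : ‖y‖ ≤ 1 / 100) : Near t y :=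
  ⟨ht, 0, by simpa using hy⟩

theorem eventually_norm_le {f : ℂ → ℂ} (hf : Differentiable ℂ f) (hf₀ : f 0 = 0) :
    ∀ᶠ x in 𝓝 (0 : ℂ), ‖f x‖ ≤ 1 / 100 := by
  have tendsto_norm := (hf.continuous.tendsto 0).norm
  rw [hf₀, norm_zero] at tendsto_norm
  exact (tendsto_norm.eventually_lt_const (by norm_num)).mono fun _ hx => hx.le

/-- Joint holomorphy in the two parameters, at every point of the domain `Near`. -/
def HolomorphicFamily (G : ℂ → ℂ → ℕ → ℂ) : Prop :=
  ∀ (n : ℕ) (p : ℂ × ℂ), Near p.1 p.2 → DifferentiableAt ℂ (fun p : ℂ × ℂ => G p.1 p.2 n) p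

namespace HolomorphicFamily

variable {G H : ℂ → ℂ → ℕ → ℂ}

theorem add (hG : HolomorphicFamily G) (hH : HolomorphicFamily H) :
    HolomorphicFamily fun t y n => G t y n + H t y n :=
  fun n p h => (hG n p h).add (hH n p h)

theorem mul (hG : HolomorphicFamily G) (hH : HolomorphicFamily H) :
    HolomorphicFamily fun t y n => G t y n * H t y n :=
  fun n p h => (hG n p h).mul (hH n p h)

theorem normallyConvergent (hG : HolomorphicFamily G)
    (hb : ∃ u : ℕ → ℝ, Summable u ∧ ∀ t y n, Near t y → ‖G t y n‖ ≤ u n) (f g : ℂ → ℂ)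
    (hf : Differentiable ℂ f := by fun_prop) (hg : Differentiable ℂ g := by fun_prop)
    (hf₀ : f 0 = 0 := by simp) (hg₀ : g 0 = 0 := by simp) :
    NormallyConvergent fun n x => G (f x) (g x) n := by
  obtain ⟨u, hu, norm_le⟩ := hb
  refine ⟨u, hu, ?_⟩
  filter_upwards [eventually_norm_le hf hf₀, eventually_norm_le hg hg₀] with x hfx hgx n
  have near := Near.of_norm_le hfx hgx
  exact ⟨DifferentiableAt.comp (g := fun p : ℂ × ℂ => G p.1 p.2 n) x (hG n (f x, g x) near)
    ((hf x).prodMk (hg x)), norm_le _ _ n near⟩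

end HolomorphicFamily

end HolomorphicFamilies

namespace Major

section Rows

theorem holomorphicFamily_ratio : HolomorphicFamily ratio := fun i p h => by
  unfold ratio
  fun_prop (disch := first | exact h.ne_zero i _ | fail)

theorem holomorphicFamily_product : HolomorphicFamily product := fun _ p h =>
  (HasFDerivAt.finsetProd fun i _ =>
    (holomorphicFamily_ratio i p h).hasFDerivAt).differentiableAt

theorem holomorphicFamily_prefactor : HolomorphicFamily prefactor := fun n p h => by
  unfold prefactor
  fun_prop (disch := first
    | exact h.ne_zero n _
    | exact mul_ne_zero (h.ne_zero n _) (three_mul_add_one_ne_zero n))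

theorem holomorphicFamily_weight : HolomorphicFamily weight := fun n p h => by
  unfold weight weightFactor weightCofactor
  fun_prop (disch := first | exact h.ne_zero n _ | fail)

theorem holomorphicFamily_weightDeriv : HolomorphicFamily weightDeriv := fun n p h => by
  unfold weightDeriv weightFactorDeriv weightCofactorDeriv weightFactor weightCofactor
  fun_prop (disch := first | exact h.ne_zero n _ | fail)

theorem holomorphicFamily_logDeriv : HolomorphicFamily logDeriv := fun n p h => by
  unfold logDeriv
  fun_prop (disch := first | exact h.ne_zero ‹ℕ› _ | fail)

/-- The summand of the major family divided by `y - t`. -/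
noncomputable def row (t y : ℂ) (n : ℕ) : ℂ := product t y n * (prefactor t y n * weight t y n)

/-- The `s`-derivative of the summand of the major family divided by `y - t`. -/
noncomputable def rowDeriv (t y : ℂ) (n : ℕ) : ℂ :=
  product t y n *
    (prefactor t y n * weight t y n * logDeriv t y n + prefactor t y n * weightDeriv t y n)

theorem polyBounded_rowPrefactor : PolyBounded prefactor := by
  have inv_sum : PolyBounded fun t y n => 1 / (1 + t + y + 2 * n) := (PolyBounded.const 1).div
  have inv_param : PolyBounded fun t y n => 1 / (1 + 2 * t + 2 * n) := (PolyBounded.const 1).div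
  have inv_index : PolyBounded fun t y n => 1 / (3 * n + 1) := (PolyBounded.const 1).div
  exact (inv_sum.mul (inv_param.mul inv_index)).congr fun t y n _ => by
    rw [prefactor, div_mul_div_comm 1, one_mul]

theorem normallyConvergent_row (α β : ℂ) :
    NormallyConvergent fun n x => row (α * x) (-(β * x)) n :=
  (holomorphicFamily_product.mul
    (holomorphicFamily_prefactor.mul holomorphicFamily_weight)).normallyConvergent
    (geomBounded_product.mul
      (polyBounded_rowPrefactor.mul polyBounded_weight)).exists_summable_bound
    (fun x => α * x) (fun x => -(β * x))

theorem normallyConvergent_rowDeriv (α β : ℂ) :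
    NormallyConvergent fun n x => rowDeriv (α * x) (-(β * x)) n :=
  (holomorphicFamily_product.mul (((holomorphicFamily_prefactor.mul holomorphicFamily_weight).mul
    holomorphicFamily_logDeriv).add
      (holomorphicFamily_prefactor.mul holomorphicFamily_weightDeriv))).normallyConvergent
    (geomBounded_product.mul (((polyBounded_rowPrefactor.mul polyBounded_weight).mul
      polyBounded_logDeriv).add
        (polyBounded_rowPrefactor.mul polyBounded_weightDeriv))).exists_summable_bound
    (fun x => α * x) (fun x => -(β * x))

end Rows

end Major

namespace Minor

section Rows

theorem holomorphicFamily_ratio : HolomorphicFamily ratio := fun i p h => by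
  unfold ratio
  fun_prop (disch := first | exact h.ne_zero i _ | fail)

theorem holomorphicFamily_product : HolomorphicFamily product := fun _ p h =>
  (HasFDerivAt.finsetProd fun i _ =>
    (holomorphicFamily_ratio i p h).hasFDerivAt).differentiableAt

theorem holomorphicFamily_summand : HolomorphicFamily summand := fun n p h => by
  have := holomorphicFamily_product n p h
  unfold summand kernel weight
  fun_prop (disch := first
    | exact h.ne_zero n _
    | exact mul_ne_zero (mul_ne_zero three_ne_zero (three_mul_add_two_ne_zero n)) (h.ne_zero n _)
    | fail)

theorem normallyConvergent_summand (α γ : ℂ) :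
    NormallyConvergent fun n x => summand (α * x) (γ * x) n :=
  holomorphicFamily_summand.normallyConvergent geomBounded_summand.exists_summable_bound
    (fun x => α * x) (fun x => γ * x)

theorem summand_eq (t y : ℂ) (n : ℕ) :
    summand t y n = product t y n * (prefactor t y n * weight t y n) := by
  rw [summand, kernel, prefactor]
  ring

end Rows

end Minor

section ZetaSums

variable {k : ℕ}

theorem hasSum_one_div_pow (hk : 1 < k) :
    HasSum (fun n : ℕ => 1 / (n : ℂ) ^ k) (riemannZeta k) := by
  rw [zeta_nat_eq_tsum_of_gt_one hk]
  refine (Summable.of_norm ?_).hasSum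
  simpa using Real.summable_one_div_nat_pow.2 hk

theorem hasSum_one_div_succ_pow (hk : 1 < k) :
    HasSum (fun n : ℕ => 1 / (n + 1 : ℂ) ^ k) (riemannZeta k) := by
  simpa [show k ≠ 0 by lia] using (hasSum_nat_add_iff' 1).2 (hasSum_one_div_pow hk)

theorem hasSum_one_div_odd_pow (hk : 1 < k) :
    HasSum (fun n : ℕ => 1 / (2 * n + 1 : ℂ) ^ k) ((1 - 1 / 2 ^ k) * riemannZeta k) := by
  have all := hasSum_one_div_pow hk
  have even : HasSum (fun n : ℕ => 1 / ((2 * n : ℕ) : ℂ) ^ k) (1 / 2 ^ k * riemannZeta k) :=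
    (all.mul_left (1 / 2 ^ k)).congr_fun fun n => by
      rw [Nat.cast_mul, mul_pow, one_div_mul_one_div, Nat.cast_ofNat]
  have odd : Summable fun n : ℕ => 1 / ((2 * n + 1 : ℕ) : ℂ) ^ k :=
    all.summable.comp_injective (i := fun n => 2 * n + 1) fun a b hab => by simpa using hab
  have split := all.unique (HasSum.even_add_odd (f := fun n : ℕ => 1 / (n : ℂ) ^ k) even odd.hasSum)
  have value : ∑' n : ℕ, 1 / ((2 * n + 1 : ℕ) : ℂ) ^ k = (1 - 1 / 2 ^ k) * riemannZeta k := by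
    linear_combination -split
  rw [← value]
  simpa only [Nat.cast_add, Nat.cast_mul, Nat.cast_ofNat, Nat.cast_one] using odd.hasSum

theorem hasSum_odd_sub_succ_pow (p q : ℂ) (hk : 1 < k) :
    HasSum (fun n : ℕ => p * (1 / (2 * n + 1) ^ k) - q * (1 / (n + 1) ^ k))
      ((p * (1 - 1 / 2 ^ k) - q) * riemannZeta k) := by
  rw [sub_mul, mul_assoc]
  exact ((hasSum_one_div_odd_pow hk).mul_left p).sub ((hasSum_one_div_succ_pow hk).mul_left q)

end ZetaSums

section PolynomialDecay

/-- Decay of a family over the domain `Near` like the `k`-th power of `1 / (j + 1)`, uniformly in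
the two parameters. -/
def DecaysToOrder (G : ℂ → ℂ → ℕ → ℂ) (k : ℕ) : Prop :=
  ∃ K : ℝ, 0 ≤ K ∧ ∀ t y j, Near t y → ‖G t y j‖ ≤ K * (1 / (j + 1)) ^ k

namespace DecaysToOrder

variable {G H : ℂ → ℂ → ℕ → ℂ} {k l : ℕ}

/-- As in `Near.ne_zero`, the default argument disposes of affine forms. -/
theorem one_div
    (hG : ∀ (t y : ℂ) (j : ℕ), -(1 / 100) ≤ t.re → t.re ≤ 1 / 100 → -(1 / 100) ≤ y.re →
      (0 : ℝ) ≤ j → (j + 1 : ℝ) / 2 ≤ (G t y j).re := by intros; simp; linarith) :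
    DecaysToOrder (fun t y j => 1 / G t y j) 1 := by
  refine ⟨2, zero_le_two, fun t y j h => ?_⟩
  have re_ge := hG t y j (abs_le.1 h.abs_re_le).1 (abs_le.1 h.abs_re_le).2 h.neg_le_re
    j.cast_nonneg
  calc ‖1 / G t y j‖ = 1 / ‖G t y j‖ := by rw [norm_div, norm_one]
    _ ≤ 1 / ((j + 1) / 2) := by gcongr; exact re_ge.trans (Complex.re_le_norm _)
    _ = 2 * (1 / (j + 1)) ^ 1 := by rw [pow_one, one_div_div, mul_one_div]

theorem mul (hG : DecaysToOrder G k) (hH : DecaysToOrder H l) :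
    DecaysToOrder (fun t y j => G t y j * H t y j) (k + l) := by
  obtain ⟨K, hK, hG⟩ := hG
  obtain ⟨L, hL, hH⟩ := hH
  refine ⟨K * L, mul_nonneg hK hL, fun t y j h => ?_⟩
  rw [norm_mul, pow_add, mul_mul_mul_comm]
  exact mul_le_mul (hG t y j h) (hH t y j h) (norm_nonneg _) (by positivity)

theorem add (hG : DecaysToOrder G k) (hH : DecaysToOrder H k) :
    DecaysToOrder (fun t y j => G t y j + H t y j) k := by
  obtain ⟨K, hK, hG⟩ := hG
  obtain ⟨L, hL, hH⟩ := hH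
  refine ⟨K + L, add_nonneg hK hL, fun t y j h => ?_⟩
  rw [add_mul]
  exact norm_add_le_of_le (hG t y j h) (hH t y j h)

theorem const_mul (hG : DecaysToOrder G k) (c : ℂ) :
    DecaysToOrder (fun t y j => c * G t y j) k := by
  obtain ⟨K, hK, hG⟩ := hG
  refine ⟨‖c‖ * K, by positivity, fun t y j h => ?_⟩
  rw [norm_mul, mul_assoc]
  gcongr
  exact hG t y j h

theorem sub (hG : DecaysToOrder G k) (hH : DecaysToOrder H k) :
    DecaysToOrder (fun t y j => G t y j - H t y j) k := by
  simpa only [neg_one_mul, ← sub_eq_add_neg] using hG.add (hH.const_mul (-1))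

theorem exists_summable_bound (hG : DecaysToOrder G k) (hk : 1 < k) :
    ∃ u : ℕ → ℝ, Summable u ∧ ∀ t y j, Near t y → ‖G t y j‖ ≤ u j := by
  obtain ⟨K, -, hG⟩ := hG
  refine ⟨fun j => K * (1 / (j + 1)) ^ k, Summable.mul_left K ?_, hG⟩
  simpa using (summable_nat_add_iff 1).2 (Real.summable_one_div_nat_pow.2 hk)

theorem summable {t y : ℂ} (hG : DecaysToOrder G k) (hk : 1 < k) (h : Near t y) :
    Summable (G t y) := by
  obtain ⟨u, hu, norm_le⟩ := hG.exists_summable_bound hk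
  exact Summable.of_norm_bounded hu fun j => norm_le t y j h

end DecaysToOrder

end PolynomialDecay

section JetsOfReciprocals

namespace HasCubicJet

variable {q : ℂ}

theorem one_div_linear_mul (hq : q ≠ 0) (r s : ℂ) :
    HasCubicJet (fun x => 1 / (q + r * x) * (1 / (q + s * x))) (1 / q ^ 2)
      (-(r + s) * (1 / q ^ 3)) ((r ^ 2 + r * s + s ^ 2) * (1 / q ^ 4))
      (-(r ^ 3 + r ^ 2 * s + r * s ^ 2 + s ^ 3) * (1 / q ^ 5)) := by
  refine ((one_div_linear hq r).mul (one_div_linear hq s)).of_eq ?_ ?_ ?_ ?_ <;>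
    · field_simp
      try ring

theorem one_div_linear_mul_add (hq : q ≠ 0) (r s : ℂ) :
    HasCubicJet (fun x => 1 / (q + r * x) * (1 / (q + s * x)) *
      (1 / (q + r * x) + 1 / (q + s * x))) (2 * (1 / q ^ 3)) (-3 * (r + s) * (1 / q ^ 4))
      (4 * (r ^ 2 + r * s + s ^ 2) * (1 / q ^ 5))
      (-5 * (r ^ 3 + r ^ 2 * s + r * s ^ 2 + s ^ 3) * (1 / q ^ 6)) := by
  refine ((one_div_linear_mul hq r s).mul
    ((one_div_linear hq r).add (one_div_linear hq s))).of_eq ?_ ?_ ?_ ?_ <;>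
    · field_simp
      try ring

end HasCubicJet

end JetsOfReciprocals

namespace Major

section GapSlopes

/-- The divided difference of `gap t` between `t + j` and `y + j`. -/
noncomputable def gapSlope (t y : ℂ) (j : ℕ) : ℂ :=
  4 * (1 / (1 + 2 * y + 2 * j) * (1 / (1 + 2 * t + 2 * j))) -
    1 / (1 + t + y + j) * (1 / (1 + 2 * t + j))

/-- Twice the divided difference of `gapSq t` between `t + j` and `y + j`. -/
noncomputable def gapSqSlope (t y : ℂ) (j : ℕ) : ℂ :=
  8 * (1 / (1 + 2 * y + 2 * j) * (1 / (1 + 2 * t + 2 * j)) *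
      (1 / (1 + 2 * y + 2 * j) + 1 / (1 + 2 * t + 2 * j))) -
    1 / (1 + t + y + j) * (1 / (1 + 2 * t + j)) * (1 / (1 + t + y + j) + 1 / (1 + 2 * t + j))

theorem decaysToOrder_gapSlope : DecaysToOrder gapSlope 2 :=
  ((DecaysToOrder.mul .one_div .one_div).const_mul 4).sub
    (DecaysToOrder.mul .one_div .one_div)

theorem decaysToOrder_gapSqSlope : DecaysToOrder gapSqSlope 3 :=
  (((DecaysToOrder.mul .one_div .one_div).mul
    (DecaysToOrder.add .one_div .one_div)).const_mul 8).sub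
    ((DecaysToOrder.mul .one_div .one_div).mul
      (DecaysToOrder.add .one_div .one_div))

theorem holomorphicFamily_gapSlope : HolomorphicFamily gapSlope := fun j p h => by
  unfold gapSlope
  fun_prop (disch := exact h.ne_zero j _)

theorem holomorphicFamily_gapSqSlope : HolomorphicFamily gapSqSlope := fun j p h => by
  unfold gapSqSlope
  fun_prop (disch := exact h.ne_zero j _)

variable {t y : ℂ}

theorem gap_sub_gap (h : Near t y) (j : ℕ) :
    gap t (y + j) - gap t (t + j) = (t - y) * gapSlope t y j := by
  have a_ne := h.ne_zero j (1 + 2 * y + 2 * j)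
  have b_ne := h.ne_zero j (1 + 2 * t + 2 * j)
  have c_ne := h.ne_zero j (1 + t + y + j)
  have d_ne := h.ne_zero j (1 + 2 * t + j)
  rw [gap, gap, gapSlope, show 1 + 2 * (y + j) = 1 + 2 * y + 2 * (j : ℂ) by ring,
    show 1 + 2 * (t + j) = 1 + 2 * t + 2 * (j : ℂ) by ring,
    show 1 + t + (y + j) = 1 + t + y + (j : ℂ) by ring,
    show 1 + t + (t + j) = 1 + 2 * t + (j : ℂ) by ring]
  generalize a_eq : 1 + 2 * y + 2 * (j : ℂ) = a, b_eq : 1 + 2 * t + 2 * (j : ℂ) = b,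
    c_eq : 1 + t + y + (j : ℂ) = c, d_eq : 1 + 2 * t + (j : ℂ) = d at *
  field_simp
  subst a_eq b_eq c_eq d_eq
  ring

theorem gapSq_sub_gapSq (h : Near t y) (j : ℕ) :
    gapSq t (y + j) - gapSq t (t + j) = (t - y) / 2 * gapSqSlope t y j := by
  have a_ne := h.ne_zero j (1 + 2 * y + 2 * j)
  have b_ne := h.ne_zero j (1 + 2 * t + 2 * j)
  have c_ne := h.ne_zero j (1 + t + y + j)
  have d_ne := h.ne_zero j (1 + 2 * t + j)
  rw [gapSq, gapSq, gapSqSlope, show 1 + 2 * (y + j) = 1 + 2 * y + 2 * (j : ℂ) by ring,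
    show 1 + 2 * (t + j) = 1 + 2 * t + 2 * (j : ℂ) by ring,
    show 1 + t + (y + j) = 1 + t + y + (j : ℂ) by ring,
    show 1 + t + (t + j) = 1 + 2 * t + (j : ℂ) by ring]
  generalize a_eq : 1 + 2 * y + 2 * (j : ℂ) = a, b_eq : 1 + 2 * t + 2 * (j : ℂ) = b,
    c_eq : 1 + t + y + (j : ℂ) = c, d_eq : 1 + 2 * t + (j : ℂ) = d at *
  field_simp
  subst a_eq b_eq c_eq d_eq
  ring

theorem sum_eq_mul_tsum_gapSlope (ht : ‖t‖ ≤ 1 / 100) (hy : ‖y‖ ≤ 1 / 100) :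
    sum t y = (y - t) * ∑' j, gapSlope t y j := by
  have near := Near.of_norm_le ht hy
  have slopes := ((decaysToOrder_gapSlope.summable one_lt_two near).hasSum.mul_left
    (t - y)).tendsto_sum_nat
  simp only [← gap_sub_gap near] at slopes
  linear_combination tendsto_nhds_unique slopes (tendsto_sum_gap_sub ht hy)

theorem sumDeriv_add_sq_eq_mul_tsum_gapSqSlope (ht : ‖t‖ ≤ 1 / 100) (hy : ‖y‖ ≤ 1 / 100) :
    sumDeriv t y + sum t y ^ 2 / 2 = (y - t) / 2 * ∑' j, gapSqSlope t y j := by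
  have near := Near.of_norm_le ht hy
  have slopes := ((decaysToOrder_gapSqSlope.summable (by norm_num) near).hasSum.mul_left
    ((t - y) / 2)).tendsto_sum_nat
  simp only [← gapSq_sub_gapSq near] at slopes
  linear_combination tendsto_nhds_unique slopes (tendsto_sum_gapSq_sub ht hy)

theorem sum_eq_mul_tsum_row (t y : ℂ) : sum t y = (y - t) * ∑' n, row t y n := by
  rw [sum, ← tsum_mul_left]
  refine tsum_congr fun n => ?_
  rw [row, summand, kernel, prefactor]
  ring

theorem sumDeriv_eq_mul_tsum_rowDeriv (t y : ℂ) :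
    sumDeriv t y = (y - t) * ∑' n, rowDeriv t y n := by
  rw [sumDeriv, ← tsum_mul_left]
  refine tsum_congr fun n => ?_
  rw [rowDeriv, summandDeriv, kernel, prefactor]
  ring

theorem tsum_row_eq (ht : ‖t‖ ≤ 1 / 100) (hy : ‖y‖ ≤ 1 / 100) (hty : y - t ≠ 0) :
    ∑' n, row t y n = ∑' j, gapSlope t y j :=
  mul_left_cancel₀ hty ((sum_eq_mul_tsum_row t y).symm.trans (sum_eq_mul_tsum_gapSlope ht hy))

theorem tsum_rowDeriv_eq (ht : ‖t‖ ≤ 1 / 100) (hy : ‖y‖ ≤ 1 / 100) (hty : y - t ≠ 0) :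
    ∑' n, rowDeriv t y n =
      1 / 2 * ∑' j, gapSqSlope t y j + (t - y) / 2 * (∑' j, gapSlope t y j) ^ 2 := by
  have squares := sumDeriv_add_sq_eq_mul_tsum_gapSqSlope ht hy
  rw [sumDeriv_eq_mul_tsum_rowDeriv, sum_eq_mul_tsum_gapSlope ht hy] at squares
  refine mul_left_cancel₀ hty ?_
  linear_combination squares

end GapSlopes

section ZetaEvaluations

variable {α β : ℂ}

theorem hasCubicJet_gapSlope (α β : ℂ) (j : ℕ) :
    HasCubicJet (fun x => gapSlope (α * x) (-(β * x)) j)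
      (4 * (1 / (2 * j + 1) ^ 2) - 1 * (1 / (j + 1) ^ 2))
      (8 * (β - α) * (1 / (2 * j + 1) ^ 3) - (β - 3 * α) * (1 / (j + 1) ^ 3))
      (16 * (β ^ 2 - α * β + α ^ 2) * (1 / (2 * j + 1) ^ 4) -
        (7 * α ^ 2 - 4 * α * β + β ^ 2) * (1 / (j + 1) ^ 4))
      (32 * (β ^ 3 - α * β ^ 2 + α ^ 2 * β - α ^ 3) * (1 / (2 * j + 1) ^ 5) -
        (β ^ 3 - 5 * α * β ^ 2 + 11 * α ^ 2 * β - 15 * α ^ 3) * (1 / (j + 1) ^ 5)) := by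
  have odd := HasCubicJet.one_div_linear_mul (two_mul_add_one_ne_zero j) (-2 * β) (2 * α)
  have all := HasCubicJet.one_div_linear_mul (add_one_ne_zero j) (α - β) (2 * α)
  refine (((odd.const_mul 4).sub all).congr fun x => ?_).of_eq ?_ ?_ ?_ ?_
  · rw [gapSlope]
    ring
  all_goals ring

theorem hasCubicJet_gapSqSlope (α β : ℂ) (j : ℕ) :
    HasCubicJet (fun x => gapSqSlope (α * x) (-(β * x)) j)
      (16 * (1 / (2 * j + 1) ^ 3) - 2 * (1 / (j + 1) ^ 3))
      (48 * (β - α) * (1 / (2 * j + 1) ^ 4) - 3 * (β - 3 * α) * (1 / (j + 1) ^ 4))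
      (128 * (β ^ 2 - α * β + α ^ 2) * (1 / (2 * j + 1) ^ 5) -
        4 * (7 * α ^ 2 - 4 * α * β + β ^ 2) * (1 / (j + 1) ^ 5))
      (320 * (β ^ 3 - α * β ^ 2 + α ^ 2 * β - α ^ 3) * (1 / (2 * j + 1) ^ 6) -
        5 * (β ^ 3 - 5 * α * β ^ 2 + 11 * α ^ 2 * β - 15 * α ^ 3) * (1 / (j + 1) ^ 6)) := by
  have odd := HasCubicJet.one_div_linear_mul_add (two_mul_add_one_ne_zero j) (-2 * β) (2 * α)
  have all := HasCubicJet.one_div_linear_mul_add (add_one_ne_zero j) (α - β) (2 * α)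
  refine (((odd.const_mul 8).sub all).congr fun x => ?_).of_eq ?_ ?_ ?_ ?_
  · rw [gapSqSlope]
    ring
  all_goals ring

theorem hasCubicJet_tsum_gapSlope (α β : ℂ) :
    HasCubicJet (fun x => ∑' j, gapSlope (α * x) (-(β * x)) j) (2 * riemannZeta 2)
      ((6 * β - 4 * α) * riemannZeta 3)
      ((14 * β ^ 2 - 11 * α * β + 8 * α ^ 2) * riemannZeta 4)
      ((30 * β ^ 3 - 26 * α * β ^ 2 + 20 * α ^ 2 * β - 16 * α ^ 3) * riemannZeta 5) := by
  have normal : NormallyConvergent fun j x => gapSlope (α * x) (-(β * x)) j :=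
    holomorphicFamily_gapSlope.normallyConvergent
      (decaysToOrder_gapSlope.exists_summable_bound one_lt_two) (α * ·) (fun x => -(β * x))
  refine (normal.hasCubicJet_tsum (hasCubicJet_gapSlope α β)
    (hasSum_odd_sub_succ_pow _ _ (by norm_num)) (hasSum_odd_sub_succ_pow _ _ (by norm_num))
    (hasSum_odd_sub_succ_pow _ _ (by norm_num))
    (hasSum_odd_sub_succ_pow _ _ (by norm_num))).of_eq ?_ ?_ ?_ ?_ <;>
  · push_cast
    ring

theorem hasCubicJet_tsum_gapSqSlope (α β : ℂ) :
    HasCubicJet (fun x => ∑' j, gapSqSlope (α * x) (-(β * x)) j) (12 * riemannZeta 3)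
      ((42 * β - 36 * α) * riemannZeta 4)
      ((120 * β ^ 2 - 108 * α * β + 96 * α ^ 2) * riemannZeta 5)
      ((310 * β ^ 3 - 290 * α * β ^ 2 + 260 * α ^ 2 * β - 240 * α ^ 3) * riemannZeta 6) := by
  have normal : NormallyConvergent fun j x => gapSqSlope (α * x) (-(β * x)) j :=
    holomorphicFamily_gapSqSlope.normallyConvergent
      (decaysToOrder_gapSqSlope.exists_summable_bound (by norm_num)) (α * ·) (fun x => -(β * x))
  refine (normal.hasCubicJet_tsum (hasCubicJet_gapSqSlope α β)
    (hasSum_odd_sub_succ_pow _ _ (by norm_num)) (hasSum_odd_sub_succ_pow _ _ (by norm_num))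
    (hasSum_odd_sub_succ_pow _ _ (by norm_num))
    (hasSum_odd_sub_succ_pow _ _ (by norm_num))).of_eq ?_ ?_ ?_ ?_ <;>
  · push_cast
    ring

theorem eventually_admissible (hαβ : α + β ≠ 0) : ∀ᶠ x in 𝓝[≠] (0 : ℂ),
    ‖α * x‖ ≤ 1 / 100 ∧ ‖-(β * x)‖ ≤ 1 / 100 ∧ -(β * x) - α * x ≠ 0 := by
  filter_upwards [self_mem_nhdsWithin,
    nhdsWithin_le_nhds (eventually_norm_le (f := (α * ·)) (by fun_prop) (by simp)),
    nhdsWithin_le_nhds (eventually_norm_le (f := fun x => -(β * x)) (by fun_prop) (by simp))]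
    with x hx ht hy
  refine ⟨ht, hy, ?_⟩
  rw [show -(β * x) - α * x = -((α + β) * x) by ring]
  exact neg_ne_zero.2 (mul_ne_zero hαβ hx)

theorem hasSum_cubicCoeff_row (hαβ : α + β ≠ 0) {a b c d : ℕ → ℂ}
    (h : ∀ n, HasCubicJet (fun x => row (α * x) (-(β * x)) n) (a n) (b n) (c n) (d n)) :
    HasSum d ((30 * β ^ 3 - 26 * α * β ^ 2 + 20 * α ^ 2 * β - 16 * α ^ 3) * riemannZeta 5) := by
  refine ((normallyConvergent_row α β).hasSum_coeff h
    ((hasCubicJet_tsum_gapSlope α β).congr' ?_)).2.2.2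
  filter_upwards [eventually_admissible hαβ] with x ⟨ht, hy, hty⟩
  exact (tsum_row_eq ht hy hty).symm

theorem hasSum_quadraticCoeff_rowDeriv (hαβ : α + β ≠ 0) {a b c d : ℕ → ℂ}
    (h : ∀ n, HasCubicJet (fun x => rowDeriv (α * x) (-(β * x)) n) (a n) (b n) (c n) (d n)) :
    HasSum c ((60 * β ^ 2 - 54 * α * β + 48 * α ^ 2) * riemannZeta 5 +
      2 * (α + β) * (6 * β - 4 * α) * (riemannZeta 2 * riemannZeta 3)) := by
  have slope := hasCubicJet_tsum_gapSlope α β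
  have jet := ((hasCubicJet_tsum_gapSqSlope α β).const_mul (1 / 2)).add
    ((HasCubicJet.linear 0 ((α + β) / 2)).mul (slope.mul slope))
  convert ((normallyConvergent_rowDeriv α β).hasSum_coeff h (jet.congr' ?_)).2.2.1 using 1
  · ring
  · filter_upwards [eventually_admissible hαβ] with x ⟨ht, hy, hty⟩
    rw [tsum_rowDeriv_eq ht hy hty]
    ring

end ZetaEvaluations

end Major

namespace Minor

section ZetaEvaluations

theorem gap_add_natCast (t y : ℂ) (j : ℕ) :
    gap t (y + j) = 1 / 4 * (1 / (1 + y + j) * (1 / (1 + t + y + j))) := by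
  rw [gap, one_div_mul_one_div, one_div_mul_one_div, ← add_assoc, ← add_assoc]

theorem decaysToOrder_gap : DecaysToOrder (fun t y j => gap t (y + j)) 2 := by
  simp only [gap_add_natCast]
  exact (DecaysToOrder.mul .one_div .one_div).const_mul (1 / 4)

theorem holomorphicFamily_gap : HolomorphicFamily fun t y j => gap t (y + j) := fun j p h => by
  simp only [gap_add_natCast]
  fun_prop (disch := exact h.ne_zero j _)

theorem hasCubicJet_gap (α γ : ℂ) (j : ℕ) :
    HasCubicJet (fun x => gap (α * x) (γ * x + j)) (1 / 4 * (1 / (j + 1) ^ 2))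
      (-(α + 2 * γ) / 4 * (1 / (j + 1) ^ 3))
      ((α ^ 2 + 3 * α * γ + 3 * γ ^ 2) / 4 * (1 / (j + 1) ^ 4))
      (-(α ^ 3 + 4 * α ^ 2 * γ + 6 * α * γ ^ 2 + 4 * γ ^ 3) / 4 * (1 / (j + 1) ^ 5)) := by
  have pair := HasCubicJet.one_div_linear_mul (add_one_ne_zero j) γ (α + γ)
  refine ((pair.const_mul (1 / 4)).congr fun x => ?_).of_eq ?_ ?_ ?_ ?_
  · rw [gap_add_natCast]
    ring
  all_goals ring

theorem hasCubicJet_tsum_gap (α γ : ℂ) :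
    HasCubicJet (fun x => ∑' j : ℕ, gap (α * x) (γ * x + j)) (1 / 4 * riemannZeta 2)
      (-(α + 2 * γ) / 4 * riemannZeta 3)
      ((α ^ 2 + 3 * α * γ + 3 * γ ^ 2) / 4 * riemannZeta 4)
      (-(α ^ 3 + 4 * α ^ 2 * γ + 6 * α * γ ^ 2 + 4 * γ ^ 3) / 4 * riemannZeta 5) := by
  have normal : NormallyConvergent fun j x => gap (α * x) (γ * x + j) :=
    holomorphicFamily_gap.normallyConvergent
      (decaysToOrder_gap.exists_summable_bound one_lt_two) (α * ·) (γ * ·)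
  exact normal.hasCubicJet_tsum (hasCubicJet_gap α γ)
    ((hasSum_one_div_succ_pow (by norm_num)).mul_left _)
    ((hasSum_one_div_succ_pow (by norm_num)).mul_left _)
    ((hasSum_one_div_succ_pow (by norm_num)).mul_left _)
    ((hasSum_one_div_succ_pow (by norm_num)).mul_left _)

theorem sum_sub_sum_eq {t y y' : ℂ} (ht : ‖t‖ ≤ 1 / 100) (hy : ‖y‖ ≤ 1 / 100)
    (hy' : ‖y'‖ ≤ 1 / 100) :
    sum t y' - sum t y = ∑' j : ℕ, gap t (y' + j) - ∑' j : ℕ, gap t (y + j) := by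
  have summable {z : ℂ} (hz : ‖z‖ ≤ 1 / 100) : Summable fun j : ℕ => gap t (z + j) :=
    decaysToOrder_gap.summable one_lt_two (Near.of_norm_le ht hz)
  exact tendsto_nhds_unique (tendsto_sum_gap_sub ht hy hy')
    ((summable hy').hasSum.sub (summable hy).hasSum).tendsto_sum_nat

theorem hasSum_cubicCoeff_summand_sub (α γ γ' : ℂ) {a b c d : ℕ → ℂ}
    (h : ∀ n, HasCubicJet (fun x => summand (α * x) (γ' * x) n - summand (α * x) (γ * x) n)
      (a n) (b n) (c n) (d n)) :
    HasSum d (((4 * α ^ 2 * (γ - γ') + 6 * α * (γ ^ 2 - γ' ^ 2) + 4 * (γ ^ 3 - γ' ^ 3)) / 4) *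
      riemannZeta 5) := by
  have jet := (hasCubicJet_tsum_gap α γ').sub (hasCubicJet_tsum_gap α γ)
  have normal := (normallyConvergent_summand α γ').sub (normallyConvergent_summand α γ)
  have near_zero (δ : ℂ) : ∀ᶠ x in 𝓝[≠] (0 : ℂ), ‖δ * x‖ ≤ 1 / 100 :=
    nhdsWithin_le_nhds (eventually_norm_le (f := (δ * ·)) (by fun_prop) (by simp))
  convert (normal.hasSum_coeff h (jet.congr' ?_)).2.2.2 using 1
  · ring
  · filter_upwards [near_zero α, near_zero γ, near_zero γ'] with x ht hy hy'
    rw [← sum_sub_sum_eq ht hy hy', sum, sum, Summable.tsum_sub]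
    · exact geomBounded_summand.summable (Near.of_norm_le ht hy')
    · exact geomBounded_summand.summable (Near.of_norm_le ht hy)

end ZetaEvaluations

end Minor

section SunSummand

/-- The summand of Sun's series, with index shifted to start at zero. -/
noncomputable def sunTerm (n : ℕ) : ℂ :=
  baseProduct (n + 1) * (17 - 136 * (n + 1) + 408 * (n + 1) ^ 2 - 640 * (n + 1) ^ 3 +
    560 * (n + 1) ^ 4) / ((n + 1) ^ 5 * (2 * n + 1) ^ 4)

theorem sunTerm_eq (n : ℕ) : sunTerm n = baseProduct n / ((3 * n + 1) * (3 * n + 2)) *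
    (-17 / 3 / (n + 1) ^ 3 - 48 / (2 * n + 1) ^ 3 - 16 / (2 * n + 1) ^ 4) := by
  have u_ne := add_one_ne_zero n
  have v_ne := two_mul_add_one_ne_zero n
  have w_ne := three_mul_add_one_ne_zero n
  have z_ne := three_mul_add_two_ne_zero n
  rw [sunTerm, baseProduct, Finset.prod_range_succ, ← baseProduct]
  generalize u_eq : (n : ℂ) + 1 = u, v_eq : 2 * (n : ℂ) + 1 = v, w_eq : 3 * (n : ℂ) + 1 = w,
    z_eq : 3 * (n : ℂ) + 2 = z at *
  field_simp
  subst u_eq v_eq w_eq z_eq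
  ring

theorem one_div_add_one_mul_two_mul_add_one (n : ℕ) :
    1 / (((n : ℂ) + 1) * (2 * n + 1)) = 2 / (2 * n + 1) - 1 / (n + 1) := by
  rw [div_sub_div _ _ (two_mul_add_one_ne_zero n) (add_one_ne_zero n), mul_comm]
  congr 1
  ring

theorem hasSum_sunTerm :
    HasSum sunTerm (180 * riemannZeta 5 - 112 * (riemannZeta 2 * riemannZeta 3)) := by
  have row {α β : ℂ} (hαβ : α + β ≠ 0) := Major.hasSum_cubicCoeff_row hαβ fun n =>
    HasCubicJet.mul (Major.hasLogCubicJet_product α β n)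
      (Major.hasCubicJet_prefactor_mul_weight α β n)
  choose _ logDeriv_jet using Major.exists_hasCubicJet_logDeriv
  choose _ weightDeriv_jet using Major.exists_hasCubicJet_prefactor_mul_weightDeriv
  have rowDeriv {α β : ℂ} (hαβ : α + β ≠ 0) := Major.hasSum_quadraticCoeff_rowDeriv hαβ fun n =>
    HasCubicJet.mul (Major.hasLogCubicJet_product α β n)
      (((Major.hasCubicJet_prefactor_mul_weight α β n).mul (logDeriv_jet α β n)).add
        (weightDeriv_jet α β n))
  have minor_jet (γ : ℂ) (n : ℕ) := HasCubicJet.mul (Minor.hasLogCubicJet_product 2 γ n)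
    (Minor.hasCubicJet_prefactor_mul_weight 2 γ n)
  have minor := Minor.hasSum_cubicCoeff_summand_sub 2 (-1) 3 fun n =>
    ((minor_jet 3 n).sub (minor_jet (-1) n)).congr fun x => by simp only [Minor.summand_eq]
  -- The weights are the solution of the linear system that cancels every harmonic sum and leaves
  -- a multiple of the partial fractions of `sunTerm`.
  have combination := (((((((row (α := 0) (β := 1) (by simp)).mul_left 28).add
    ((row (α := 1) (β := 0) (by simp)).mul_left (67 / 12))).add
    ((row (α := 1) (β := 1) (by norm_num)).mul_left (11 / 6))).sub
    ((rowDeriv (α := 0) (β := 1) (by simp)).mul_left (26 / 3))).sub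
    ((rowDeriv (α := 1) (β := 1) (by norm_num)).mul_left (2 / 3))).add
    ((rowDeriv (α := 1) (β := 0) (by simp)).mul_left (1 / 3))).add (minor.mul_left (2 / 3))
  clear row rowDeriv minor minor_jet logDeriv_jet weightDeriv_jet
  have total : HasSum sunTerm _ := combination.congr_fun fun n => by
    have partial_fractions := one_div_add_one_mul_two_mul_add_one n
    rw [sunTerm_eq]
    generalize (n : ℂ) + 1 = u, 2 * (n : ℂ) + 1 = v, 3 * (n : ℂ) + 1 = w,
      3 * (n : ℂ) + 2 = z at *
    linear_combination baseProduct n / (w * z) * (20 / 3 * oddHarmonicSum 1 n + 11 / 18 / u -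
      2 / 3 / v - 43 / 9) * partial_fractions
  convert total using 1
  ring

theorem baseProduct_eq_risingFactorial (n : ℕ) :
    baseProduct n = (((-1 / 27 : ℝ) ^ n * risingFactorial 1 n ^ 2 /
      (risingFactorial (1 / 3) n * risingFactorial (2 / 3) n) : ℝ) : ℂ) := by
  induction n with
  | zero => simp [baseProduct, risingFactorial]
  | succ n ih =>
    rw [baseProduct, Finset.prod_range_succ, ← baseProduct, ih]
    simp only [risingFactorial, Finset.prod_range_succ]
    push_cast
    have third : (1 / 3 + n : ℂ) = (3 * n + 1) / 3 := by ring
    have two_thirds : (2 / 3 + n : ℂ) = (3 * n + 2) / 3 := by ring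
    rw [third, two_thirds]
    generalize (∏ i ∈ Finset.range n, ((1 : ℂ) / 3 + i)) = P,
      (∏ i ∈ Finset.range n, ((2 : ℂ) / 3 + i)) = Q
    simp only [div_eq_mul_inv, mul_inv, inv_inv]
    ring

theorem sunTerm_eq_ofReal (n : ℕ) :
    sunTerm n = (((-1 / 27 : ℝ) ^ (n + 1) * (risingFactorial 1 (n + 1)) ^ 2 /
        (risingFactorial (1 / 3) (n + 1) * risingFactorial (2 / 3) (n + 1)) *
        (17 - 136 * ((n : ℝ) + 1) + 408 * ((n : ℝ) + 1) ^ 2 - 640 * ((n : ℝ) + 1) ^ 3 +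
          560 * ((n : ℝ) + 1) ^ 4) /
        (((n : ℝ) + 1) ^ 5 * (2 * ((n : ℝ) + 1) - 1) ^ 4) : ℝ) : ℂ) := by
  have odd_eq : 2 * ((n : ℂ) + 1) - 1 = 2 * n + 1 := by ring
  rw [mul_div_assoc, Complex.ofReal_mul, ← baseProduct_eq_risingFactorial, sunTerm,
    mul_div_assoc]
  push_cast
  rw [odd_eq]

end SunSummand

end SunSeries

/-- `∑_{n≥1} (−1/27)^n (1)ₙ²/((1/3)ₙ(2/3)ₙ) (17−136n+408n²−640n³+560n⁴)/(n^5(2n−1)^4)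
    = 180ζ(5) − (56/3)π²ζ(3)`. -/
theorem sun_zeta5_zeta3_series :
    ∑' n : ℕ, ((((-1 / 27 : ℝ) ^ (n + 1) * (risingFactorial 1 (n + 1)) ^ 2 /
        (risingFactorial (1 / 3) (n + 1) * risingFactorial (2 / 3) (n + 1)) *
        (17 - 136 * ((n : ℝ) + 1) + 408 * ((n : ℝ) + 1) ^ 2 - 640 * ((n : ℝ) + 1) ^ 3 +
          560 * ((n : ℝ) + 1) ^ 4) /
        (((n : ℝ) + 1) ^ 5 * (2 * ((n : ℝ) + 1) - 1) ^ 4) : ℝ)) : ℂ)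
      = 180 * riemannZeta 5 - 56 / 3 * (Real.pi : ℂ) ^ 2 * riemannZeta 3 := by
  rw [← tsum_congr SunSeries.sunTerm_eq_ofReal, SunSeries.hasSum_sunTerm.tsum_eq, riemannZeta_two]
  ring
end

section
/- The series identity ∑_{n≥1} (−1/4)^n · (1)_n / ((1/2)_n) · ( H_n/n³ − 3/(10 n⁴) ) = −π⁴/300 holds. -/
/-- The generalized harmonic number `H_n^{(s)} = ∑_{k=1}^n 1/k^s`. -/
noncomputable def genHarmonic (s n : ℕ) : ℝ :=
  ∑ k ∈ Finset.range n, 1 / ((k : ℝ) + 1) ^ s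

/-!
Markov's acceleration of `∑ₖ 1/(x+k)³` rests on functions `Fₙ`, `Gₙ` with `F₀(x) = 1/x³` and
`Fₙ(x) - Fₙ₊₁(x) = Gₙ(x) - Gₙ(x+1)`. Differentiating this relation in `x` preserves it, and
summing it over `x, x+1, x+2, …` and over `n` gives `∑ₙ Gₙ'(x) = -3 ∑ₖ 1/(x+k)⁴`. Harmonic numbers
enter `Gₙ'(1)` as the logarithmic derivative of the Pochhammer symbol, and `ζ(4) = π⁴/90`.
-/

open Filter Topology Finset

section WZPair

/-- A Wilf–Zeilberger pair, written as a relation between decreasing differences: `F` may be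
summed over `k` and `G` over `n` by telescoping. -/
def IsWZPair {A : Type*} [AddGroup A] (F G : ℕ → ℕ → A) : Prop :=
  ∀ n k, F n k - F (n + 1) k = G n k - G n (k + 1)

variable {A : Type*} [AddCommGroup A] [TopologicalSpace A] [IsTopologicalAddGroup A] [T2Space A]
  {F G : ℕ → ℕ → A}

theorem IsWZPair.tsum_sub_tsum_succ (h : IsWZPair F G) {n : ℕ} (hF : Summable (F n))
    (hF' : Summable (F (n + 1))) (hG : Tendsto (G n) atTop (𝓝 0)) :
    ∑' k, F n k - ∑' k, F (n + 1) k = G n 0 := by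
  have hlim : Tendsto (fun K => ∑ k ∈ range K, (F n k - F (n + 1) k)) atTop (𝓝 (G n 0)) := by
    simp only [h n, sum_range_sub']
    simpa using hG.const_sub (G n 0)
  exact tendsto_nhds_unique (hF.hasSum.sub hF'.hasSum).tendsto_sum_nat hlim

theorem IsWZPair.hasSum (h : IsWZPair F G) (hF : ∀ n, Summable (F n))
    (hF0 : Tendsto (fun n => ∑' k, F n k) atTop (𝓝 0)) (hG : ∀ n, Tendsto (G n) atTop (𝓝 0))
    (hG0 : Summable fun n => G n 0) : HasSum (fun n => G n 0) (∑' k, F 0 k) := by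
  rw [hG0.hasSum_iff_tendsto_nat]
  simp only [← h.tsum_sub_tsum_succ (hF _) (hF _) (hG _), sum_range_sub' fun n => ∑' k, F n k]
  simpa using hF0.const_sub (∑' k, F 0 k)

end WZPair

section RisingFactorial

/-- The logarithmic derivative `∑_{j<n} 1/(x+j)` of the rising factorial `(x)ₙ`; at `x = 1` it is
the harmonic number `Hₙ`. -/
noncomputable def shiftedHarmonic (x : ℝ) (n : ℕ) : ℝ :=
  ∑ j ∈ range n, 1 / (x + j)

theorem shiftedHarmonic_one (n : ℕ) : shiftedHarmonic 1 n = genHarmonic 1 n :=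
  sum_congr rfl fun _ _ => by rw [pow_one, add_comm]

theorem shiftedHarmonic_nonneg {x : ℝ} (hx : 0 < x) (n : ℕ) : 0 ≤ shiftedHarmonic x n :=
  sum_nonneg fun _ _ => by positivity

theorem shiftedHarmonic_le {x : ℝ} (hx : 0 < x) (n : ℕ) : shiftedHarmonic x n ≤ n / x := by
  have hterm : ∀ j ∈ range n, 1 / (x + j) ≤ 1 / x := fun j _ =>
    one_div_le_one_div_of_le hx (le_add_of_nonneg_right j.cast_nonneg)
  calc shiftedHarmonic x n ≤ #(range n) • (1 / x) := sum_le_card_nsmul _ _ _ hterm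
    _ = n / x := by rw [card_range, nsmul_eq_mul, mul_one_div]

theorem shiftedHarmonic_succ (x : ℝ) (n : ℕ) :
    shiftedHarmonic x (n + 1) = shiftedHarmonic x n + 1 / (x + n) :=
  sum_range_succ _ _

theorem risingFactorial_zero (x : ℝ) : risingFactorial x 0 = 1 :=
  prod_range_zero _

theorem risingFactorial_succ (x : ℝ) (n : ℕ) :
    risingFactorial x (n + 1) = risingFactorial x n * (x + n) :=
  prod_range_succ _ _

theorem risingFactorial_succ_left (x : ℝ) (n : ℕ) :
    risingFactorial x (n + 1) = x * risingFactorial (x + 1) n := by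
  simp only [risingFactorial, prod_range_succ', Nat.cast_add, Nat.cast_one, Nat.cast_zero, add_zero]
  rw [mul_comm]
  exact congrArg (x * ·) (prod_congr rfl fun _ _ => by ring)

theorem risingFactorial_pos {x : ℝ} (hx : 0 < x) (n : ℕ) : 0 < risingFactorial x n :=
  prod_pos fun _ _ => by positivity

theorem mul_risingFactorial_one_le {x : ℝ} (hx : 0 ≤ x) (n : ℕ) :
    x * risingFactorial 1 n ≤ risingFactorial x (n + 1) := by
  rw [risingFactorial_succ_left]
  exact mul_le_mul_of_nonneg_left
    (prod_le_prod (fun _ _ => by positivity) fun _ _ => by linarith) hx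

theorem risingFactorial_one_le_two_pow_mul (n : ℕ) :
    risingFactorial 1 n ≤ 2 ^ n * risingFactorial (1 / 2) n := by
  calc risingFactorial 1 n ≤ ∏ i ∈ range n, (2 * (1 / 2 + (i : ℝ))) :=
        prod_le_prod (fun _ _ => by positivity) fun i _ => by
          linarith [(i.cast_nonneg : (0 : ℝ) ≤ i)]
    _ = 2 ^ n * risingFactorial (1 / 2) n := by
        rw [prod_mul_distrib, prod_const, card_range, risingFactorial]

theorem hasDerivAt_risingFactorial {x : ℝ} {n : ℕ} (hx : risingFactorial x n ≠ 0) :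
    HasDerivAt (fun y => risingFactorial y n) (risingFactorial x n * shiftedHarmonic x n) x := by
  induction n with
  | zero => simpa [risingFactorial, shiftedHarmonic] using hasDerivAt_const x (1 : ℝ)
  | succ n ih =>
    rw [risingFactorial_succ] at hx
    have hxn : x + n ≠ 0 := right_ne_zero_of_mul hx
    simp only [risingFactorial_succ]
    refine ((ih (left_ne_zero_of_mul hx)).mul ((hasDerivAt_id' x).add_const (n : ℝ))).congr_deriv ?_
    rw [shiftedHarmonic_succ]
    field_simp

theorem hasDerivAt_div_risingFactorial_pow {p : ℝ → ℝ} {p' x : ℝ} {n : ℕ} (r : ℕ)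
    (hp : HasDerivAt p p' x) (hx : risingFactorial x n ≠ 0) :
    HasDerivAt (fun y => p y / risingFactorial y n ^ r)
      ((p' - r * p x * shiftedHarmonic x n) / risingFactorial x n ^ r) x := by
  refine (hp.div ((hasDerivAt_risingFactorial hx).pow r) (pow_ne_zero r hx)).congr_deriv ?_
  rcases r with _ | r
  · simp
  · simp only [Nat.add_sub_cancel, Pi.pow_apply]
    field_simp
    ring

end RisingFactorial

section MarkovPair

/-- The coefficient `(-1)ⁿ n!⁶ / (2 (2n)!)` of Markov's pair, written with Pochhammer symbols. -/
noncomputable def markovCoeff (n : ℕ) : ℝ :=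
  (-1 / 4) ^ n * risingFactorial 1 n ^ 5 / (2 * risingFactorial (1 / 2) n)

/-- The first member of Markov's Wilf–Zeilberger pair for `∑ₖ 1/(x+k)³`, as a function of a real
variable whose integer translates play the role of the second index. -/
noncomputable def markovF (n : ℕ) (x : ℝ) : ℝ :=
  markovCoeff n * ((2 * x + n) / risingFactorial x (n + 1) ^ 4)

/-- The second member of Markov's Wilf–Zeilberger pair for `∑ₖ 1/(x+k)³`. -/
noncomputable def markovG (n : ℕ) (x : ℝ) : ℝ :=
  markovCoeff n * ((2 * x ^ 2 + (6 * n + 2) * x + (5 * n ^ 2 + 4 * n + 1)) / (2 * (2 * n + 1)) /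
    risingFactorial x (n + 1) ^ 4)

theorem markovCoeff_zero : markovCoeff 0 = 1 / 2 := by
  simp [markovCoeff, risingFactorial_zero]

theorem markovCoeff_succ (n : ℕ) :
    markovCoeff (n + 1) = -markovCoeff n * (n + 1) ^ 5 / (2 * (2 * n + 1)) := by
  have hhalf := risingFactorial_pos one_half_pos n
  simp only [markovCoeff, risingFactorial_succ]
  field_simp
  ring

theorem markovF_sub_markovF_succ (n : ℕ) {x : ℝ} (hx : 0 < x) :
    markovF n x - markovF (n + 1) x = markovG n x - markovG n (x + 1) := by
  have hP := risingFactorial_pos (add_pos hx one_pos) n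
  simp only [markovF, markovG, markovCoeff_succ, risingFactorial_succ_left x,
    risingFactorial_succ (x + 1)]
  generalize risingFactorial (x + 1) n = P at *
  push_cast
  field_simp
  ring

theorem hasDerivAt_markovF (n : ℕ) {x : ℝ} (hx : 0 < x) :
    HasDerivAt (markovF n) (markovCoeff n *
      ((2 - 4 * (2 * x + n) * shiftedHarmonic x (n + 1)) /
        risingFactorial x (n + 1) ^ 4)) x := by
  have hp : HasDerivAt (fun y : ℝ => 2 * y + n) 2 x := by
    simpa using ((hasDerivAt_id' x).const_mul 2).add_const (n : ℝ)
  exact ((hasDerivAt_div_risingFactorial_pow 4 hp (risingFactorial_pos hx _).ne').const_mul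
    (markovCoeff n)).congr_deriv (by rw [Nat.cast_ofNat])

theorem hasDerivAt_markovG (n : ℕ) {x : ℝ} (hx : 0 < x) :
    HasDerivAt (markovG n) (markovCoeff n *
      (((4 * x + (6 * n + 2)) / (2 * (2 * n + 1)) -
        4 * ((2 * x ^ 2 + (6 * n + 2) * x + (5 * n ^ 2 + 4 * n + 1)) / (2 * (2 * n + 1))) *
          shiftedHarmonic x (n + 1)) / risingFactorial x (n + 1) ^ 4)) x := by
  have hp : HasDerivAt (fun y : ℝ =>
      (2 * y ^ 2 + (6 * n + 2) * y + (5 * n ^ 2 + 4 * n + 1)) / (2 * (2 * n + 1)))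
      ((4 * x + (6 * n + 2)) / (2 * (2 * n + 1))) x := by
    have hq := (((hasDerivAt_pow 2 x).const_mul 2).add
      ((hasDerivAt_id' x).const_mul (6 * (n : ℝ) + 2))).add_const (5 * (n : ℝ) ^ 2 + 4 * n + 1)
    refine (hq.div_const (2 * (2 * (n : ℝ) + 1))).congr_deriv ?_
    push_cast
    ring
  exact ((hasDerivAt_div_risingFactorial_pow 4 hp (risingFactorial_pos hx _).ne').const_mul
    (markovCoeff n)).congr_deriv (by rw [Nat.cast_ofNat])

theorem isWZPair_deriv_markov {x : ℝ} (hx : 0 < x) :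
    IsWZPair (fun n k => deriv (markovF n) (x + k)) fun n k => deriv (markovG n) (x + k) := by
  intro n k
  have hxk : 0 < x + k := by positivity
  have hrel : markovF n - markovF (n + 1) =ᶠ[𝓝 (x + k)]
      markovG n - fun y => markovG n (y + 1) := by
    filter_upwards [lt_mem_nhds hxk] with y hy using markovF_sub_markovF_succ n hy
  have hG' := (hasDerivAt_markovG n (add_pos hxk one_pos)).comp_add_const (x + k) 1
  have hderiv := hrel.deriv_eq
  rw [deriv_sub (hasDerivAt_markovF n hxk).differentiableAt
      (hasDerivAt_markovF (n + 1) hxk).differentiableAt,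
    deriv_sub (hasDerivAt_markovG n hxk).differentiableAt hG'.differentiableAt,
    deriv_comp_add_const] at hderiv
  simpa [add_assoc] using hderiv

theorem deriv_markovF_zero {x : ℝ} (hx : 0 < x) : deriv (markovF 0) x = -3 * (1 / x ^ 4) := by
  rw [(hasDerivAt_markovF 0 hx).deriv, markovCoeff_zero]
  simp only [risingFactorial, shiftedHarmonic, prod_range_one, sum_range_one, zero_add,
    Nat.cast_zero, add_zero]
  field_simp
  norm_num

end MarkovPair

section Estimates

theorem abs_markovCoeff_div_le (n : ℕ) {x : ℝ} (hx : 0 < x) :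
    |markovCoeff n| / risingFactorial x (n + 1) ^ 4 ≤ (1 / 2) ^ n / (2 * x ^ 4) := by
  have hone := risingFactorial_pos one_pos n
  have hhalf := risingFactorial_pos one_half_pos n
  have habs : |markovCoeff n| =
      (1 / 4) ^ n * risingFactorial 1 n ^ 5 / (2 * risingFactorial (1 / 2) n) := by
    rw [markovCoeff, abs_div, abs_mul, abs_pow, abs_of_pos (pow_pos hone 5),
      abs_of_pos (mul_pos two_pos hhalf)]
    norm_num
  calc |markovCoeff n| / risingFactorial x (n + 1) ^ 4
      ≤ |markovCoeff n| / (x * risingFactorial 1 n) ^ 4 := by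
        gcongr
        exact mul_risingFactorial_one_le hx.le n
    _ = (1 / 4) ^ n * risingFactorial 1 n / risingFactorial (1 / 2) n / (2 * x ^ 4) := by
        rw [habs]
        field_simp
    _ ≤ (1 / 4) ^ n * (2 ^ n * risingFactorial (1 / 2) n) / risingFactorial (1 / 2) n /
          (2 * x ^ 4) := by
        gcongr
        exact risingFactorial_one_le_two_pow_mul n
    _ = (1 / 2) ^ n / (2 * x ^ 4) := by
        rw [← mul_assoc, mul_div_cancel_right₀ _ hhalf.ne', ← mul_pow]
        norm_num

theorem abs_markovCoeff_mul_le (n : ℕ) {x p p' : ℝ} (hx : 0 < x) (hp : 0 ≤ p) (hp' : 0 ≤ p') :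
    |markovCoeff n * ((p' - 4 * p * shiftedHarmonic x (n + 1)) /
      risingFactorial x (n + 1) ^ 4)| ≤
      (1 / 2) ^ n / (2 * x ^ 4) * (p' + 4 * p * ((n + 1) / x)) := by
  have hP := risingFactorial_pos hx (n + 1)
  have hH := shiftedHarmonic_nonneg hx (n + 1)
  have hH' : shiftedHarmonic x (n + 1) ≤ (n + 1) / x := by
    exact_mod_cast shiftedHarmonic_le hx (n + 1)
  have hnum : |p' - 4 * p * shiftedHarmonic x (n + 1)| ≤ p' + 4 * p * ((n + 1) / x) := by
    have hpH : 4 * p * shiftedHarmonic x (n + 1) ≤ 4 * p * ((n + 1) / x) := by gcongr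
    have hpH0 : 0 ≤ 4 * p * shiftedHarmonic x (n + 1) := by positivity
    exact abs_le.mpr ⟨by linarith, by linarith⟩
  rw [mul_div_left_comm, mul_comm, abs_mul, abs_div, abs_of_pos (pow_pos hP 4)]
  exact mul_le_mul (abs_markovCoeff_div_le n hx) hnum (abs_nonneg _) (by positivity)

theorem abs_deriv_markovF_le (n : ℕ) {x : ℝ} (hx : 0 < x) :
    |deriv (markovF n) x| ≤ 5 * ((n + 1) ^ 3 * (1 / 2) ^ n) * (1 / x ^ 4 + 1 / x ^ 5) := by
  have hpoly : 2 + 4 * (2 * x + n) * ((n + 1) / x) ≤ 10 * (n + 1) ^ 3 * (1 + 1 / x) := by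
    field_simp
    -- Expanded in `n` and `x`, the difference has only nonnegative coefficients.
    rw [← sub_nonneg]
    ring_nf
    positivity
  rw [(hasDerivAt_markovF n hx).deriv]
  calc _ ≤ (1 / 2) ^ n / (2 * x ^ 4) * (2 + 4 * (2 * x + n) * ((n + 1) / x)) :=
        abs_markovCoeff_mul_le n hx (by positivity) two_pos.le
    _ ≤ (1 / 2) ^ n / (2 * x ^ 4) * (10 * (n + 1) ^ 3 * (1 + 1 / x)) := by gcongr
    _ = 5 * ((n + 1) ^ 3 * (1 / 2) ^ n) * (1 / x ^ 4 + 1 / x ^ 5) := by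
        field_simp
        ring

theorem abs_deriv_markovG_le (n : ℕ) {x : ℝ} (hx : 0 < x) :
    |deriv (markovG n) x| ≤ 13 * ((n + 1) ^ 3 * (1 / 2) ^ n) * ((1 + 1 / x) ^ 2 / x ^ 3) := by
  have hden : (1 : ℝ) ≤ 2 * (2 * n + 1) := by linarith [(n.cast_nonneg : (0 : ℝ) ≤ n)]
  set q : ℝ := 2 * x ^ 2 + (6 * n + 2) * x + (5 * n ^ 2 + 4 * n + 1) with hq_def
  have hq : q ≤ 5 * ((n + 1) * (1 + x)) ^ 2 := by
    rw [← sub_nonneg, hq_def]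
    ring_nf
    positivity
  have hq' : 4 * x + (6 * n + 2) ≤ 6 * ((n + 1) ^ 3 * ((1 + x) ^ 2 / x)) := by
    field_simp
    rw [← sub_nonneg]
    ring_nf
    positivity
  rw [(hasDerivAt_markovG n hx).deriv]
  calc _ ≤ (1 / 2) ^ n / (2 * x ^ 4) * ((4 * x + (6 * n + 2)) / (2 * (2 * n + 1)) +
          4 * (q / (2 * (2 * n + 1))) * ((n + 1) / x)) :=
        abs_markovCoeff_mul_le n hx (by positivity) (by positivity)
    _ ≤ (1 / 2) ^ n / (2 * x ^ 4) * (6 * ((n + 1) ^ 3 * ((1 + x) ^ 2 / x)) +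
          4 * (5 * ((n + 1) * (1 + x)) ^ 2) * ((n + 1) / x)) := by
        gcongr
        · exact (div_le_self (by positivity) hden).trans hq'
        · exact (div_le_self (by positivity) hden).trans hq
    _ = 13 * ((n + 1) ^ 3 * (1 / 2) ^ n) * ((1 + 1 / x) ^ 2 / x ^ 3) := by
        field_simp
        ring

theorem summable_succ_cube_mul_half_pow :
    Summable fun n : ℕ => ((n : ℝ) + 1) ^ 3 * (1 / 2 : ℝ) ^ n := by
  have h := summable_pow_mul_geometric_of_norm_lt_one (R := ℝ) 3 (r := 1 / 2) (by norm_num)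
  refine (((summable_nat_add_iff 1).mpr h).mul_left 2).congr fun n => ?_
  push_cast
  ring

theorem summable_one_div_add_natCast_pow (x : ℝ) {p : ℕ} (hp : 1 < p) :
    Summable fun k : ℕ => 1 / (x + k) ^ p := by
  refine Summable.of_norm
    (((Real.summable_one_div_nat_add_rpow x p).mpr (by exact_mod_cast hp)).congr fun k => ?_)
  rw [Real.rpow_natCast, norm_div, norm_one, norm_pow, Real.norm_eq_abs, add_comm]

theorem summable_one_div_pow_four_add_one_div_pow_five (x : ℝ) :
    Summable fun k : ℕ => 1 / (x + k) ^ 4 + 1 / (x + k) ^ 5 :=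
  (summable_one_div_add_natCast_pow x (by norm_num)).add
    (summable_one_div_add_natCast_pow x (by norm_num))

theorem summable_deriv_markovF (n : ℕ) {x : ℝ} (hx : 0 < x) :
    Summable fun k : ℕ => deriv (markovF n) (x + k) :=
  ((summable_one_div_pow_four_add_one_div_pow_five x).mul_left _).of_norm_bounded
    fun k => abs_deriv_markovF_le n (add_pos_of_pos_of_nonneg hx k.cast_nonneg)

theorem tendsto_tsum_deriv_markovF {x : ℝ} (hx : 0 < x) :
    Tendsto (fun n => ∑' k : ℕ, deriv (markovF n) (x + k)) atTop (𝓝 0) := by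
  refine squeeze_zero_norm (fun n => tsum_of_norm_bounded
    ((summable_one_div_pow_four_add_one_div_pow_five x).hasSum.mul_left _)
    fun k => abs_deriv_markovF_le n (add_pos_of_pos_of_nonneg hx k.cast_nonneg)) ?_
  simpa only [mul_zero, zero_mul] using
    (summable_succ_cube_mul_half_pow.tendsto_atTop_zero.const_mul 5).mul_const _

theorem tendsto_deriv_markovG (n : ℕ) {x : ℝ} (hx : 0 < x) :
    Tendsto (fun k : ℕ => deriv (markovG n) (x + k)) atTop (𝓝 0) := by
  have hbound : Tendsto (fun y : ℝ => 13 * (((n : ℝ) + 1) ^ 3 * (1 / 2) ^ n) *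
      ((1 + 1 / y) ^ 2 / y ^ 3)) atTop (𝓝 0) := by
    simpa only [mul_zero, one_div] using
      (((tendsto_inv_atTop_zero.const_add (1 : ℝ)).pow 2).div_atTop
        (tendsto_pow_atTop three_ne_zero)).const_mul (13 * (((n : ℝ) + 1) ^ 3 * (1 / 2) ^ n))
  exact squeeze_zero_norm
    (fun k => abs_deriv_markovG_le n (add_pos_of_pos_of_nonneg hx k.cast_nonneg))
    (hbound.comp (tendsto_atTop_add_const_left _ x tendsto_natCast_atTop_atTop))

theorem summable_deriv_markovG {x : ℝ} (hx : 0 < x) : Summable fun n => deriv (markovG n) x :=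
  ((summable_succ_cube_mul_half_pow.mul_left 13).mul_right _).of_norm_bounded
    fun n => abs_deriv_markovG_le n hx

end Estimates

theorem hasSum_deriv_markovG {x : ℝ} (hx : 0 < x) :
    HasSum (fun n => deriv (markovG n) x) (-3 * ∑' k : ℕ, 1 / (x + k) ^ 4) := by
  have hF0 (k : ℕ) : deriv (markovF 0) (x + k) = -3 * (1 / (x + k) ^ 4) :=
    deriv_markovF_zero (add_pos_of_pos_of_nonneg hx k.cast_nonneg)
  have h := (isWZPair_deriv_markov hx).hasSum (fun n => summable_deriv_markovF n hx)
    (tendsto_tsum_deriv_markovF hx) (fun n => tendsto_deriv_markovG n hx)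
    (by simpa only [Nat.cast_zero, add_zero] using summable_deriv_markovG hx)
  simpa only [Nat.cast_zero, add_zero, hF0, tsum_mul_left] using h

/-- The `n`-th term of the accelerated series for `-3 ∑ₖ 1/(x+k)⁴`, indexed from `n = 0`. -/
noncomputable def acceleratedTerm (x : ℝ) (n : ℕ) : ℝ :=
  (-1 / 4) ^ (n + 1) * risingFactorial 1 n ^ 5 /
    (risingFactorial (1 / 2) (n + 1) * risingFactorial x (n + 1) ^ 4) *
    (2 * (2 * x ^ 2 + (6 * n + 2) * x + (5 * n ^ 2 + 4 * n + 1)) * shiftedHarmonic x (n + 1) -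
      (2 * x + 3 * n + 1))

theorem deriv_markovG (n : ℕ) {x : ℝ} (hx : 0 < x) :
    deriv (markovG n) x = acceleratedTerm x n := by
  have hhalf := risingFactorial_pos one_half_pos n
  have hP := risingFactorial_pos hx (n + 1)
  rw [(hasDerivAt_markovG n hx).deriv, acceleratedTerm, markovCoeff, risingFactorial_succ (1 / 2)]
  field_simp
  ring

theorem acceleratedTerm_one (n : ℕ) :
    acceleratedTerm 1 n =
      10 * ((-1 / 4 : ℝ) ^ (n + 1) * risingFactorial 1 (n + 1) / risingFactorial (1 / 2) (n + 1) *
        (genHarmonic 1 (n + 1) / ((n : ℝ) + 1) ^ 3 - 3 / (10 * ((n : ℝ) + 1) ^ 4))) := by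
  have hone := risingFactorial_pos one_pos n
  have hhalf := risingFactorial_pos one_half_pos (n + 1)
  rw [acceleratedTerm, shiftedHarmonic_one, risingFactorial_succ 1]
  field_simp
  ring

theorem tsum_one_div_one_add_natCast_pow_four :
    ∑' k : ℕ, 1 / (1 + (k : ℝ)) ^ 4 = Real.pi ^ 4 / 90 := by
  have h := (hasSum_nat_add_iff' 1).mpr hasSum_zeta_four
  simpa [add_comm] using h.tsum_eq

theorem harmonic_pi4_series_general {x : ℝ} (hx : 0 < x) :
    HasSum (acceleratedTerm x) (-3 * ∑' k : ℕ, 1 / (x + k) ^ 4) := by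
  simpa only [deriv_markovG _ hx] using hasSum_deriv_markovG hx

/-- `∑_{n≥1} (−1/4)^n (1)ₙ/(1/2)ₙ (Hₙ/n³ − 3/(10n⁴)) = −π⁴/300`. -/
theorem harmonic_pi4_series :
    ∑' n : ℕ, ((-1 / 4 : ℝ) ^ (n + 1) * risingFactorial 1 (n + 1) /
        risingFactorial (1 / 2) (n + 1) *
        (genHarmonic 1 (n + 1) / ((n : ℝ) + 1) ^ 3 - 3 / (10 * ((n : ℝ) + 1) ^ 4)))
      = -Real.pi ^ 4 / 300 := by
  have h := (harmonic_pi4_series_general one_pos).tsum_eq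
  simp only [acceleratedTerm_one, tsum_mul_left, tsum_one_div_one_add_natCast_pow_four] at h
  linarith
end
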